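/- Let n ≥ 1, let ν > −1/2 be real, and let ã ∈ (0,∞)ⁿ have pairwise distinct entries. Set Z := ∫_{M_{2n}(ℝ)} (det g gᵀ)^ν · exp(−Tr(g gᵀ)/2) dg (a finite positive number). Then, for every invariant test function φ, (1/Z) · ∫_{M_{2n}(ℝ)} φ(g · D(ã) · gᵀ) · (det g gᵀ)^ν · exp(−Tr(g gᵀ)/2) dg = ∫_{(0,∞)ⁿ} φ(D(a)) · p(a) da, where p(a) = (1/n!) · (∏_{l=0}^{n−1} 1/Γ(2ν+2l+1)) · (Δ_n(a²)/Δ_n(ã²)) · (∏_j a_j^{2ν} / ∏_j ã_j^{2ν+1}) · det[exp(−a_j/ã_k)]_{j,k=1,…,n}. -/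

import Mathlib

open MeasureTheory Matrix
open scoped BigOperators

noncomputable section

instance matrixMeasurableSpace {l : Type*} [Fintype l] : MeasurableSpace (Matrix l l ℝ) :=
  inferInstanceAs (MeasurableSpace (l → l → ℝ))

/-- The `2n × 2n` real antisymmetric matrix `D(a) = diag(a₁ J, …, aₙ J)`,
`J = [[0,1],[-1,0]]`. -/
def Dmat {n : ℕ} (a : Fin n → ℝ) : Matrix (Fin (2 * n)) (Fin (2 * n)) ℝ :=
  Matrix.of fun i j =>
    if i.val / 2 = j.val / 2 then
      a ⟨i.val / 2, by have := i.isLt; omega⟩ *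
        (if i.val % 2 = 0 ∧ j.val % 2 = 1 then 1
          else if i.val % 2 = 1 ∧ j.val % 2 = 0 then -1 else 0)
    else 0

/-- Vandermonde product `Δ_m(x) = ∏_{j<k} (x_k - x_j)`. -/
def vdm {m : ℕ} {R : Type*} [CommRing R] (x : Fin m → R) : R :=
  ∏ p ∈ Finset.univ.filter (fun p : Fin m × Fin m => p.1 < p.2), (x p.2 - x p.1)

/-- A bounded measurable `O(m)`-invariant test function on antisymmetric matrices. -/
def IsInvTest (m : ℕ) (φ : Matrix (Fin m) (Fin m) ℝ → ℝ) : Prop :=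
  Measurable φ ∧ (∃ C, ∀ X, |φ X| ≤ C) ∧
    ∀ X : Matrix (Fin m) (Fin m) ℝ, Xᵀ = -X →
      ∀ k ∈ Matrix.orthogonalGroup (Fin m) ℝ, φ (k * X * kᵀ) = φ X

/-- The (unnormalized) induced real Ginibre density `(det ggᵀ)^ν e^{-Tr ggᵀ/2}` in
coordinates. -/
def ginDens (n : ℕ) (ν : ℝ) (u : Fin (2 * n) → Fin (2 * n) → ℝ) : ℝ :=
  ((Matrix.of u * (Matrix.of u)ᵀ).det) ^ ν *
    Real.exp (-(Matrix.of u * (Matrix.of u)ᵀ).trace / 2)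

/-!
Write `a` for the singular values of `g D(t) gᵀ`, each of which occurs twice, with `g` a standard
Gaussian matrix, and let `Δ` be the Vandermonde product in the squares of the singular values.

For a polynomial `F` in the traces `Tr (g - gᵀ)^{2k}`, the mean of `F(½ g D(t) gᵀ)` is a Fischer
product of `F` with the Taylor coefficients of the generating function
`B ↦ E exp(½ Tr (g D(t) gᵀ B))`. At `B = D(c)` only `2 × 2` Gaussian minors enter, and these
coefficients become complete homogeneous symmetric functions of the `tⱼ² cₖ²`. The radial part of
the Laplacian is `Δ⁻¹ ∘ 2∇² ∘ Δ` because `Δ` is harmonic, so that Fischer products of invariant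
polynomials reduce to Fischer products of their radial parts multiplied by `Δ`. The Cauchy identity
then splits the product into `n!` moments of independent exponential variables, whence
`E F = ∫ F Δ ∏ exp(-aⱼ / tⱼ) da / ∫ Δ ∏ exp(-aⱼ / tⱼ) da`.

Both sides have exponential moments, so the moment problem is determinate. After averaging over
signed permutations and moving the negative part of the signed density to the other side, the
equality of symmetric moments becomes an equality of laws. Finally `det (g gᵀ) ∏ tⱼ² = ∏ aⱼ²` makes
the factor `det (g gᵀ)^ν` a function of the singular values, and antisymmetrizing replaces
`∏ exp(-aⱼ / tⱼ)` by `det [exp(-aⱼ / tₖ)] / n!`.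
-/

namespace InducedGinibre

open MvPolynomial ProbabilityTheory

/-! ### Gaussian means of polynomials -/

section GaussianMoments

/-- The `k`-th moment of the standard normal law. -/
def gaussianMoment (k : ℕ) : ℝ := ∫ x, x ^ k ∂(gaussianReal 0 1)

lemma integrable_pow_gaussianReal (k : ℕ) :
    Integrable (fun x : ℝ => x ^ k) (gaussianReal 0 1) := by
  rcases eq_or_ne k 0 with rfl | hk
  · simp
  · exact ((memLp_id_gaussianReal k).integrable_norm_pow hk).mono' (by fun_prop) (by simp)

lemma hasDerivAt_gaussianPDFReal (x : ℝ) :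
    HasDerivAt (gaussianPDFReal 0 1) (-x * gaussianPDFReal 0 1 x) x := by
  have hpdf : gaussianPDFReal 0 1 = fun x => (√(2 * Real.pi))⁻¹ * Real.exp (-x ^ 2 / 2) := by
    ext x
    simp [gaussianPDFReal]
  have hexponent : HasDerivAt (fun x : ℝ => -x ^ 2 / 2) (-x) x :=
    ((hasDerivAt_pow 2 x).neg.div_const 2).congr_deriv (by simp; ring)
  rw [hpdf]
  exact (hexponent.exp.const_mul _).congr_deriv (by ring)

lemma integrable_pow_mul_gaussianPDFReal (k : ℕ) :
    Integrable (fun x : ℝ => x ^ k * gaussianPDFReal 0 1 x) := by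
  have h := integrable_pow_gaussianReal k
  rw [gaussianReal_of_var_ne_zero 0 one_ne_zero, integrable_withDensity_iff_integrable_smul₀'
    (by fun_prop) (ae_of_all _ fun x => by simp [gaussianPDF])] at h
  refine h.congr (ae_of_all _ fun x => ?_)
  simp [gaussianPDF, ENNReal.toReal_ofReal (gaussianPDFReal_nonneg _ _ _), mul_comm]

lemma gaussianMoment_eq_integral (k : ℕ) :
    gaussianMoment k = ∫ x : ℝ, x ^ k * gaussianPDFReal 0 1 x := by
  rw [gaussianMoment, integral_gaussianReal_eq_integral_smul one_ne_zero]
  simp [mul_comm]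

lemma gaussianMoment_add_two (k : ℕ) :
    gaussianMoment (k + 2) = (k + 1) * gaussianMoment k := by
  have hparts := integral_mul_deriv_eq_deriv_mul_of_integrable (u := fun x : ℝ => x ^ (k + 1))
    (v := gaussianPDFReal 0 1) (u' := fun x => (k + 1) * x ^ k)
    (v' := fun x => -x * gaussianPDFReal 0 1 x)
    (fun x _ => by simpa using hasDerivAt_pow (k + 1) x)
    (fun x _ => hasDerivAt_gaussianPDFReal x)
    ((integrable_pow_mul_gaussianPDFReal (k + 2)).neg.congr
      (ae_of_all _ fun x => by simp; ring))
    (((integrable_pow_mul_gaussianPDFReal k).const_mul (k + 1)).congr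
      (ae_of_all _ fun x => by simp; ring))
    (integrable_pow_mul_gaussianPDFReal (k + 1))
  have hleft : (fun x : ℝ => x ^ (k + 1) * (-x * gaussianPDFReal 0 1 x)) =
      fun x => -(x ^ (k + 2) * gaussianPDFReal 0 1 x) := by
    ext x
    ring
  rw [hleft, integral_neg, neg_inj] at hparts
  rw [gaussianMoment_eq_integral, gaussianMoment_eq_integral, hparts, ← integral_const_mul]
  simp only [mul_assoc]

lemma gaussianMoment_succ (k : ℕ) : gaussianMoment (k + 1) = k * gaussianMoment (k - 1) := by
  cases k with
  | zero => simp [gaussianMoment]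
  | succ k => simpa using gaussianMoment_add_two k

end GaussianMoments

section GaussianMean

lemma map_monomial_eq_of_map_X_mul {σ : Type*} {L M : MvPolynomial σ ℝ →ₗ[ℝ] ℝ}
    (hone : L 1 = M 1)
    (hL : ∀ i p, L (X i * p) = L (pderiv i p)) (hM : ∀ i p, M (X i * p) = M (pderiv i p))
    (s : σ →₀ ℕ) : L (monomial s 1) = M (monomial s 1) := by
  classical
  induction hN : s.degree using Nat.strong_induction_on generalizing s with
  | _ N ih =>
    rcases eq_or_ne s 0 with rfl | hs
    · simpa using hone
    obtain ⟨i, hi⟩ : ∃ i, s i ≠ 0 := Finsupp.ne_iff.1 hs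
    obtain ⟨t, rfl⟩ : ∃ t, s = Finsupp.single i 1 + t :=
      ⟨s - Finsupp.single i 1, by
        rw [add_tsub_cancel_of_le (by simpa using Nat.one_le_iff_ne_zero.2 hi)]⟩
    have hderiv : pderiv i (monomial t (1 : ℝ)) =
        (t i : ℝ) • monomial (t - Finsupp.single i 1) (1 : ℝ) := by
      rw [pderiv_monomial, smul_monomial, smul_eq_mul, mul_one, one_mul]
    have hlt : (t - Finsupp.single i 1).degree < N := by
      have := Finsupp.degree_mono (tsub_le_self : t - Finsupp.single i 1 ≤ t)
      rw [← hN, map_add, Finsupp.degree_single]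
      omega
    have hmul : monomial (Finsupp.single i 1 + t) (1 : ℝ) = X i * monomial t 1 := by
      rw [X, monomial_mul, one_mul]
    rw [hmul, hL, hM, hderiv, map_smul, map_smul, ih _ hlt _ rfl]

variable {κ : Type*} [Fintype κ]

/-- The law of a vector of independent standard normal variables indexed by `κ`. -/
def piGaussian (κ : Type*) [Fintype κ] : Measure (κ → ℝ) :=
  Measure.pi fun _ => gaussianReal 0 1

instance : IsProbabilityMeasure (piGaussian κ) :=
  inferInstanceAs (IsProbabilityMeasure (Measure.pi _))

lemma eval_monomial_eq_prod (v : κ → ℝ) (s : κ →₀ ℕ) (c : ℝ) :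
    eval v (monomial s c) = c * ∏ i, v i ^ s i := by
  rw [eval_monomial, Finsupp.prod_fintype _ _ fun _ => pow_zero _]

lemma integrable_eval_piGaussian (p : MvPolynomial κ ℝ) :
    Integrable (fun v => eval v p) (piGaussian κ) := by
  induction p using MvPolynomial.induction_on' with
  | monomial s c =>
    simp_rw [eval_monomial_eq_prod]
    exact (Integrable.fintype_prod (f := fun i x => x ^ s i) fun i =>
      integrable_pow_gaussianReal (s i)).const_mul c
  | add p q hp hq =>
    simp only [map_add]
    exact hp.add hq

/-- The expectation of a polynomial in independent standard normal variables. -/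
def gaussianMean : MvPolynomial κ ℝ →ₗ[ℝ] ℝ where
  toFun p := ∫ v, eval v p ∂(piGaussian κ)
  map_add' p q := by
    simp [integral_add (integrable_eval_piGaussian p) (integrable_eval_piGaussian q)]
  map_smul' c p := by simp [integral_const_mul]

lemma gaussianMean_apply (p : MvPolynomial κ ℝ) :
    gaussianMean p = ∫ v, eval v p ∂(piGaussian κ) := rfl

lemma gaussianMean_monomial (s : κ →₀ ℕ) (c : ℝ) :
    gaussianMean (monomial s c) = c * ∏ i, gaussianMoment (s i) := by
  simp_rw [gaussianMean_apply, eval_monomial_eq_prod, integral_const_mul]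
  exact congrArg (c * ·)
    (integral_fintype_prod_eq_prod (𝕜 := ℝ) (f := fun i x => x ^ s i))

@[simp] lemma gaussianMean_one : gaussianMean (1 : MvPolynomial κ ℝ) = 1 := by
  simp [gaussianMean_apply]

lemma gaussianMean_C_mul (c : ℝ) (p : MvPolynomial κ ℝ) :
    gaussianMean (C c * p) = c * gaussianMean p := by
  rw [← smul_eq_C_mul, map_smul, smul_eq_mul]

lemma gaussianMean_X_mul (i : κ) (p : MvPolynomial κ ℝ) :
    gaussianMean (X i * p) = gaussianMean (pderiv i p) := by
  classical
  induction p using MvPolynomial.induction_on' with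
  | monomial s c =>
    have hoff : ∀ j ∈ Finset.univ.erase i, gaussianMoment ((Finsupp.single i 1 + s : κ →₀ ℕ) j) =
        gaussianMoment ((s - Finsupp.single i 1 : κ →₀ ℕ) j) := by
      intro j hj
      simp [(Finset.ne_of_mem_erase hj).symm]
    have hadd : (Finsupp.single i 1 + s : κ →₀ ℕ) i = s i + 1 := by simp [add_comm]
    have hsub : (s - Finsupp.single i 1 : κ →₀ ℕ) i = s i - 1 := by simp
    rw [pderiv_monomial, X, monomial_mul, gaussianMean_monomial, gaussianMean_monomial,
      ← Finset.mul_prod_erase _ _ (Finset.mem_univ i),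
      ← Finset.mul_prod_erase _ _ (Finset.mem_univ i), Finset.prod_congr rfl hoff, hadd, hsub,
      gaussianMoment_succ]
    ring
  | add p q hp hq => simp [mul_add, hp, hq]

lemma eq_gaussianMean_of_map_X_mul (L : MvPolynomial κ ℝ →ₗ[ℝ] ℝ) (hone : L 1 = 1)
    (hL : ∀ i p, L (X i * p) = L (pderiv i p)) : L = gaussianMean := by
  refine (basisMonomials κ ℝ).ext fun s => ?_
  simpa using map_monomial_eq_of_map_X_mul (hone.trans gaussianMean_one.symm) hL
    gaussianMean_X_mul s

end GaussianMean

section OrthogonalInvariance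

/-- The linear substitution `X ↦ M X` on polynomials. -/
def linearSubst {κ : Type*} [Fintype κ] (M : Matrix κ κ ℝ) :
    MvPolynomial κ ℝ →ₐ[ℝ] MvPolynomial κ ℝ :=
  aeval fun i => ∑ j, C (M i j) * X j

lemma pderiv_linearSubst {κ : Type*} [Fintype κ] (M : Matrix κ κ ℝ) (j : κ)
    (P : MvPolynomial κ ℝ) :
    pderiv j (linearSubst M P) = ∑ i, C (M i j) * linearSubst M (pderiv i P) := by
  classical
  induction P using MvPolynomial.induction_on with
  | C c => simp [linearSubst, algebraMap_eq]
  | add p q hp hq => simp only [map_add, hp, hq, mul_add, Finset.sum_add_distrib]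
  | mul_X p m hp =>
    have hX : pderiv j (linearSubst M (X m)) = C (M m j) := by
      simp [linearSubst, Derivation.leibniz, pderiv_X, Pi.single_apply]
    have hdX : ∀ i, linearSubst M (pderiv i (X m : MvPolynomial κ ℝ)) =
        if m = i then 1 else 0 := by
      intro i
      rw [pderiv_X, Pi.single_apply]
      split_ifs <;> simp_all
    rw [map_mul, Derivation.leibniz, hp, hX]
    simp only [Derivation.leibniz, map_add, smul_eq_mul, map_mul, hdX, mul_add,
      Finset.sum_add_distrib, Finset.mul_sum]
    simp [mul_left_comm, mul_comm]

variable {ι : Type*} [Fintype ι]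

/-- The substitution `g ↦ k g` on polynomials in the entries of a square matrix `g`. -/
def leftMulSubst (k : Matrix ι ι ℝ) :
    MvPolynomial (ι × ι) ℝ →ₐ[ℝ] MvPolynomial (ι × ι) ℝ :=
  aeval fun pq =>
    (k.map (C : ℝ →+* MvPolynomial (ι × ι) ℝ) * mvPolynomialX ι ι ℝ) pq.1 pq.2

/-- The polynomial `½ tr (g A gᵀ B)` in the entries of `g`. -/
def halfTrace (A B : Matrix ι ι ℝ) : MvPolynomial (ι × ι) ℝ :=
  C (1 / 2) * trace (mvPolynomialX ι ι ℝ * A.map C * (mvPolynomialX ι ι ℝ)ᵀ * B.map C)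

lemma leftMulSubst_halfTrace (A B k : Matrix ι ι ℝ) :
    leftMulSubst kᵀ (halfTrace A B) = halfTrace A (k * B * kᵀ) := by
  have hX : (mvPolynomialX ι ι ℝ).map (leftMulSubst kᵀ) = kᵀ.map C * mvPolynomialX ι ι ℝ := by
    ext1 p q
    simp [leftMulSubst]
  have hC : ∀ c, leftMulSubst kᵀ (C c) = C c := (leftMulSubst kᵀ).commutes
  have hmapC : ∀ M : Matrix ι ι ℝ,
      (M.map (C : ℝ →+* MvPolynomial (ι × ι) ℝ)).map (leftMulSubst kᵀ) = M.map C := by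
    intro M
    ext1 p q
    simp [hC]
  have hconj : (k * B * kᵀ).map (C : ℝ →+* MvPolynomial (ι × ι) ℝ) =
      k.map C * B.map C * (k.map C)ᵀ := by
    rw [Matrix.map_mul, Matrix.map_mul, transpose_map]
  rw [halfTrace, halfTrace, map_mul, hC, AddMonoidHom.map_trace, Matrix.map_mul, Matrix.map_mul,
    Matrix.map_mul, hmapC, hmapC, transpose_map, hX, hconj, transpose_mul, transpose_map,
    transpose_transpose]
  generalize mvPolynomialX ι ι ℝ = g
  refine congrArg (C (1 / 2) * ·) ?_
  calc trace ((k.map C)ᵀ * g * A.map C * (gᵀ * k.map C) * B.map C)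
      = trace ((k.map C)ᵀ * (g * A.map C * gᵀ * k.map C * B.map C)) := by
        simp only [Matrix.mul_assoc]
    _ = trace (g * A.map C * gᵀ * (k.map C * B.map C * (k.map C)ᵀ)) := by
        rw [trace_mul_comm]
        simp only [Matrix.mul_assoc]

variable [DecidableEq ι]

lemma gaussianMean_linearSubst (M : Matrix ι ι ℝ) (hM : M * Mᵀ = 1) (P : MvPolynomial ι ℝ) :
    gaussianMean (linearSubst M P) = gaussianMean P := by
  have hrow : ∀ i l, ∑ j, M i j * M l j = if i = l then 1 else 0 := fun i l => by
    simpa [Matrix.mul_apply, Matrix.one_apply] using congrFun (congrFun hM i) l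
  suffices h : gaussianMean ∘ₗ (linearSubst M).toLinearMap = gaussianMean from
    LinearMap.congr_fun h P
  refine eq_gaussianMean_of_map_X_mul _ (by simp) fun i p => ?_
  have hX : linearSubst M (X i) = ∑ j, C (M i j) * X j := by simp [linearSubst]
  simp only [LinearMap.comp_apply, AlgHom.toLinearMap_apply, map_mul, hX, Finset.sum_mul,
    map_sum, mul_assoc, gaussianMean_C_mul, gaussianMean_X_mul, pderiv_linearSubst,
    Finset.mul_sum]
  rw [Finset.sum_comm]
  simp only [← mul_assoc, ← Finset.sum_mul, hrow]
  simp

open scoped Kronecker in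
lemma leftMulSubst_eq_linearSubst (k : Matrix ι ι ℝ) :
    leftMulSubst k = linearSubst (k ⊗ₖ (1 : Matrix ι ι ℝ)) := by
  refine congrArg aeval (funext fun pq => ?_)
  simp only [Matrix.mul_apply, Matrix.map_apply, mvPolynomialX_apply, kroneckerMap_apply]
  rw [Fintype.sum_prod_type]
  refine Finset.sum_congr rfl fun r _ => ?_
  rw [Finset.sum_eq_single pq.2]
  · simp
  · intro b _ hb
    simp [hb.symm]
  · simp

open scoped Kronecker in
lemma gaussianMean_leftMulSubst (k : Matrix ι ι ℝ) (hk : k * kᵀ = 1)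
    (P : MvPolynomial (ι × ι) ℝ) : gaussianMean (leftMulSubst k P) = gaussianMean P := by
  have hkron : (k ⊗ₖ (1 : Matrix ι ι ℝ)) * (k ⊗ₖ (1 : Matrix ι ι ℝ))ᵀ = 1 := by
    rw [← kroneckerMap_transpose, ← mul_kronecker_mul, hk]
    simp
  rw [leftMulSubst_eq_linearSubst, gaussianMean_linearSubst _ hkron]

lemma gaussianMean_halfTrace_conj (A B k : Matrix ι ι ℝ) (hk : kᵀ * k = 1) (d : ℕ) :
    gaussianMean (halfTrace A (k * B * kᵀ) ^ d) = gaussianMean (halfTrace A B ^ d) := by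
  rw [← leftMulSubst_halfTrace, ← map_pow, gaussianMean_leftMulSubst _ (by simpa using hk)]

end OrthogonalInvariance

section Minors

variable {κ : Type*}

/-- The determinant of a `2 × 2` array of variables. -/
def minorPoly (e : Fin 2 × Fin 2 → κ) : MvPolynomial κ ℝ :=
  X (e (0, 0)) * X (e (1, 1)) - X (e (0, 1)) * X (e (1, 0))

lemma pderiv_minorPoly {e : Fin 2 × Fin 2 → κ} (he : Function.Injective e) (i j : Fin 2) :
    pderiv (e (i, j)) (minorPoly e) = (if i = j then 1 else -1) * X (e (i + 1, j + 1)) := by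
  classical
  fin_cases i <;> fin_cases j <;>
    simp [minorPoly, pderiv_X, he.eq_iff]

lemma pderiv_minorPoly_of_notMem {e : Fin 2 × Fin 2 → κ} {p : κ} (hp : p ∉ Set.range e) :
    pderiv p (minorPoly e) = 0 := by
  classical
  have hne : ∀ x, e x ≠ p := fun x hx => hp ⟨x, hx⟩
  simp [minorPoly, pderiv_X, hne]

lemma pderiv_add_pderiv_mul_minorPoly_pow {e : Fin 2 × Fin 2 → κ} (he : Function.Injective e)
    {F : MvPolynomial κ ℝ} (hF : ∀ x, pderiv (e x) F = 0) (m : ℕ) :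
    pderiv (e (1, 1)) (X (e (1, 1)) * (F * minorPoly e ^ m)) +
      pderiv (e (1, 0)) (X (e (1, 0)) * (F * minorPoly e ^ m)) =
      C ((m : ℝ) + 2) * (F * minorPoly e ^ m) := by
  have htwo : (C (2 : ℝ) : MvPolynomial κ ℝ) = 2 := map_ofNat C 2
  have hd11 : pderiv (e (1, 1)) (X (e (1, 1)) * (F * minorPoly e ^ m)) =
      F * minorPoly e ^ m +
        (m : MvPolynomial κ ℝ) * (X (e (0, 0)) * X (e (1, 1))) * F * minorPoly e ^ (m - 1) := by
    simp [Derivation.leibniz_pow, hF, pderiv_minorPoly he]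
    ring
  have hd10 : pderiv (e (1, 0)) (X (e (1, 0)) * (F * minorPoly e ^ m)) =
      F * minorPoly e ^ m -
        (m : MvPolynomial κ ℝ) * (X (e (0, 1)) * X (e (1, 0))) * F * minorPoly e ^ (m - 1) := by
    simp [Derivation.leibniz_pow, hF, pderiv_minorPoly he]
    ring
  have heuler : (m : MvPolynomial κ ℝ) * minorPoly e ^ m =
      (m : MvPolynomial κ ℝ) * (minorPoly e ^ (m - 1) *
        (X (e (0, 0)) * X (e (1, 1)) - X (e (0, 1)) * X (e (1, 0)))) := by
    rcases eq_or_ne m 0 with rfl | hm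
    · simp
    · rw [← minorPoly, pow_sub_one_mul hm]
  rw [hd11, hd10, C_add, map_natCast, htwo, add_mul]
  linear_combination -F * heuler

variable [Fintype κ]

lemma gaussianMean_mul_minorPoly_pow_succ {e : Fin 2 × Fin 2 → κ} (he : Function.Injective e)
    {F : MvPolynomial κ ℝ} (hF : ∀ x, pderiv (e x) F = 0) (k : ℕ) :
    gaussianMean (F * minorPoly e ^ (k + 1)) =
      k * (gaussianMean (X (e (1, 1)) * (X (e (1, 1)) * (F * minorPoly e ^ (k - 1)))) +
        gaussianMean (X (e (1, 0)) * (X (e (1, 0)) * (F * minorPoly e ^ (k - 1))))) := by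
  classical
  have hexpand : F * minorPoly e ^ (k + 1) =
      X (e (0, 0)) * (X (e (1, 1)) * F * minorPoly e ^ k) -
        X (e (0, 1)) * (X (e (1, 0)) * F * minorPoly e ^ k) := by
    rw [pow_succ, minorPoly]
    ring
  have hd00 : pderiv (e (0, 0)) (X (e (1, 1)) * F * minorPoly e ^ k) =
      C (k : ℝ) * (X (e (1, 1)) * (X (e (1, 1)) * (F * minorPoly e ^ (k - 1)))) := by
    simp [Derivation.leibniz_pow, hF, pderiv_minorPoly he, pderiv_X, he.eq_iff]
    ring
  have hd01 : pderiv (e (0, 1)) (X (e (1, 0)) * F * minorPoly e ^ k) =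
      -(C (k : ℝ) * (X (e (1, 0)) * (X (e (1, 0)) * (F * minorPoly e ^ (k - 1))))) := by
    simp [Derivation.leibniz_pow, hF, pderiv_minorPoly he, pderiv_X, he.eq_iff]
    ring
  rw [hexpand, map_sub, gaussianMean_X_mul, gaussianMean_X_mul, hd00, hd01, map_neg,
    gaussianMean_C_mul, gaussianMean_C_mul]
  ring

/-- The `k`-th moment of the determinant of a `2 × 2` standard Gaussian matrix. -/
def detMoment (k : ℕ) : ℝ := if Even k then (k.factorial : ℝ) else 0

lemma gaussianMean_mul_minorPoly_pow {e : Fin 2 × Fin 2 → κ} (he : Function.Injective e)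
    {F : MvPolynomial κ ℝ} (hF : ∀ x, pderiv (e x) F = 0) (k : ℕ) :
    gaussianMean (F * minorPoly e ^ k) = detMoment k * gaussianMean F := by
  induction k using Nat.twoStepInduction with
  | zero => simp [detMoment]
  | one => simpa [detMoment] using gaussianMean_mul_minorPoly_pow_succ he hF 0
  | more k ih _ =>
    rw [gaussianMean_mul_minorPoly_pow_succ he hF (k + 1), Nat.add_sub_cancel,
      gaussianMean_X_mul (e (1, 1)), gaussianMean_X_mul (e (1, 0)), ← map_add,
      pderiv_add_pderiv_mul_minorPoly_pow he hF, gaussianMean_C_mul, ih, detMoment, detMoment]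
    simp only [Nat.even_add, even_two, iff_true]
    split_ifs
    · rw [Nat.factorial_succ, Nat.factorial_succ]
      push_cast
      ring
    · simp

end Minors

section BlockMatrices

/-- Row index of a `2n × 2n` matrix divided into `2 × 2` blocks. -/
abbrev BlockIdx (n : ℕ) := Fin n × Fin 2

/-- Polynomials in the entries of a `2n × 2n` matrix divided into `2 × 2` blocks. -/
abbrev EntryPoly (n : ℕ) := MvPolynomial (BlockIdx n × BlockIdx n) ℝ

variable {n : ℕ} {R : Type*} [CommRing R]

/-- The matrix `diag(a₁ J, …, aₙ J)` over any commutative ring, with block indices. -/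
def blockD (a : Fin n → R) : Matrix (BlockIdx n) (BlockIdx n) R :=
  Matrix.of fun p q =>
    if p.1 = q.1 then a p.1 * (!![0, 1; -1, 0] : Matrix (Fin 2) (Fin 2) R) p.2 q.2 else 0

lemma blockD_map {S : Type*} [CommRing S] (f : R →+* S) (a : Fin n → R) :
    (blockD a).map f = blockD fun j => f (a j) := by
  ext ⟨i, r⟩ ⟨j, s⟩
  simp only [blockD, Matrix.map_apply, Matrix.of_apply]
  split_ifs
  · rw [map_mul]
    fin_cases r <;> fin_cases s <;> simp
  · simp

lemma mul_blockD_zero (M : Matrix (BlockIdx n) (BlockIdx n) R) (a : Fin n → R) (p : BlockIdx n)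
    (i : Fin n) : (M * blockD a) p (i, 0) = -(a i * M p (i, 1)) := by
  simp [Matrix.mul_apply, blockD, Fintype.sum_prod_type, mul_comm]

lemma mul_blockD_one (M : Matrix (BlockIdx n) (BlockIdx n) R) (a : Fin n → R) (p : BlockIdx n)
    (i : Fin n) : (M * blockD a) p (i, 1) = a i * M p (i, 0) := by
  simp [Matrix.mul_apply, blockD, Fintype.sum_prod_type, mul_comm]

lemma trace_mul_blockD_mul_transpose_mul_blockD (g : Matrix (BlockIdx n) (BlockIdx n) R)
    (a b : Fin n → R) :
    trace (g * blockD a * gᵀ * blockD b) = -2 * ∑ c : Fin n × Fin n, a c.2 * b c.1 *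
      (g (c.1, 0) (c.2, 0) * g (c.1, 1) (c.2, 1) - g (c.1, 0) (c.2, 1) * g (c.1, 1) (c.2, 0)) := by
  simp only [trace, diag_apply, Fintype.sum_prod_type, Fin.sum_univ_two, mul_blockD_zero,
    mul_blockD_one, Finset.mul_sum]
  refine Finset.sum_congr rfl fun i _ => ?_
  rw [Matrix.mul_apply (M := g * blockD a), Matrix.mul_apply (M := g * blockD a)]
  simp only [Fintype.sum_prod_type, Fin.sum_univ_two, mul_blockD_zero, mul_blockD_one,
    Matrix.transpose_apply, Finset.mul_sum]
  rw [← Finset.sum_neg_distrib, ← Finset.sum_add_distrib]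
  exact Finset.sum_congr rfl fun j _ => by ring

/-- The minor of the generic matrix carried by the block `b`. -/
def blockMinor (b : Fin n × Fin n) : EntryPoly n :=
  minorPoly fun x => ((b.1, x.1), (b.2, x.2))

lemma halfTrace_blockD (a b : Fin n → ℝ) :
    halfTrace (blockD a) (blockD b) =
      ∑ c : Fin n × Fin n, C (-(a c.2 * b c.1)) * blockMinor c := by
  have hhalf : (C (1 / 2 : ℝ) * -2 : EntryPoly n) = -1 := by
    rw [show (-2 : EntryPoly n) = C (-2) by rw [map_neg, map_ofNat], ← C_mul]
    norm_num
  rw [halfTrace, blockD_map, blockD_map, trace_mul_blockD_mul_transpose_mul_blockD, ← mul_assoc,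
    hhalf, Finset.mul_sum]
  refine Finset.sum_congr rfl fun c _ => ?_
  simp only [mvPolynomialX_apply, blockMinor, minorPoly, map_neg, map_mul]
  ring

lemma gaussianMean_prod_blockMinor_pow (S : Finset (Fin n × Fin n)) (k : Fin n × Fin n → ℕ) :
    gaussianMean (∏ b ∈ S, blockMinor b ^ k b) = ∏ b ∈ S, detMoment (k b) := by
  induction S using Finset.induction_on with
  | empty => simp
  | insert b S hb ih =>
    have hinj : Function.Injective fun x : Fin 2 × Fin 2 =>
        (((b.1, x.1), (b.2, x.2)) : BlockIdx n × BlockIdx n) := fun x y hxy => by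
      simpa [Prod.ext_iff] using hxy
    have hindep : ∀ c ∈ S, ∀ x : Fin 2 × Fin 2,
        pderiv (((b.1, x.1), (b.2, x.2)) : BlockIdx n × BlockIdx n) (blockMinor c ^ k c) = 0 := by
      intro c hc x
      rw [Derivation.leibniz_pow, blockMinor, pderiv_minorPoly_of_notMem, smul_zero, smul_zero]
      rintro ⟨y, hy⟩
      simp only [Prod.mk.injEq] at hy
      exact hb ((Prod.ext hy.1.1 hy.2.1 : c = b) ▸ hc)
    rw [Finset.prod_insert hb, Finset.prod_insert hb, mul_comm, ← ih]
    refine gaussianMean_mul_minorPoly_pow hinj (fun x => ?_) (k b)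
    exact Finset.prod_induction _ (fun P => pderiv _ P = 0)
      (fun P Q hP hQ => by rw [Derivation.leibniz, hP, hQ, smul_zero, smul_zero, add_zero])
      pderiv_one (fun c hc => hindep c hc x)

end BlockMatrices

section CompleteHomogeneous

variable {ι R S : Type*} [Fintype ι] [DecidableEq ι] [CommRing R] [CommRing S]

/-- The complete homogeneous symmetric function of degree `d`, evaluated at a finite family. -/
def completeHomog (d : ℕ) (x : ι → R) : R :=
  ∑ l ∈ Finset.piAntidiag Finset.univ d, ∏ i, x i ^ l i

lemma map_completeHomog (f : R →+* S) (d : ℕ) (x : ι → R) :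
    f (completeHomog d x) = completeHomog d fun i => f (x i) := by
  simp [completeHomog, map_sum, map_prod]

lemma completeHomog_mul_left (c : R) (d : ℕ) (x : ι → R) :
    completeHomog d (fun i => c * x i) = c ^ d * completeHomog d x := by
  rw [completeHomog, completeHomog, Finset.mul_sum]
  refine Finset.sum_congr rfl fun l hl => ?_
  rw [← (Finset.mem_piAntidiag.1 hl).1, ← Finset.prod_pow_eq_pow_sum, ← Finset.prod_mul_distrib]
  simp only [mul_pow]

lemma completeHomog_comp_equiv (e : Equiv.Perm ι) (d : ℕ) (x : ι → R) :
    completeHomog d (x ∘ e) = completeHomog d x := by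
  refine Finset.sum_nbij' (fun l => l ∘ e.symm) (fun l => l ∘ e) ?_ ?_ ?_ ?_ ?_
  · intro l hl
    simpa [Finset.mem_piAntidiag, Equiv.sum_comp e.symm l] using hl
  · intro l hl
    simpa [Finset.mem_piAntidiag, Equiv.sum_comp e l] using hl
  · intro l _
    simp [Function.comp_assoc]
  · intro l _
    simp [Function.comp_assoc]
  · intro l _
    exact Fintype.prod_equiv e _ _ fun i => by simp

lemma sum_piAntidiag_prod_pow_even (d : ℕ) (x : ι → R) :
    ∑ k ∈ Finset.piAntidiag Finset.univ (2 * d), ∏ i, x i ^ k i * (if Even (k i) then 1 else 0) =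
      completeHomog d fun i => x i ^ 2 := by
  have heven := Finset.map_nsmul_piAntidiag (Finset.univ : Finset ι) d two_ne_zero
  rw [← Finset.sum_filter_add_sum_filter_not _ fun k : ι → ℕ => ∀ i ∈ Finset.univ, 2 ∣ k i]
  rw [Finset.sum_eq_zero (s := Finset.filter (fun k => ¬ _) _), add_zero]
  · refine (Finset.sum_congr (heven.trans (by congr)) fun _ _ => rfl).symm.trans ?_
    rw [Finset.sum_map, completeHomog]
    refine Finset.sum_congr rfl fun l _ => Finset.prod_congr rfl fun i _ => ?_
    simp [pow_mul]
  · intro k hk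
    obtain ⟨i, hi⟩ : ∃ i, ¬ 2 ∣ k i := by simpa using (Finset.mem_filter.1 hk).2
    exact Finset.prod_eq_zero (Finset.mem_univ i) (by simp [even_iff_two_dvd, hi])

end CompleteHomogeneous

section BlockGaussianMoments

variable {n : ℕ}

lemma gaussianMean_multinomial_blockMinor (a b : Fin n → ℝ) {m : ℕ} {k : Fin n × Fin n → ℕ}
    (hk : k ∈ Finset.piAntidiag Finset.univ m) :
    gaussianMean ((Nat.multinomial Finset.univ k : EntryPoly n) *
        ∏ c, (C (-(a c.2 * b c.1)) * blockMinor c) ^ k c) =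
      m.factorial *
        ∏ c, ((-(a c.2 * b c.1)) ^ k c * (if Even (k c) then 1 else 0)) := by
  have hmultinomial : (Nat.multinomial Finset.univ k : ℝ) * ∏ c, ((k c).factorial : ℝ) =
      m.factorial := by
    rw [← (Finset.mem_piAntidiag.1 hk).1, ← Nat.multinomial_spec]
    push_cast
    ring
  have hscalar : (Nat.multinomial Finset.univ k : EntryPoly n) *
        ∏ c, (C (-(a c.2 * b c.1)) * blockMinor c) ^ k c =
      C ((Nat.multinomial Finset.univ k : ℝ) * ∏ c, (-(a c.2 * b c.1)) ^ k c) *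
        ∏ c, blockMinor c ^ k c := by
    simp_rw [mul_pow, Finset.prod_mul_distrib, map_mul, map_prod, map_pow, map_natCast]
    ring
  have hmoment : ∀ c, detMoment (k c) = (k c).factorial * (if Even (k c) then 1 else 0) :=
    fun c => by simp [detMoment]
  rw [hscalar, gaussianMean_C_mul, gaussianMean_prod_blockMinor_pow, ← hmultinomial]
  simp_rw [hmoment, Finset.prod_mul_distrib]
  ring

lemma gaussianMean_halfTrace_blockD (a b : Fin n → ℝ) (d : ℕ) :
    gaussianMean (halfTrace (blockD a) (blockD b) ^ (2 * d)) =
      (2 * d).factorial * completeHomog d fun c : Fin n × Fin n => a c.2 ^ 2 * b c.1 ^ 2 := by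
  have hsq : (fun c : Fin n × Fin n => a c.2 ^ 2 * b c.1 ^ 2) =
      fun c => (-(a c.2 * b c.1)) ^ 2 := by
    ext c
    ring
  rw [halfTrace_blockD, Finset.sum_pow_eq_sum_piAntidiag, map_sum, hsq,
    ← sum_piAntidiag_prod_pow_even, Finset.mul_sum]
  exact Finset.sum_congr rfl fun k hk => gaussianMean_multinomial_blockMinor a b hk

lemma gaussianMean_halfTrace_conj_blockD (a b : Fin n → ℝ) {k : Matrix (BlockIdx n) (BlockIdx n) ℝ}
    (hk : kᵀ * k = 1) (d : ℕ) :
    gaussianMean (halfTrace (blockD a) (k * blockD b * kᵀ) ^ (2 * d)) =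
      (2 * d).factorial * completeHomog d fun c : Fin n × Fin n => a c.2 ^ 2 * b c.1 ^ 2 := by
  rw [gaussianMean_halfTrace_conj _ _ _ hk, gaussianMean_halfTrace_blockD]

end BlockGaussianMoments

/-! ### The Fischer inner product -/

section Fischer

variable {κ : Type*} [Fintype κ]

/-- The multi-index factorial `s! = ∏ i, (s i)!`. -/
def multiFactorial (s : κ →₀ ℕ) : ℝ := ∏ i, ((s i).factorial : ℝ)

lemma multiFactorial_pos (s : κ →₀ ℕ) : 0 < multiFactorial s :=
  Finset.prod_pos fun i _ => by positivity

lemma multiFactorial_single_add (i : κ) (s : κ →₀ ℕ) :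
    multiFactorial (Finsupp.single i 1 + s) = (s i + 1) * multiFactorial s := by
  classical
  rw [multiFactorial, multiFactorial, ← Finset.mul_prod_erase _ _ (Finset.mem_univ i),
    ← Finset.mul_prod_erase _ (fun j => ((s j).factorial : ℝ)) (Finset.mem_univ i),
    Finset.prod_congr rfl (g := fun j => ((s j).factorial : ℝ)), ← mul_assoc]
  · simp [add_comm 1, Nat.factorial_succ]
  · intro j hj
    simp [(Finset.ne_of_mem_erase hj).symm]

/-- The Fischer inner product on polynomials: monomials are orthogonal and `x^s` has square
norm `s!`, so that multiplication by `X i` is adjoint to `∂/∂x_i`. -/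
def fischer : LinearMap.BilinForm ℝ (MvPolynomial κ ℝ) :=
  (basisMonomials κ ℝ).constr ℝ fun s => multiFactorial s • lcoeff ℝ s

lemma fischer_monomial_left (s : κ →₀ ℕ) (c : ℝ) (G : MvPolynomial κ ℝ) :
    fischer (monomial s c) G = c * (multiFactorial s * coeff s G) := by
  have hbasis : fischer (monomial s (1 : ℝ)) = multiFactorial s • lcoeff ℝ s := by
    simpa [fischer] using (basisMonomials κ ℝ).constr_basis ℝ
      (fun s => multiFactorial s • lcoeff ℝ s) s
  rw [← mul_one c, ← smul_eq_mul c, ← smul_monomial, map_smul, hbasis]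
  simp

lemma degree_eq_of_mem_support {κ : Type*} {m : ℕ} {F : MvPolynomial κ ℝ}
    (hF : F.IsHomogeneous m) {s : κ →₀ ℕ} (hs : s ∈ F.support) : s.degree = m :=
  not_imp_comm.1 hF.coeff_eq_zero (mem_support_iff.1 hs)

lemma fischer_eq_zero_of_isHomogeneous {m k : ℕ} {F G : MvPolynomial κ ℝ}
    (hF : F.IsHomogeneous m) (hG : G.IsHomogeneous k) (hmk : m ≠ k) : fischer F G = 0 := by
  rw [F.as_sum, map_sum, LinearMap.sum_apply]
  refine Finset.sum_eq_zero fun s hs => ?_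
  rw [fischer_monomial_left, hG.coeff_eq_zero (degree_eq_of_mem_support hF hs ▸ hmk),
    mul_zero, mul_zero]

lemma fischer_X_mul (i : κ) (F G : MvPolynomial κ ℝ) :
    fischer (X i * F) G = fischer F (pderiv i G) := by
  classical
  induction F using MvPolynomial.induction_on' with
  | add p q hp hq => simp only [mul_add, map_add, LinearMap.add_apply, hp, hq]
  | monomial s c =>
    rw [X, monomial_mul, one_mul, fischer_monomial_left, fischer_monomial_left, coeff_pderiv,
      multiFactorial_single_add, add_comm (Finsupp.single i 1)]
    ring

lemma multiFactorial_mapDomain (σ : Equiv.Perm κ) (s : κ →₀ ℕ) :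
    multiFactorial (Finsupp.mapDomain σ s) = multiFactorial s := by
  rw [multiFactorial, multiFactorial, ← Equiv.prod_comp σ]
  simp [Finsupp.mapDomain_apply σ.injective]

lemma fischer_rename (σ : Equiv.Perm κ) (F G : MvPolynomial κ ℝ) :
    fischer (rename σ F) (rename σ G) = fischer F G := by
  induction F using MvPolynomial.induction_on' with
  | add p q hp hq => simp only [map_add, LinearMap.add_apply, hp, hq]
  | monomial s c =>
    rw [rename_monomial, fischer_monomial_left, fischer_monomial_left, multiFactorial_mapDomain,
      coeff_rename_mapDomain _ σ.injective]

end Fischer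

section Laplacian

variable {κ : Type*}

/-- Linear operators on polynomials, with composition as multiplication. -/
abbrev PolyOp (κ : Type*) : Type _ := Module.End ℝ (MvPolynomial κ ℝ)

/-- The operator of multiplication by a polynomial. -/
def mulOp : MvPolynomial κ ℝ →ₐ[ℝ] PolyOp κ := Algebra.lmul ℝ _

@[simp] lemma mulOp_apply (F G : MvPolynomial κ ℝ) : mulOp F G = F * G := rfl

/-- The operator `∂/∂x_i`. -/
def derivOp (i : κ) : PolyOp κ := (pderiv i).toLinearMap

@[simp] lemma derivOp_apply (i : κ) (F : MvPolynomial κ ℝ) : derivOp i F = pderiv i F := rfl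

variable [Fintype κ]

/-- The Laplace operator `∑ i, ∂²/∂x_i²`. -/
def laplacian : PolyOp κ := ∑ i, derivOp i * derivOp i

lemma laplacian_apply (F : MvPolynomial κ ℝ) : laplacian F = ∑ i, pderiv i (pderiv i F) := by
  simp [laplacian, LinearMap.sum_apply]

lemma mkDerivation_apply_eq_sum (f : κ → MvPolynomial κ ℝ) (F : MvPolynomial κ ℝ) :
    mkDerivation ℝ f F = ∑ i, f i * pderiv i F := by
  classical
  have happly (G : MvPolynomial κ ℝ) :
      (∑ i, f i • pderiv i : Derivation ℝ _ _) G = ∑ i, f i * pderiv i G := by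
    rw [← Derivation.coeFnAddMonoidHom_apply, map_sum, Finset.sum_apply]
    rfl
  rw [← happly]
  congr 1
  exact derivation_ext fun j => by simp [happly, pderiv_X, Pi.single_apply]

/-- The pairing `∇F · ∇G` of gradients, as a derivation in `G`. -/
def gradPairing (F : MvPolynomial κ ℝ) : Derivation ℝ (MvPolynomial κ ℝ) (MvPolynomial κ ℝ) :=
  mkDerivation ℝ fun i => pderiv i F

lemma gradPairing_apply (F G : MvPolynomial κ ℝ) :
    gradPairing F G = ∑ i, pderiv i F * pderiv i G :=
  mkDerivation_apply_eq_sum _ _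

lemma gradPairing_comm {κ : Type*} [Finite κ] (F G : MvPolynomial κ ℝ) :
    gradPairing F G = gradPairing G F := by
  cases nonempty_fintype κ
  simp only [gradPairing_apply, mul_comm]

lemma laplacian_mul (F G : MvPolynomial κ ℝ) :
    laplacian (F * G) = laplacian F * G + (2 : ℝ) • gradPairing F G + F * laplacian G := by
  simp only [laplacian_apply, gradPairing_apply, Derivation.leibniz, map_add, smul_eq_mul, two_smul,
    Finset.sum_mul, Finset.mul_sum, ← Finset.sum_add_distrib]
  exact Finset.sum_congr rfl fun j _ => by ring

lemma laplacian_X (i : κ) : laplacian (X i : MvPolynomial κ ℝ) = 0 := by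
  classical
  rw [laplacian_apply]
  refine Finset.sum_eq_zero fun j _ => ?_
  rw [pderiv_X, Pi.single_apply]
  split_ifs <;> simp

lemma derivOp_commute {κ : Type*} (i j : κ) : Commute (derivOp i) (derivOp j) := by
  have hlie : ⁅pderiv (R := ℝ) i, pderiv (R := ℝ) j⁆ = 0 := by
    classical
    refine MvPolynomial.derivation_ext fun k => ?_
    rw [Derivation.commutator_apply, pderiv_X, pderiv_X, Pi.single_apply, Pi.single_apply]
    split_ifs <;> simp
  refine LinearMap.ext fun F => sub_eq_zero.1 ?_
  simpa [Derivation.commutator_apply] using congr($hlie F)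

lemma laplacian_commute_derivOp (i : κ) : Commute laplacian (derivOp i) :=
  Commute.sum_left _ _ _ fun j _ => (derivOp_commute j i).mul_left (derivOp_commute j i)

/-- The commutator operator `T ↦ [Δ, T]`. -/
def adLaplacian : Module.End ℝ (PolyOp κ) :=
  LinearMap.mulLeft ℝ laplacian - LinearMap.mulRight ℝ laplacian

lemma adLaplacian_apply (T : PolyOp κ) : adLaplacian T = laplacian * T - T * laplacian := rfl

lemma adLaplacian_mul (S T : PolyOp κ) :
    adLaplacian (S * T) = adLaplacian S * T + S * adLaplacian T := by
  simp only [adLaplacian_apply, sub_mul, mul_sub, mul_assoc, sub_add_sub_cancel]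

lemma adLaplacian_derivOp_mul (i : κ) (T : PolyOp κ) :
    adLaplacian (derivOp i * T) = derivOp i * adLaplacian T := by
  rw [adLaplacian_mul, adLaplacian_apply, (laplacian_commute_derivOp i).eq, sub_self, zero_mul,
    zero_add]

lemma adLaplacian_mulOp_X (i : κ) :
    adLaplacian (mulOp (X i : MvPolynomial κ ℝ)) = (2 : ℝ) • derivOp i := by
  classical
  refine LinearMap.ext fun F => ?_
  have hgrad : gradPairing (X i : MvPolynomial κ ℝ) F = pderiv i F := by
    simp [gradPairing_apply, pderiv_X, Pi.single_apply]
  simp only [adLaplacian_apply, LinearMap.sub_apply, Module.End.mul_apply, mulOp_apply,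
    laplacian_mul, laplacian_X, hgrad, LinearMap.smul_apply, derivOp_apply, zero_mul, zero_add,
    add_sub_cancel_right]

lemma adLaplacian_mulOp_X_mul (i : κ) (T : PolyOp κ) :
    adLaplacian (mulOp (X i) * T) = mulOp (X i) * adLaplacian T + (2 : ℝ) • (derivOp i * T) := by
  rw [adLaplacian_mul, adLaplacian_mulOp_X, smul_mul_assoc, add_comm]

lemma adLaplacian_pow_mulOp_X_mul (i : κ) (T : PolyOp κ) (k : ℕ) :
    (adLaplacian ^ (k + 1)) (mulOp (X i) * T) = mulOp (X i) * (adLaplacian ^ (k + 1)) T +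
      (2 * (k + 1) : ℝ) • (derivOp i * (adLaplacian ^ k) T) := by
  induction k with
  | zero => simp [adLaplacian_mulOp_X_mul]
  | succ k ih =>
    rw [pow_succ' _ (k + 1), Module.End.mul_apply, ih, map_add, map_smul,
      adLaplacian_mulOp_X_mul, adLaplacian_derivOp_mul, ← Module.End.mul_apply adLaplacian,
      ← Module.End.mul_apply adLaplacian, ← pow_succ', ← pow_succ']
    push_cast
    module

lemma exists_eq_single_add_of_degree {κ : Type*} {s : κ →₀ ℕ} {m : ℕ}
    (hs : s.degree = m + 1) :
    ∃ i t, t.degree = m ∧ s = Finsupp.single i 1 + t := by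
  have hne : s ≠ 0 := by
    rintro rfl
    simp at hs
  obtain ⟨i, hi⟩ : ∃ i, s i ≠ 0 := Finsupp.ne_iff.1 hne
  have hsplit : s = Finsupp.single i 1 + (s - Finsupp.single i 1) := by
    rw [add_tsub_cancel_of_le (by simpa using Nat.one_le_iff_ne_zero.2 hi)]
  refine ⟨i, _, ?_, hsplit⟩
  rw [hsplit, map_add, Finsupp.degree_single] at hs
  omega

lemma adLaplacian_pow_mulOp_monomial_eq_zero {m : ℕ} {s : κ →₀ ℕ} (hs : s.degree = m) (c : ℝ) :
    (adLaplacian ^ (m + 1)) (mulOp (monomial s c)) = 0 := by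
  induction m generalizing s with
  | zero =>
    rw [(Finsupp.degree_eq_zero_iff s).1 hs, zero_add, pow_one, adLaplacian_apply, sub_eq_zero]
    refine LinearMap.ext fun F => ?_
    simp only [Module.End.mul_apply, mulOp_apply, monomial_zero', ← smul_eq_C_mul, map_smul]
  | succ m ih =>
    obtain ⟨i, t, ht, rfl⟩ := exists_eq_single_add_of_degree hs
    have hfactor : monomial (Finsupp.single i 1 + t) c = X i * monomial t c := by
      rw [X, monomial_mul, one_mul]
    have hvanish : (adLaplacian ^ (m + 1 + 1)) (mulOp (monomial t c)) = 0 := by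
      rw [pow_succ', Module.End.mul_apply, ih ht, map_zero]
    rw [hfactor, map_mul mulOp, adLaplacian_pow_mulOp_X_mul, hvanish, ih ht]
    simp

lemma fischer_monomial_mul {m : ℕ} {s : κ →₀ ℕ} (hs : s.degree = m) (c : ℝ)
    (F G : MvPolynomial κ ℝ) :
    2 ^ m * m.factorial * fischer (monomial s c * F) G =
      fischer F ((adLaplacian ^ m) (mulOp (monomial s c)) G) := by
  induction m generalizing s F with
  | zero =>
    rw [(Finsupp.degree_eq_zero_iff s).1 hs]
    simp only [pow_zero, Nat.factorial_zero, Nat.cast_one, one_mul, Module.End.one_apply,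
      mulOp_apply, monomial_zero', ← smul_eq_C_mul, map_smul, LinearMap.smul_apply]
  | succ m ih =>
    obtain ⟨i, t, ht, rfl⟩ := exists_eq_single_add_of_degree hs
    have hfactor : monomial (Finsupp.single i 1 + t) c = X i * monomial t c := by
      rw [X, monomial_mul, one_mul]
    rw [hfactor, map_mul mulOp, adLaplacian_pow_mulOp_X_mul,
      adLaplacian_pow_mulOp_monomial_eq_zero ht, mul_zero, zero_add, LinearMap.smul_apply,
      Module.End.mul_apply, derivOp_apply, map_smul, smul_eq_mul,
      ← fischer_X_mul, ← ih ht, Nat.factorial_succ, mul_left_comm (monomial t c), ← mul_assoc (X i)]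
    push_cast
    ring

lemma fischer_mul_eq_fischer_adLaplacian {m : ℕ} {F : MvPolynomial κ ℝ} (hF : F.IsHomogeneous m)
    (H G : MvPolynomial κ ℝ) :
    2 ^ m * m.factorial * fischer (F * H) G =
      fischer H ((adLaplacian ^ m) (mulOp F) G) := by
  have hleft : fischer (F * H) G =
      ∑ s ∈ F.support, fischer (monomial s (coeff s F) * H) G := by
    conv_lhs => rw [F.as_sum, Finset.sum_mul, map_sum, LinearMap.sum_apply]
  have hright : (adLaplacian ^ m) (mulOp F) G =
      ∑ s ∈ F.support, (adLaplacian ^ m) (mulOp (monomial s (coeff s F))) G := by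
    conv_lhs => rw [F.as_sum, map_sum, map_sum, LinearMap.sum_apply]
  rw [hleft, hright, map_sum, Finset.mul_sum]
  exact Finset.sum_congr rfl fun s hs =>
    fischer_monomial_mul (degree_eq_of_mem_support hF hs) _ H G

lemma adLaplacian_pow_mulOp_apply_eq_C {m : ℕ} {F G : MvPolynomial κ ℝ} (hF : F.IsHomogeneous m)
    (hG : G.IsHomogeneous m) :
    (adLaplacian ^ m) (mulOp F) G = C (2 ^ m * m.factorial * fischer F G) := by
  classical
  ext s
  have hcoeff := fischer_mul_eq_fischer_adLaplacian hF (monomial s 1) G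
  rw [fischer_monomial_left, one_mul] at hcoeff
  refine mul_left_cancel₀ (multiFactorial_pos s).ne' (hcoeff.symm.trans ?_)
  rcases eq_or_ne s 0 with rfl | hs
  · rw [monomial_zero', C_1, mul_one, coeff_C, if_pos rfl]
    simp [multiFactorial]
  · have hdeg : m + s.degree ≠ m := by simpa [Finsupp.degree_eq_zero_iff] using hs
    rw [fischer_eq_zero_of_isHomogeneous (hF.mul (isHomogeneous_monomial 1 rfl)) hG hdeg,
      coeff_C, if_neg hs.symm, mul_zero, mul_zero]

end Laplacian

/-! ### Power traces of the antisymmetric part -/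

section MatrixDerivations

variable {A R ι : Type*} [CommRing A] [CommRing R] [Algebra A R] [Fintype ι]

lemma derivation_map_matrix_mul (D : Derivation A R R) (M N : Matrix ι ι R) :
    (M * N).map D = M.map D * N + M * N.map D := by
  ext i j
  simp only [Matrix.map_apply, Matrix.mul_apply, Matrix.add_apply, map_sum, Derivation.leibniz,
    smul_eq_mul, ← Finset.sum_add_distrib]
  exact Finset.sum_congr rfl fun k _ => by ring

variable [DecidableEq ι]

lemma derivation_map_matrix_pow_succ (D : Derivation A R R) (M : Matrix ι ι R) (m : ℕ) :
    (M ^ (m + 1)).map D = ∑ i ∈ Finset.range (m + 1), M ^ i * M.map D * M ^ (m - i) := by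
  induction m with
  | zero => simp
  | succ m ih =>
    rw [pow_succ' M (m + 1), derivation_map_matrix_mul, ih, Finset.sum_range_succ' _ (m + 1),
      Finset.mul_sum, add_comm]
    congr 1
    · refine Finset.sum_congr rfl fun i _ => ?_
      rw [Nat.add_sub_add_right, pow_succ' M i]
      simp only [Matrix.mul_assoc]
    · simp

lemma derivation_trace_pow_succ (D : Derivation A R R) (M : Matrix ι ι R) (m : ℕ) :
    D (trace (M ^ (m + 1))) = (m + 1 : ℕ) • trace (M ^ m * M.map D) := by
  have hmap : D (trace (M ^ (m + 1))) = trace ((M ^ (m + 1)).map D) := by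
    simp only [trace, map_sum, Matrix.diag_apply, Matrix.map_apply]
  rw [hmap, derivation_map_matrix_pow_succ, trace_sum,
    Finset.sum_congr rfl (g := fun _ => trace (M ^ m * M.map D)), Finset.sum_const,
    Finset.card_range]
  intro i hi
  rw [Matrix.trace_mul_comm, ← Matrix.mul_assoc, ← pow_add,
    Nat.sub_add_cancel (Finset.mem_range_succ_iff.1 hi)]

end MatrixDerivations

section PowerTraces

lemma sum_range_two_mul_add_one_of_odd_eq_zero {R : Type*} [AddCommMonoid R] (f : ℕ → R)
    (hf : ∀ i, f (2 * i + 1) = 0) (j : ℕ) :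
    ∑ i ∈ Finset.range (2 * j + 1), f i = ∑ i ∈ Finset.range (j + 1), f (2 * i) := by
  induction j with
  | zero => simp
  | succ j ih =>
    rw [Finset.sum_range_succ _ (j + 1), ← ih, mul_add, mul_one, Finset.sum_range_succ,
      Finset.sum_range_succ, hf, add_zero]

lemma sum_mul_eq_trace_mul_transpose {R ι : Type*} [CommRing R] [Fintype ι] (M N : Matrix ι ι R) :
    ∑ p, ∑ q, M p q * N p q = trace (M * Nᵀ) := by
  simp [trace, Matrix.mul_apply]

variable {ι : Type*} [Fintype ι] [DecidableEq ι]

/-- The antisymmetric part `g - gᵀ` (without factor `1/2`) of the generic matrix `g`. -/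
def genericAntisymm (ι : Type*) : Matrix ι ι (MvPolynomial (ι × ι) ℝ) :=
  mvPolynomialX ι ι ℝ - (mvPolynomialX ι ι ℝ)ᵀ

/-- The trace of the `2k`-th power of `g - gᵀ`, as a polynomial in the entries of `g`. -/
def evenPowerTrace (ι : Type*) [Fintype ι] [DecidableEq ι] (k : ℕ) : MvPolynomial (ι × ι) ℝ :=
  trace (genericAntisymm ι ^ (2 * k))

lemma transpose_genericAntisymm_pow (k : ℕ) :
    (genericAntisymm ι ^ k)ᵀ = (-1 : MvPolynomial (ι × ι) ℝ) ^ k • genericAntisymm ι ^ k := by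
  have htranspose : (genericAntisymm ι)ᵀ = (-1 : MvPolynomial (ι × ι) ℝ) • genericAntisymm ι := by
    simp [genericAntisymm]
  rw [Matrix.transpose_pow, htranspose, smul_pow]

lemma transpose_genericAntisymm_pow_odd (k : ℕ) :
    (genericAntisymm ι ^ (2 * k + 1))ᵀ = -genericAntisymm ι ^ (2 * k + 1) := by
  rw [transpose_genericAntisymm_pow, Odd.neg_one_pow (odd_two_mul_add_one k), neg_one_smul]

lemma trace_genericAntisymm_pow_odd (k : ℕ) : trace (genericAntisymm ι ^ (2 * k + 1)) = 0 := by
  have h := congrArg trace (transpose_genericAntisymm_pow_odd (ι := ι) k)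
  rw [trace_transpose, trace_neg] at h
  exact self_eq_neg.1 h

lemma genericAntisymm_map_pderiv {ι : Type*} [DecidableEq ι] (p q : ι) :
    (genericAntisymm ι).map (pderiv (R := ℝ) (p, q)) =
      Matrix.single p q 1 - Matrix.single q p 1 := by
  ext1 i j
  simp only [genericAntisymm, Matrix.map_apply, Matrix.sub_apply, Matrix.transpose_apply,
    mvPolynomialX_apply, map_sub, pderiv_X, Pi.single_apply, Matrix.single_apply, Prod.mk.injEq]
  simp only [eq_comm, and_comm]

lemma pderiv_evenPowerTrace_succ (j : ℕ) (p q : ι) :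
    pderiv (p, q) (evenPowerTrace ι (j + 1)) =
      (-(4 * (j + 1)) : ℝ) • (genericAntisymm ι ^ (2 * j + 1)) p q := by
  have hflip : (genericAntisymm ι ^ (2 * j + 1)) q p = -(genericAntisymm ι ^ (2 * j + 1)) p q := by
    simpa using congr($(transpose_genericAntisymm_pow_odd (ι := ι) j) p q)
  rw [evenPowerTrace, mul_add, derivation_trace_pow_succ, genericAntisymm_map_pderiv,
    Matrix.mul_sub, trace_sub, Matrix.trace_mul_single, Matrix.trace_mul_single, hflip,
    MulOpposite.op_one, one_smul, one_smul,
    ← Nat.cast_smul_eq_nsmul ℝ]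
  push_cast
  module

lemma gradPairing_evenPowerTrace (j l : ℕ) :
    gradPairing (evenPowerTrace ι (j + 1)) (evenPowerTrace ι (l + 1)) =
      (-(16 * (j + 1) * (l + 1)) : ℝ) • evenPowerTrace ι (j + l + 1) := by
  have htrace := sum_mul_eq_trace_mul_transpose (genericAntisymm ι ^ (2 * j + 1))
    (genericAntisymm ι ^ (2 * l + 1))
  rw [transpose_genericAntisymm_pow_odd, mul_neg, ← pow_add, trace_neg,
    show 2 * j + 1 + (2 * l + 1) = 2 * (j + l + 1) by ring] at htrace
  have hpoint (p q : ι) :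
      pderiv (p, q) (evenPowerTrace ι (j + 1)) * pderiv (p, q) (evenPowerTrace ι (l + 1)) =
        (16 * (j + 1) * (l + 1) : ℝ) •
          ((genericAntisymm ι ^ (2 * j + 1)) p q * (genericAntisymm ι ^ (2 * l + 1)) p q) := by
    rw [pderiv_evenPowerTrace_succ, pderiv_evenPowerTrace_succ, smul_mul_smul_comm]
    module
  calc gradPairing (evenPowerTrace ι (j + 1)) (evenPowerTrace ι (l + 1))
      = ∑ p, ∑ q, (16 * (j + 1) * (l + 1) : ℝ) •
          ((genericAntisymm ι ^ (2 * j + 1)) p q * (genericAntisymm ι ^ (2 * l + 1)) p q) :=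
        (gradPairing_apply _ _).trans <| (Fintype.sum_prod_type _).trans <|
          Finset.sum_congr rfl fun p _ => Finset.sum_congr rfl fun q _ => hpoint p q
    _ = (16 * (j + 1) * (l + 1) : ℝ) • ∑ p, ∑ q,
          (genericAntisymm ι ^ (2 * j + 1)) p q * (genericAntisymm ι ^ (2 * l + 1)) p q := by
        simp only [Finset.smul_sum]
    _ = _ := by
        rw [htrace, evenPowerTrace]
        module

lemma pderiv_genericAntisymm_pow_succ (m : ℕ) (p q : ι) :
    pderiv (p, q) ((genericAntisymm ι ^ (m + 1)) p q) = ∑ i ∈ Finset.range (m + 1),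
      ((genericAntisymm ι ^ i) p p * (genericAntisymm ι ^ (m - i)) q q -
        (genericAntisymm ι ^ i) p q * (genericAntisymm ι ^ (m - i)) p q) := by
  have hderiv := congr($(derivation_map_matrix_pow_succ (pderiv (R := ℝ) (p, q))
    (genericAntisymm ι) m) p q)
  rw [Matrix.map_apply, genericAntisymm_map_pderiv, Matrix.sum_apply] at hderiv
  rw [hderiv]
  refine Finset.sum_congr rfl fun i _ => ?_
  rw [Matrix.mul_sub, Matrix.sub_mul, Matrix.sub_apply]
  simp [Matrix.mul_apply, Matrix.single_apply, ite_and]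

lemma sum_pderiv_genericAntisymm_pow_succ (m : ℕ) :
    ∑ p, ∑ q, pderiv (p, q) ((genericAntisymm ι ^ (m + 1)) p q) = ∑ i ∈ Finset.range (m + 1),
      (trace (genericAntisymm ι ^ i) * trace (genericAntisymm ι ^ (m - i)) -
        (-1) ^ (m - i) * trace (genericAntisymm ι ^ m)) := by
  simp only [pderiv_genericAntisymm_pow_succ]
  simp_rw [Finset.sum_comm (s := Finset.univ) (t := Finset.range (m + 1))]
  refine Finset.sum_congr rfl fun i hi => ?_
  simp only [Finset.sum_sub_distrib]
  rw [sum_mul_eq_trace_mul_transpose, transpose_genericAntisymm_pow, Matrix.mul_smul, trace_smul,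
    ← pow_add, Nat.add_sub_cancel' (Finset.mem_range_succ_iff.1 hi), smul_eq_mul,
    ← Finset.sum_mul_sum]
  rfl

lemma laplacian_evenPowerTrace (j : ℕ) :
    laplacian (evenPowerTrace ι (j + 1)) = (-(4 * (j + 1)) : ℝ) •
      (∑ i ∈ Finset.range (j + 1), evenPowerTrace ι i * evenPowerTrace ι (j - i) -
        evenPowerTrace ι j) := by
  have hsign : ∑ i ∈ Finset.range (2 * j + 1), (-1 : MvPolynomial (ι × ι) ℝ) ^ (2 * j - i) = 1 := by
    refine (Finset.sum_range_reflect (fun k => (-1) ^ k) (2 * j + 1)).trans ?_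
    rw [neg_one_geom_sum, if_neg (Nat.not_even_two_mul_add_one j)]
  simp only [laplacian_apply, Fintype.sum_prod_type, pderiv_evenPowerTrace_succ,
    Derivation.map_smul]
  simp_rw [← Finset.smul_sum]
  rw [sum_pderiv_genericAntisymm_pow_succ, Finset.sum_sub_distrib, ← Finset.sum_mul, hsign,
    one_mul, sum_range_two_mul_add_one_of_odd_eq_zero _ fun i => by
      rw [trace_genericAntisymm_pow_odd, zero_mul]]
  simp only [evenPowerTrace, Nat.mul_sub]

end PowerTraces

/-! ### Radial restriction and alternants -/

section RadialRestriction

variable {n : ℕ}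

/-- Polynomials in the parameters `a` of `D(a)`. -/
abbrev RadialPoly (n : ℕ) := MvPolynomial (Fin n) ℝ

/-- Restriction of a polynomial in the entries of `g` to the matrices `g = D(a) / 2`, for which
`g - gᵀ = D(a)`. -/
def radialRestrict (n : ℕ) : EntryPoly n →ₐ[ℝ] RadialPoly n :=
  aeval fun pq => C (1 / 2) * blockD X pq.1 pq.2

lemma transpose_blockD {R : Type*} [CommRing R] (a : Fin n → R) : (blockD a)ᵀ = -blockD a := by
  ext ⟨i, r⟩ ⟨j, s⟩
  simp only [blockD, Matrix.transpose_apply, Matrix.of_apply, Matrix.neg_apply]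
  by_cases h : i = j
  · subst h
    fin_cases r <;> fin_cases s <;> simp
  · simp [h, Ne.symm h]

lemma blockD_sq {R : Type*} [CommRing R] (a : Fin n → R) :
    blockD a ^ 2 = Matrix.diagonal fun p => -a p.1 ^ 2 := by
  ext ⟨i, r⟩ ⟨j, s⟩
  rw [pow_two, Matrix.mul_apply, Fintype.sum_prod_type]
  simp only [blockD, Matrix.of_apply, Fin.sum_univ_two, Matrix.diagonal_apply, Prod.mk.injEq]
  rw [Finset.sum_eq_single i]
  · by_cases h : i = j
    · subst h
      fin_cases r <;> fin_cases s <;> simp <;> ring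
    · simp [h]
  · intro b _ hb
    simp [hb.symm]
  · simp

lemma det_blockD {R : Type*} [CommRing R] (a : Fin n → R) : (blockD a).det = ∏ j, a j ^ 2 := by
  have hdiag : blockD a = (Matrix.blockDiagonal fun j => a j • !![0, 1; -1, 0]).submatrix
      (Equiv.prodComm (Fin n) (Fin 2)) (Equiv.prodComm (Fin n) (Fin 2)) := by
    ext ⟨i, r⟩ ⟨j, s⟩
    fin_cases r <;> fin_cases s <;> simp [blockD, Matrix.blockDiagonal_apply]
  rw [hdiag, Matrix.det_submatrix_equiv_self, Matrix.det_blockDiagonal]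
  simp [Matrix.det_fin_two, pow_two]

lemma trace_blockD_pow_two_mul {R : Type*} [CommRing R] (a : Fin n → R) (k : ℕ) :
    trace (blockD a ^ (2 * k)) = 2 * (-1) ^ k * ∑ j, a j ^ (2 * k) := by
  rw [pow_mul, blockD_sq, Matrix.diagonal_pow, trace_diagonal, Fintype.sum_prod_type,
    Finset.mul_sum]
  refine Finset.sum_congr rfl fun j _ => ?_
  simp only [Pi.pow_apply, Fin.sum_univ_two]
  rw [neg_pow, ← pow_mul]
  ring

lemma map_genericAntisymm_radialRestrict :
    (genericAntisymm (BlockIdx n)).map (radialRestrict n) = blockD X := by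
  ext1 p q
  have hflip : blockD (X : Fin n → RadialPoly n) q p = -blockD X p q :=
    congr($(transpose_blockD X) p q)
  simp only [genericAntisymm, Matrix.map_apply, Matrix.sub_apply, Matrix.transpose_apply,
    mvPolynomialX_apply, map_sub, radialRestrict, aeval_X, hflip]
  rw [mul_neg, sub_neg_eq_add, ← add_mul, ← C_add, add_halves, C_1, one_mul]

lemma radialRestrict_evenPowerTrace (k : ℕ) :
    radialRestrict n (evenPowerTrace (BlockIdx n) k) =
      (2 * (-1) ^ k : ℝ) • psum (Fin n) ℝ (2 * k) := by
  have hpow : (genericAntisymm (BlockIdx n) ^ (2 * k)).map (radialRestrict n) =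
      blockD X ^ (2 * k) := by
    rw [← map_genericAntisymm_radialRestrict]
    exact map_pow (RingHom.mapMatrix (radialRestrict n).toRingHom) _ _
  have htrace : radialRestrict n (evenPowerTrace (BlockIdx n) k) = trace (blockD X ^ (2 * k)) := by
    rw [← hpow, evenPowerTrace]
    exact AddMonoidHom.map_trace (radialRestrict n) _
  rw [htrace, trace_blockD_pow_two_mul, psum, smul_eq_C_mul]
  simp [map_ofNat]

end RadialRestriction

section Alternants

variable {n : ℕ}

/-- The alternant `det (X_i ^ m_j)`. -/
def alternant (m : Fin n → ℕ) : RadialPoly n := (Matrix.of fun i j => X i ^ m j).det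

/-- The polynomial `Δ(X²)`, the square root of the Jacobian of the radial decomposition. -/
def vandermondeSq (n : ℕ) : RadialPoly n := vdm fun j => X j ^ 2

lemma alternant_eq_sum_monomial (m : Fin n → ℕ) :
    alternant m = ∑ σ : Equiv.Perm (Fin n), (Equiv.Perm.sign σ : ℤ) •
      monomial (Finsupp.equivFunOnFinite.symm fun i => m (σ.symm i)) (1 : ℝ) := by
  rw [alternant, Matrix.det_apply]
  refine Finset.sum_congr rfl fun σ _ => ?_
  rw [Units.smul_def]
  congr 1
  rw [monomial_eq, C_1, one_mul, Finsupp.prod_fintype _ _ (by simp)]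
  conv_rhs => rw [← Equiv.prod_comp σ]
  simp

lemma alternant_eq_zero_of_not_injective {m : Fin n → ℕ} {i j : Fin n} (hij : i ≠ j)
    (hm : m i = m j) : alternant m = 0 :=
  Matrix.det_zero_of_column_eq hij fun k => by simp [hm]

lemma laplacian_monomial {κ : Type*} [Fintype κ] (s : κ →₀ ℕ) :
    laplacian (monomial s (1 : ℝ)) =
      ∑ i, monomial (s - Finsupp.single i 2) ((s i : ℝ) * ((s i - 1 : ℕ) : ℝ)) := by
  classical
  rw [laplacian_apply]
  refine Finset.sum_congr rfl fun i _ => ?_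
  rw [pderiv_monomial, pderiv_monomial, tsub_tsub, ← Finsupp.single_add]
  simp

lemma laplacian_alternant (m : Fin n → ℕ) :
    laplacian (alternant m) = ∑ i, ((m i : ℝ) * ((m i - 1 : ℕ) : ℝ)) •
      alternant (Function.update m i (m i - 2)) := by
  simp only [alternant_eq_sum_monomial, map_sum, map_zsmul, laplacian_monomial]
  simp only [Finset.smul_sum]
  conv_rhs => rw [Finset.sum_comm]
  refine Finset.sum_congr rfl fun σ _ => ?_
  rw [← Equiv.sum_comp σ]
  refine Finset.sum_congr rfl fun i _ => ?_
  rw [smul_comm]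
  congr 1
  rw [smul_monomial, smul_eq_mul, mul_one]
  simp only [Finsupp.coe_equivFunOnFinite_symm, Equiv.symm_apply_apply]
  congr 2
  ext j
  rw [Finsupp.tsub_apply, Finsupp.single_apply]
  simp only [Finsupp.coe_equivFunOnFinite_symm, Function.update_apply, Equiv.symm_apply_eq]
  by_cases h : j = σ i
  · simp [h]
  · simp [h, Ne.symm h]

lemma vdm_eq_det_vandermonde {R : Type*} [CommRing R] (x : Fin n → R) :
    vdm x = (Matrix.vandermonde x).det := by
  rw [Matrix.det_vandermonde, vdm, Finset.prod_filter, ← Finset.univ_product_univ,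
    Finset.prod_product]
  refine Finset.prod_congr rfl fun i _ => ?_
  rw [← Finset.prod_filter]
  refine Finset.prod_congr ?_ fun _ _ => rfl
  ext j
  simp

lemma vdm_comp_perm {R : Type*} [CommRing R] (x : Fin n → R) (σ : Equiv.Perm (Fin n)) :
    (vdm fun j => x (σ j)) = (Equiv.Perm.sign σ : ℤ) * vdm x := by
  rw [vdm_eq_det_vandermonde, vdm_eq_det_vandermonde, ← Matrix.det_permute]
  rfl

lemma vandermondeSq_eq_alternant : vandermondeSq n = alternant fun j => 2 * (j : ℕ) := by
  rw [vandermondeSq, vdm_eq_det_vandermonde, alternant]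
  congr 1
  ext1 i j
  simp [Matrix.vandermonde_apply, pow_mul]

lemma laplacian_vandermondeSq : laplacian (vandermondeSq n) = 0 := by
  rw [vandermondeSq_eq_alternant, laplacian_alternant]
  refine Finset.sum_eq_zero fun i _ => ?_
  rcases Nat.eq_zero_or_pos i with hi | hi
  · simp [hi]
  · let j : Fin n := ⟨i - 1, by omega⟩
    have hji : j ≠ i := fun h => by
      have := congrArg Fin.val h
      simp only [j] at this
      omega
    rw [alternant_eq_zero_of_not_injective hji, smul_zero]
    rw [Function.update_of_ne hji, Function.update_self]
    simp only [j]
    omega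

end Alternants

section GradPairingVandermonde

lemma derivation_prod_of_eq_mul {A R β : Type*} [CommRing A] [CommRing R] [Algebra A R]
    (D : Derivation A R R) (S : Finset β) (f h : β → R) (hf : ∀ b ∈ S, D (f b) = f b * h b) :
    D (∏ b ∈ S, f b) = (∏ b ∈ S, f b) * ∑ b ∈ S, h b := by
  classical
  induction S using Finset.induction_on with
  | empty => simp
  | insert b S hb ih =>
    rw [Finset.prod_insert hb, Finset.sum_insert hb, Derivation.leibniz,
      ih fun c hc => hf c (Finset.mem_insert_of_mem hc), hf b (Finset.mem_insert_self _ _)]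
    simp only [smul_eq_mul]
    ring

lemma two_nsmul_sum_filter_lt_add_sum_diag {ι M : Type*} [LinearOrder ι] [Fintype ι]
    [AddCommMonoid M] (f : ι × ι → M) (hf : ∀ p, f p.swap = f p) :
    2 • ∑ p ∈ Finset.univ.filter (fun p : ι × ι => p.1 < p.2), f p + ∑ i, f (i, i) =
      ∑ p, f p := by
  have hgt : ∑ p ∈ Finset.univ.filter (fun p : ι × ι => p.2 < p.1), f p =
      ∑ p ∈ Finset.univ.filter (fun p : ι × ι => p.1 < p.2), f p := by
    simp only [Finset.sum_filter]
    rw [← Equiv.sum_comp (Equiv.prodComm ι ι)]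
    simp [hf]
  have hdiag : ∑ i, f (i, i) = ∑ p ∈ Finset.univ.filter (fun p : ι × ι => p.1 = p.2), f p := by
    simp [Finset.sum_filter, Fintype.sum_prod_type]
  rw [two_nsmul, hdiag]
  nth_rewrite 2 [← hgt]
  simp only [Finset.sum_filter, ← Finset.sum_add_distrib]
  refine Finset.sum_congr rfl fun p _ => ?_
  rcases lt_trichotomy p.1 p.2 with h | h | h
  · simp [h, h.ne, h.le.not_gt]
  · simp [h]
  · simp [h, h.ne', h.le.not_gt]

lemma two_nsmul_sum_filter_lt_geomSum₂ {n : ℕ} {R : Type*} [CommRing R] (x : Fin n → R) (j : ℕ) :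
    2 • ∑ p ∈ Finset.univ.filter (fun p : Fin n × Fin n => p.1 < p.2),
        ∑ i ∈ Finset.range (j + 1), x p.2 ^ i * x p.1 ^ (j - i) =
      ∑ i ∈ Finset.range (j + 1), (∑ k, x k ^ i) * ∑ k, x k ^ (j - i) -
        (j + 1) * ∑ k, x k ^ j := by
  have hsym (p : Fin n × Fin n) :
      ∑ i ∈ Finset.range (j + 1), x p.swap.2 ^ i * x p.swap.1 ^ (j - i) =
        ∑ i ∈ Finset.range (j + 1), x p.2 ^ i * x p.1 ^ (j - i) := by
    rw [← Finset.sum_range_reflect]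
    refine Finset.sum_congr rfl fun i hi => ?_
    have hij : i ≤ j := Finset.mem_range_succ_iff.1 hi
    rw [Nat.add_sub_cancel, Nat.sub_sub_self hij, mul_comm, Prod.snd_swap, Prod.fst_swap]
  have hdiag : ∑ k, ∑ i ∈ Finset.range (j + 1), x k ^ i * x k ^ (j - i) =
      (j + 1) * ∑ k, x k ^ j := by
    rw [Finset.mul_sum]
    refine Finset.sum_congr rfl fun k _ => ?_
    rw [Finset.sum_congr rfl fun i hi => by
      rw [← pow_add, Nat.add_sub_cancel' (Finset.mem_range_succ_iff.1 hi)]]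
    simp
  have hall : ∑ p : Fin n × Fin n, ∑ i ∈ Finset.range (j + 1), x p.2 ^ i * x p.1 ^ (j - i) =
      ∑ i ∈ Finset.range (j + 1), (∑ k, x k ^ i) * ∑ k, x k ^ (j - i) := by
    rw [Finset.sum_comm]
    refine Finset.sum_congr rfl fun i _ => ?_
    rw [Finset.sum_mul_sum, Fintype.sum_prod_type, Finset.sum_comm]
  rw [eq_sub_iff_add_eq, ← hdiag, ← hall]
  exact two_nsmul_sum_filter_lt_add_sum_diag _ hsym

variable {n : ℕ}

lemma pderiv_psum_succ (k : ℕ) (i : Fin n) :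
    pderiv i (psum (Fin n) ℝ (k + 1)) = (k + 1 : ℝ) • X i ^ k := by
  rw [psum, map_sum, Finset.sum_eq_single i]
  · rw [Derivation.leibniz_pow, pderiv_X_self, ← Nat.cast_smul_eq_nsmul ℝ, smul_eq_mul, mul_one,
      Nat.add_sub_cancel, Nat.cast_succ]
  · intro b _ hb
    simp [Derivation.leibniz_pow, pderiv_X_of_ne hb]
  · simp

lemma laplacian_psum (k : ℕ) :
    laplacian (psum (Fin n) ℝ (k + 2)) = ((k + 2) * (k + 1) : ℝ) • psum (Fin n) ℝ k := by
  rw [laplacian_apply, psum.eq_1 _ _ k, Finset.smul_sum]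
  refine Finset.sum_congr rfl fun i _ => ?_
  rw [pderiv_psum_succ, Derivation.map_smul, Derivation.leibniz_pow, pderiv_X_self,
    ← Nat.cast_smul_eq_nsmul ℝ, smul_eq_mul, mul_one, Nat.add_sub_cancel, smul_smul]
  push_cast
  ring_nf

/-- The Euler-type derivation `∑ X_i ^ k ∂_i`. -/
def powerDerivation (n k : ℕ) : Derivation ℝ (RadialPoly n) (RadialPoly n) :=
  mkDerivation ℝ fun i => X i ^ k

lemma gradPairing_psum_succ (F : RadialPoly n) (k : ℕ) :
    gradPairing F (psum (Fin n) ℝ (k + 1)) = (k + 1 : ℝ) • powerDerivation n k F := by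
  rw [gradPairing_apply, powerDerivation, mkDerivation_apply_eq_sum, Finset.smul_sum]
  refine Finset.sum_congr rfl fun i _ => ?_
  rw [pderiv_psum_succ, mul_smul_comm, mul_comm]

lemma powerDerivation_vandermondeSq (j : ℕ) :
    powerDerivation n (2 * j + 1) (vandermondeSq n) = vandermondeSq n *
      (∑ i ∈ Finset.range (j + 1), psum (Fin n) ℝ (2 * i) * psum (Fin n) ℝ (2 * (j - i)) -
        (j + 1) * psum (Fin n) ℝ (2 * j)) := by
  have hsum := two_nsmul_sum_filter_lt_geomSum₂ (fun i : Fin n => (X i : RadialPoly n) ^ 2) j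
  simp only [← pow_mul] at hsum
  simp only [psum]
  rw [← hsum, vandermondeSq, vdm, ← Finset.sum_nsmul]
  refine derivation_prod_of_eq_mul _ _ _ _ fun p _ => ?_
  have hgeom := (Commute.all (X p.2 ^ 2 : RadialPoly n) (X p.1 ^ 2)).geom_sum₂_mul (j + 1)
  simp only [Nat.add_sub_cancel, ← pow_mul] at hgeom
  rw [mul_smul_comm, mul_comm (X p.2 ^ 2 - X p.1 ^ 2), hgeom]
  simp only [powerDerivation, map_sub, Derivation.leibniz_pow, mkDerivation_X, smul_eq_mul,
    Nat.reduceSub, pow_one, nsmul_eq_mul]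
  push_cast
  ring

lemma gradPairing_vandermondeSq_psum (j : ℕ) :
    gradPairing (vandermondeSq n) (psum (Fin n) ℝ (2 * (j + 1))) = (2 * (j + 1) : ℝ) •
      (vandermondeSq n *
        (∑ i ∈ Finset.range (j + 1), psum (Fin n) ℝ (2 * i) * psum (Fin n) ℝ (2 * (j - i)) -
          (j + 1) * psum (Fin n) ℝ (2 * j))) := by
  rw [← powerDerivation_vandermondeSq, show 2 * (j + 1) = 2 * j + 1 + 1 by ring,
    gradPairing_psum_succ]
  push_cast
  ring_nf

end GradPairingVandermonde

/-! ### The radial part of the Laplacian -/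

section RadialPart

variable {n : ℕ}

/-- The algebra generated by the traces `Tr (g - gᵀ)^{2k}`. -/
def evenTraceAlgebra (n : ℕ) : Subalgebra ℝ (EntryPoly n) :=
  Algebra.adjoin ℝ (Set.range (evenPowerTrace (BlockIdx n)))

lemma evenPowerTrace_mem (k : ℕ) : evenPowerTrace (BlockIdx n) k ∈ evenTraceAlgebra n :=
  Algebra.subset_adjoin ⟨k, rfl⟩

lemma evenPowerTrace_zero :
    evenPowerTrace (BlockIdx n) 0 = algebraMap ℝ (EntryPoly n) (2 * n) := by
  simp [evenPowerTrace, Matrix.trace_one, mul_comm, map_ofNat]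

lemma gradPairing_psum_psum (j l : ℕ) :
    gradPairing (psum (Fin n) ℝ (j + 1)) (psum (Fin n) ℝ (l + 1)) =
      ((j + 1) * (l + 1) : ℝ) • psum (Fin n) ℝ (j + l) := by
  simp only [gradPairing_apply, pderiv_psum_succ, smul_mul_smul_comm, ← pow_add]
  rw [← Finset.smul_sum, psum]

/-- `gradPairing F G` is radial, with radial part `2 ∇ρ(F) · ∇ρ(G)`. -/
def HasRadialGradPairing (F G : EntryPoly n) : Prop :=
  gradPairing F G ∈ evenTraceAlgebra n ∧ radialRestrict n (gradPairing F G) =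
    (2 : ℝ) • gradPairing (radialRestrict n F) (radialRestrict n G)

lemma HasRadialGradPairing.symm {F G : EntryPoly n} (h : HasRadialGradPairing F G) :
    HasRadialGradPairing G F := by
  rwa [HasRadialGradPairing, gradPairing_comm G, gradPairing_comm (radialRestrict n G)]

lemma HasRadialGradPairing.of_forall_generator {F G : EntryPoly n} (hG : G ∈ evenTraceAlgebra n)
    (h : ∀ k, HasRadialGradPairing F (evenPowerTrace (BlockIdx n) k)) :
    HasRadialGradPairing F G := by
  induction hG using Algebra.adjoin_induction with
  | algebraMap r => simp [HasRadialGradPairing]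
  | add x y _ _ hx hy =>
    refine ⟨by rw [map_add]; exact add_mem hx.1 hy.1, ?_⟩
    rw [map_add, map_add, hx.2, hy.2, map_add, map_add, smul_add]
  | mul x y hx' hy' hx hy =>
    refine ⟨?_, ?_⟩
    · rw [Derivation.leibniz]
      exact add_mem (mul_mem hx' hy.1) (mul_mem hy' hx.1)
    · simp only [Derivation.leibniz, smul_eq_mul, map_add, map_mul, hx.2, hy.2, smul_add,
        mul_smul_comm]
  | mem x hx =>
    obtain ⟨k, rfl⟩ := hx
    exact h k

lemma hasRadialGradPairing_evenPowerTrace (j l : ℕ) :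
    HasRadialGradPairing (evenPowerTrace (BlockIdx n) j) (evenPowerTrace (BlockIdx n) l) := by
  have hzero (F : EntryPoly n) : HasRadialGradPairing F (evenPowerTrace (BlockIdx n) 0) := by
    rw [HasRadialGradPairing, evenPowerTrace_zero, AlgHom.commutes, Derivation.map_algebraMap,
      Derivation.map_algebraMap, map_zero, smul_zero]
    exact ⟨zero_mem _, rfl⟩
  rcases j with _ | j
  · exact (hzero _).symm
  rcases l with _ | l
  · exact hzero _
  rw [HasRadialGradPairing, gradPairing_evenPowerTrace]
  refine ⟨Subalgebra.smul_mem _ (evenPowerTrace_mem _) _, ?_⟩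
  have hpsum := gradPairing_psum_psum (n := n) (2 * j + 1) (2 * l + 1)
  simp only [map_smul, radialRestrict_evenPowerTrace]
  rw [Derivation.map_smul, gradPairing_comm (_ • _), Derivation.map_smul, gradPairing_comm,
    show 2 * (j + 1) = 2 * j + 1 + 1 by ring, show 2 * (l + 1) = 2 * l + 1 + 1 by ring, hpsum,
    show 2 * j + 1 + (2 * l + 1) = 2 * (j + l + 1) by ring]
  simp only [smul_smul]
  congr 1
  push_cast
  ring

lemma hasRadialGradPairing {F G : EntryPoly n} (hF : F ∈ evenTraceAlgebra n)
    (hG : G ∈ evenTraceAlgebra n) : HasRadialGradPairing F G :=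
  .of_forall_generator hG fun l => .symm <| .of_forall_generator hF fun j =>
    hasRadialGradPairing_evenPowerTrace l j

/-- The Laplacian of `F` is radial, with radial part `(4 ∇Δ · ∇ρ(F) + 2 Δ ∇²ρ(F)) / Δ`,
where `Δ = vandermondeSq n`. -/
def HasRadialLaplacian (F : EntryPoly n) : Prop :=
  laplacian F ∈ evenTraceAlgebra n ∧ vandermondeSq n * radialRestrict n (laplacian F) =
    (4 : ℝ) • gradPairing (vandermondeSq n) (radialRestrict n F) +
      (2 : ℝ) • (vandermondeSq n * laplacian (radialRestrict n F))

lemma laplacian_algebraMap {κ : Type*} [Fintype κ] (r : ℝ) :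
    laplacian (algebraMap ℝ (MvPolynomial κ ℝ) r) = 0 := by
  simp [laplacian_apply]

lemma hasRadialLaplacian_algebraMap (r : ℝ) :
    HasRadialLaplacian (algebraMap ℝ (EntryPoly n) r) := by
  rw [HasRadialLaplacian, AlgHom.commutes, laplacian_algebraMap, laplacian_algebraMap,
    Derivation.map_algebraMap]
  simp

lemma HasRadialLaplacian.mul {F G : EntryPoly n} (hF' : F ∈ evenTraceAlgebra n)
    (hG' : G ∈ evenTraceAlgebra n) (hF : HasRadialLaplacian F) (hG : HasRadialLaplacian G) :
    HasRadialLaplacian (F * G) := by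
  obtain ⟨hmem, hgrad⟩ := hasRadialGradPairing hF' hG'
  refine ⟨?_, ?_⟩
  · rw [laplacian_mul]
    exact add_mem (add_mem (mul_mem hF.1 hG') (Subalgebra.smul_mem _ hmem _)) (mul_mem hF' hG.1)
  · have h₁ := hF.2
    have h₂ := hG.2
    rw [laplacian_mul, map_add, map_add, map_smul, hgrad]
    simp only [laplacian_mul, map_mul, Derivation.leibniz, smul_eq_mul, smul_eq_C_mul]
      at h₁ h₂ ⊢
    rw [show (C 4 : RadialPoly n) = C 2 * C 2 by rw [← C_mul]; norm_num] at h₁ h₂ ⊢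
    linear_combination radialRestrict n G * h₁ + radialRestrict n F * h₂

lemma radialRestrict_sum_evenPowerTrace_mul (j : ℕ) :
    radialRestrict n (∑ i ∈ Finset.range (j + 1),
        evenPowerTrace (BlockIdx n) i * evenPowerTrace (BlockIdx n) (j - i)) =
      (4 * (-1) ^ j : ℝ) • ∑ i ∈ Finset.range (j + 1),
        psum (Fin n) ℝ (2 * i) * psum (Fin n) ℝ (2 * (j - i)) := by
  rw [map_sum, Finset.smul_sum]
  refine Finset.sum_congr rfl fun i hi => ?_
  rw [map_mul, radialRestrict_evenPowerTrace, radialRestrict_evenPowerTrace, smul_mul_smul_comm,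
    ← Nat.add_sub_cancel' (Finset.mem_range_succ_iff.1 hi), pow_add, Nat.add_sub_cancel_left]
  congr 1
  ring

lemma hasRadialLaplacian_evenPowerTrace (j : ℕ) :
    HasRadialLaplacian (evenPowerTrace (BlockIdx n) j) := by
  rcases j with _ | j
  · rw [evenPowerTrace_zero]
    exact hasRadialLaplacian_algebraMap _
  rw [HasRadialLaplacian, laplacian_evenPowerTrace]
  refine ⟨Subalgebra.smul_mem _ (sub_mem (sum_mem fun i _ =>
    mul_mem (evenPowerTrace_mem _) (evenPowerTrace_mem _)) (evenPowerTrace_mem _)) _, ?_⟩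
  have hlap := laplacian_psum (n := n) (2 * j)
  rw [map_smul, map_sub, radialRestrict_sum_evenPowerTrace_mul, radialRestrict_evenPowerTrace,
    radialRestrict_evenPowerTrace, Derivation.map_smul, gradPairing_vandermondeSq_psum, map_smul,
    show 2 * (j + 1) = 2 * j + 2 by ring, hlap]
  simp only [smul_eq_C_mul, map_mul, map_neg, map_add, map_natCast, map_ofNat, map_one, map_pow,
    Nat.cast_mul, Nat.cast_ofNat]
  ring

lemma hasRadialLaplacian {F : EntryPoly n} (hF : F ∈ evenTraceAlgebra n) :
    HasRadialLaplacian F := by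
  induction hF using Algebra.adjoin_induction with
  | algebraMap r => exact hasRadialLaplacian_algebraMap r
  | add x y _ _ hx hy =>
    refine ⟨by rw [map_add]; exact add_mem hx.1 hy.1, ?_⟩
    simp only [map_add, mul_add, hx.2, hy.2, smul_add]
    abel
  | mul x y hx' hy' hx hy => exact hx.mul hx' hy' hy
  | mem x hx =>
    obtain ⟨j, rfl⟩ := hx
    exact hasRadialLaplacian_evenPowerTrace j

/-- The operator `T'` is the conjugate by `Δ = vandermondeSq n` of the radial part of `T`. -/
def Intertwines (T : PolyOp (BlockIdx n × BlockIdx n)) (T' : PolyOp (Fin n)) : Prop :=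
  ∀ G ∈ evenTraceAlgebra n, T G ∈ evenTraceAlgebra n ∧
    vandermondeSq n * radialRestrict n (T G) = T' (vandermondeSq n * radialRestrict n G)

section

variable {S T : PolyOp (BlockIdx n × BlockIdx n)} {S' T' : PolyOp (Fin n)}

lemma Intertwines.mul (hS : Intertwines S S') (hT : Intertwines T T') :
    Intertwines (S * T) (S' * T') := fun G hG => by
  obtain ⟨hTG, heqT⟩ := hT G hG
  obtain ⟨hSTG, heqS⟩ := hS _ hTG
  exact ⟨hSTG, by rw [Module.End.mul_apply, heqS, heqT, Module.End.mul_apply]⟩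

lemma Intertwines.sub (hS : Intertwines S S') (hT : Intertwines T T') :
    Intertwines (S - T) (S' - T') := fun G hG => by
  obtain ⟨hTG, heqT⟩ := hT G hG
  obtain ⟨hSG, heqS⟩ := hS G hG
  exact ⟨sub_mem hSG hTG, by
    rw [LinearMap.sub_apply, map_sub, mul_sub, heqS, heqT, LinearMap.sub_apply]⟩

lemma intertwines_mulOp {F : EntryPoly n} (hF : F ∈ evenTraceAlgebra n) :
    Intertwines (mulOp F) (mulOp (radialRestrict n F)) := fun G hG =>
  ⟨mul_mem hF hG, by rw [mulOp_apply, mulOp_apply, map_mul, mul_left_comm]⟩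

lemma intertwines_laplacian :
    Intertwines (n := n) laplacian ((2 : ℝ) • laplacian) := fun G hG => by
  obtain ⟨hmem, heq⟩ := hasRadialLaplacian hG
  refine ⟨hmem, ?_⟩
  rw [heq, LinearMap.smul_apply, laplacian_mul, laplacian_vandermondeSq, zero_mul]
  module

lemma Intertwines.adLaplacian_pow (hT : Intertwines T T') (m : ℕ) :
    Intertwines ((adLaplacian ^ m) T) ((2 : ℝ) ^ m • (adLaplacian ^ m) T') := by
  induction m with
  | zero => simpa using hT
  | succ m ih =>
    have h := (intertwines_laplacian.mul ih).sub (ih.mul intertwines_laplacian)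
    rw [pow_succ' adLaplacian, Module.End.mul_apply, pow_succ' adLaplacian, Module.End.mul_apply,
      adLaplacian_apply, adLaplacian_apply]
    convert h using 1
    simp only [smul_mul_assoc, mul_smul_comm, smul_sub, smul_smul, pow_succ, mul_comm]

end

lemma isHomogeneous_radialRestrict {F : EntryPoly n} {m : ℕ} (hF : F.IsHomogeneous m) :
    (radialRestrict n F).IsHomogeneous m := by
  rw [radialRestrict, ← one_mul m]
  refine hF.aeval _ ?_
  rintro ⟨⟨i, r⟩, ⟨j, s⟩⟩
  refine IsHomogeneous.C_mul ?_ _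
  simp only [blockD, Matrix.of_apply]
  split_ifs
  · fin_cases r <;> fin_cases s <;>
      simp [isHomogeneous_X, isHomogeneous_zero, IsHomogeneous.neg]
  · exact isHomogeneous_zero _ _ _

theorem fischer_mul_fischer_vandermondeSq {m : ℕ} {F G : EntryPoly n}
    (hF : F ∈ evenTraceAlgebra n) (hG : G ∈ evenTraceAlgebra n) (hFm : F.IsHomogeneous m)
    (hGm : G.IsHomogeneous m) :
    fischer F G * fischer (vandermondeSq n) (vandermondeSq n) =
      2 ^ m * fischer (vandermondeSq n * radialRestrict n F)
        (vandermondeSq n * radialRestrict n G) := by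
  have hint := congrArg (fischer (vandermondeSq n))
    (((intertwines_mulOp hF).adLaplacian_pow m) G hG).2
  rw [adLaplacian_pow_mulOp_apply_eq_C hFm hGm, LinearMap.smul_apply, map_smul,
    ← fischer_mul_eq_fischer_adLaplacian (isHomogeneous_radialRestrict hFm),
    show (C (2 ^ m * m.factorial * fischer F G) : EntryPoly n) = algebraMap ℝ _ _ from rfl,
    AlgHom.commutes, mul_comm (vandermondeSq n) (algebraMap _ _ _), ← Algebra.smul_def, map_smul,
    mul_comm (radialRestrict n F), smul_eq_mul, smul_eq_mul] at hint
  have hne : (2 : ℝ) ^ m * m.factorial ≠ 0 := by positivity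
  apply mul_left_cancel₀ hne
  linear_combination hint

end RadialPart

/-! ### The Cauchy identity -/

section Cauchy

variable {R : Type*} [CommRing R] {n : ℕ}

lemma vdm_succ (x : Fin (n + 1) → R) :
    vdm x = (∏ i : Fin n, (x i.succ - x 0)) * vdm (fun i : Fin n => x i.succ) := by
  rw [vdm_eq_det_vandermonde, vdm_eq_det_vandermonde, Matrix.det_vandermonde,
    Matrix.det_vandermonde, Fin.prod_univ_succ]
  simp only [Fin.prod_Ioi_zero, Fin.prod_Ioi_succ]

lemma map_vdm {S : Type*} [CommRing S] (f : R →+* S) (x : Fin n → R) :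
    f (vdm x) = vdm fun i => f (x i) := by
  simp only [vdm, map_prod, map_sub]

/-- The degree `n(n-1)/2` of the Vandermonde product, encoded as its number of factors. -/
def vdmDegree (n : ℕ) : ℕ := (Finset.univ.filter fun p : Fin n × Fin n => p.1 < p.2).card

lemma vdm_mul_right (x : Fin n → R) (c : R) :
    (vdm fun i => x i * c) = vdm x * c ^ vdmDegree n := by
  simp only [vdm, vdmDegree, ← sub_mul, Finset.prod_mul_distrib, Finset.prod_const]

section CauchyDeterminant

variable {x y : Fin (n + 1) → R} {u : Fin (n + 1) → Fin (n + 1) → R}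

lemma det_cauchy_reduce_rows (hu : ∀ i j, u i j * (1 - x i * y j) = 1) :
    (Matrix.of u).det = (∏ i : Fin n, (x i.succ - x 0)) * (∏ j, u 0 j) *
      (Matrix.of (Fin.cons 1 fun i j => y j * u i.succ j : Fin (n + 1) → _)).det := by
  set N : Matrix (Fin (n + 1)) (Fin (n + 1)) R :=
    Matrix.of (Fin.cons 1 fun i j => y j * u i.succ j : Fin (n + 1) → _)
  let r : Fin (n + 1) → R := Fin.cons 1 fun i => x i.succ - x 0
  have hdiff (i j) : u i j - u 0 j = (x i - x 0) * y j * u i j * u 0 j := by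
    linear_combination (-u i j) * hu 0 j + (u 0 j) * hu i j
  have hrows : (Matrix.of u).det = (Matrix.of fun i j => r i * (u 0 j * N i j)).det := by
    refine Matrix.det_eq_of_forall_row_eq_smul_add_const (Fin.cons 0 fun _ => 1) 0
      (Fin.cons_zero _ _) fun i j => ?_
    refine Fin.cases (by simp [N, r]) (fun i => ?_) i
    simp only [N, r, Matrix.of_apply, Fin.cons_succ, Fin.cons_zero, Pi.one_apply]
    linear_combination hdiff i.succ j
  have hr : ∏ i, r i = ∏ i : Fin n, (x i.succ - x 0) := by simp [r, Fin.prod_univ_succ]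
  have hcol := Matrix.det_mul_row (u 0) N
  have hrow := Matrix.det_mul_column r (Matrix.of fun i j => u 0 j * N i j)
  simp only [Matrix.of_apply] at hrow
  rw [hrows, hrow, hcol, hr, mul_assoc]

lemma det_cauchy_reduce_columns (hu : ∀ i j, u i j * (1 - x i * y j) = 1) :
    (Matrix.of (Fin.cons 1 fun i j => y j * u i.succ j : Fin (n + 1) → _)).det =
      (∏ i : Fin n, u i.succ 0) * (∏ j : Fin n, (y j.succ - y 0)) *
        (Matrix.of fun i j : Fin n => u i.succ j.succ).det := by
  set N : Matrix (Fin (n + 1)) (Fin (n + 1)) R :=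
    Matrix.of (Fin.cons 1 fun i j => y j * u i.succ j : Fin (n + 1) → _)
  let N' : Matrix (Fin (n + 1)) (Fin (n + 1)) R :=
    Matrix.of fun i => Fin.cons (N i 0) fun j => N i j.succ - N i 0
  have hcols : N.det = N'.det := by
    rw [← Matrix.det_transpose, ← Matrix.det_transpose N']
    refine Matrix.det_eq_of_forall_row_eq_smul_add_const (Fin.cons 0 fun _ => 1) 0
      (Fin.cons_zero _ _) fun i j => ?_
    refine Fin.cases (by simp [N']) (fun i => by simp [N']) i
  have hfirst : N'.det =
      (Matrix.of fun i j : Fin n => u i.succ 0 * ((y j.succ - y 0) * u i.succ j.succ)).det := by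
    have hcorner : N' 0 0 = 1 := by simp [N', N]
    have hrow (j : Fin n) : N' 0 j.succ = 0 := by simp [N', N]
    rw [Matrix.det_succ_row_zero, Fin.sum_univ_succ,
      Finset.sum_eq_zero fun j _ => by rw [hrow j, mul_zero, zero_mul], hcorner]
    simp only [Fin.val_zero, pow_zero, one_mul, add_zero]
    congr 1
    ext i j
    simp only [N', N, Matrix.submatrix_apply, Matrix.of_apply, Fin.zero_succAbove, Fin.cons_succ]
    linear_combination (-(u i.succ j.succ) * y j.succ) * hu i.succ 0 +
      (u i.succ 0 * y 0) * hu i.succ j.succ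
  have hcol := Matrix.det_mul_row (fun j => y (Fin.succ j) - y 0)
    (Matrix.of fun i j : Fin n => u i.succ j.succ)
  have hrow := Matrix.det_mul_column (fun i : Fin n => u i.succ 0)
    (Matrix.of fun i j : Fin n => (y j.succ - y 0) * u i.succ j.succ)
  simp only [Matrix.of_apply] at hcol hrow
  rw [hcols, hfirst, hrow, hcol, mul_assoc]

end CauchyDeterminant

lemma det_cauchy (x y : Fin n → R) (u : Fin n → Fin n → R)
    (hu : ∀ i j, u i j * (1 - x i * y j) = 1) :
    (Matrix.of u).det = vdm x * vdm y * ∏ i, ∏ j, u i j := by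
  induction n with
  | zero => simp [vdm]
  | succ n ih =>
    rw [det_cauchy_reduce_rows hu, det_cauchy_reduce_columns hu,
      ih (fun i => x i.succ) (fun j => y j.succ) (fun i j => u i.succ j.succ)
        (fun i j => hu i.succ j.succ), vdm_succ x, vdm_succ y,
      Fin.prod_univ_succ fun i => ∏ j, u i j]
    simp only [Fin.prod_univ_succ, Finset.prod_mul_distrib]
    ring

/-- The formal geometric series `∑ₖ xᵏ Tᵏ = (1 - xT)⁻¹`. -/
def geomSeries (x : R) : PowerSeries R := PowerSeries.mk fun k => x ^ k

lemma geomSeries_mul_one_sub (x : R) :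
    geomSeries x * (1 - PowerSeries.C x * PowerSeries.X) = 1 := by
  simpa [PowerSeries.rescale_mk, PowerSeries.rescale_X, geomSeries] using
    congrArg (PowerSeries.rescale x) (PowerSeries.mk_one_mul_one_sub_eq_one R)

lemma coeff_prod_geomSeries {ι : Type*} [Fintype ι] [DecidableEq ι] (x : ι → R) (d : ℕ) :
    PowerSeries.coeff d (∏ i, geomSeries (x i)) = completeHomog d x := by
  rw [PowerSeries.coeff_prod, completeHomog]
  refine Finset.sum_bij' (fun l _ => (l : ι → ℕ)) (fun l _ => Finsupp.equivFunOnFinite.symm l)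
    (fun l hl => ?_) (fun l hl => ?_) (fun l _ => by ext; rfl) (fun l _ => rfl)
    (fun l _ => by simp [geomSeries])
  · simpa [Finset.mem_piAntidiag] using (Finset.mem_finsuppAntidiag.1 hl).1
  · simpa [Finset.mem_finsuppAntidiag] using (Finset.mem_piAntidiag.1 hl).1

/-- The coefficient of `T ^ (d + n(n-1)/2)` in the Cauchy determinant `det (1 - T xᵢ yⱼ)⁻¹`. -/
theorem vdm_mul_vdm_mul_completeHomog (x y : Fin n → R) (d : ℕ) :
    vdm x * vdm y * completeHomog d (fun c : Fin n × Fin n => x c.1 * y c.2) =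
      ∑ σ : Equiv.Perm (Fin n), (Equiv.Perm.sign σ : ℤ) •
        completeHomog (d + vdmDegree n) fun i => x (σ i) * y i := by
  have hdet := det_cauchy (fun i => PowerSeries.C (x i) * PowerSeries.X)
    (fun j => PowerSeries.C (y j)) (fun i j => geomSeries (x i * y j)) fun i j => by
      rw [mul_right_comm (PowerSeries.C (x i)), ← map_mul, geomSeries_mul_one_sub]
  rw [vdm_mul_right, ← map_vdm, ← map_vdm,
    ← Fintype.prod_prod_type' fun i j => geomSeries (x i * y j)] at hdet
  have hprod : PowerSeries.C (vdm x) * PowerSeries.X ^ vdmDegree n * PowerSeries.C (vdm y) *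
        ∏ c : Fin n × Fin n, geomSeries (x c.1 * y c.2) =
      PowerSeries.C (vdm x * vdm y) * (∏ c : Fin n × Fin n, geomSeries (x c.1 * y c.2)) *
        PowerSeries.X ^ vdmDegree n := by
    rw [map_mul]
    ring
  have hcoeff := congrArg (PowerSeries.coeff (d + vdmDegree n)) hdet
  rw [hprod, PowerSeries.coeff_mul_X_pow, PowerSeries.coeff_C_mul, coeff_prod_geomSeries,
    Matrix.det_apply, map_sum] at hcoeff
  rw [← hcoeff]
  refine Finset.sum_congr rfl fun σ _ => ?_
  rw [Units.smul_def, map_zsmul, ← coeff_prod_geomSeries]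
  rfl

end Cauchy

/-! ### The normal form of antisymmetric matrices -/

section SkewAdjoint

variable {E : Type*} [NormedAddCommGroup E] [InnerProductSpace ℝ E]

/-- `T` is skew-adjoint: `⟪T x, y⟫ = -⟪x, T y⟫`. -/
def IsSkewAdjoint (T : E →ₗ[ℝ] E) : Prop := ∀ x y, inner ℝ (T x) y = -inner ℝ x (T y)

variable {T : E →ₗ[ℝ] E}

lemma IsSkewAdjoint.inner_self_map (hT : IsSkewAdjoint T) (x : E) : inner ℝ x (T x) = 0 := by
  have h := hT x x
  rw [real_inner_comm] at h
  linarith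

lemma IsSkewAdjoint.isSymmetric_comp_self (hT : IsSkewAdjoint T) : (T ∘ₗ T).IsSymmetric :=
  fun x y => by rw [LinearMap.comp_apply, LinearMap.comp_apply, hT, hT, neg_neg]

lemma IsSkewAdjoint.map_mem_orthogonal (hT : IsSkewAdjoint T) {U : Submodule ℝ E}
    (hU : U ≤ U.comap T) {x : E} (hx : x ∈ Uᗮ) : T x ∈ Uᗮ := by
  rw [Submodule.mem_orthogonal] at hx ⊢
  intro u hu
  rw [← neg_eq_iff_eq_neg.2 (hT u x), hx _ (hU hu), neg_zero]

/-- The plane is spanned by an eigenvector of `T²` and its image under `T`. -/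
lemma IsSkewAdjoint.exists_orthonormal_pair [FiniteDimensional ℝ E] [Nontrivial E]
    (hT : IsSkewAdjoint T) (hinj : Function.Injective T) :
    ∃ (c : ℝ) (v w : E), 0 < c ∧ Orthonormal ℝ ![v, w] ∧ T v = -c • w ∧ T w = c • v := by
  have hsym := hT.isSymmetric_comp_self
  let i₀ : Fin (Module.finrank ℝ E) := ⟨0, Module.finrank_pos⟩
  set w := hsym.eigenvectorBasis rfl i₀
  have hw : ‖w‖ = 1 := (hsym.eigenvectorBasis rfl).norm_eq_one _
  obtain ⟨μ, hμ⟩ : ∃ μ : ℝ, T (T w) = μ • w := ⟨_, hsym.apply_eigenvectorBasis rfl i₀⟩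
  have hw₀ : w ≠ 0 := norm_ne_zero_iff.1 (by rw [hw]; exact one_ne_zero)
  set c := ‖T w‖ with hc
  have hc₀ : 0 < c := norm_pos_iff.2 ((map_ne_zero_iff T hinj).2 hw₀)
  have hμc : μ = -c ^ 2 := by
    have h := hT (T w) w
    rwa [hμ, inner_smul_left, real_inner_self_eq_norm_sq, real_inner_self_eq_norm_sq, hw, ← hc,
      one_pow, mul_one] at h
  have hnorm : ‖c⁻¹ • T w‖ = 1 := by
    rw [norm_smul, ← hc, norm_inv, Real.norm_of_nonneg hc₀.le, inv_mul_cancel₀ hc₀.ne']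
  have hperp : inner ℝ (c⁻¹ • T w) w = 0 := by
    rw [inner_smul_left, real_inner_comm, hT.inner_self_map, mul_zero]
  refine ⟨c, c⁻¹ • T w, w, hc₀, ?_, ?_, ?_⟩
  · simp [orthonormal_vecCons_iff, hw, hnorm, hperp]
  · rw [map_smul, hμ, hμc, smul_smul]
    congr 1
    field_simp
  · rw [smul_smul, mul_inv_cancel₀ hc₀.ne', one_smul]

lemma orthonormal_finCons {n : ℕ} {ι : Type*} {e : ι → E} {b : Fin n → ι → E}
    (he : Orthonormal ℝ e) (hb : Orthonormal ℝ fun p : Fin n × ι => b p.1 p.2)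
    (heb : ∀ s i t, inner ℝ (e s) (b i t) = 0) :
    Orthonormal ℝ fun p : Fin (n + 1) × ι => (Fin.cons e b : Fin (n + 1) → ι → E) p.1 p.2 := by
  refine ⟨fun ⟨i, s⟩ => ?_, fun ⟨i, s⟩ ⟨j, t⟩ hij => ?_⟩
  · cases i using Fin.cases with
    | zero => exact he.1 s
    | succ i => exact hb.1 (i, s)
  · cases i using Fin.cases with
    | zero =>
      cases j using Fin.cases with
      | zero => exact he.2 fun h => hij (congrArg (Prod.mk 0) h)
      | succ j => exact heb s j t
    | succ i =>
      cases j using Fin.cases with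
      | zero => exact (real_inner_comm _ _).trans (heb t i s)
      | succ j =>
        refine hb.2 (i := (i, s)) (j := (j, t)) fun h => hij ?_
        rw [Prod.mk.injEq] at h ⊢
        exact ⟨congrArg Fin.succ h.1, h.2⟩

theorem IsSkewAdjoint.exists_orthonormal_blocks {n : ℕ} [FiniteDimensional ℝ E]
    (hT : IsSkewAdjoint T) (hinj : Function.Injective T) (hdim : Module.finrank ℝ E = 2 * n) :
    ∃ (b : Fin n → Fin 2 → E) (a : Fin n → ℝ), (Orthonormal ℝ fun p : BlockIdx n => b p.1 p.2) ∧
      ∀ i, 0 < a i ∧ T (b i 0) = -a i • b i 1 ∧ T (b i 1) = a i • b i 0 := by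
  induction n generalizing E with
  | zero =>
    exact ⟨Fin.elim0, Fin.elim0, ⟨fun p => p.1.elim0, fun p => p.1.elim0⟩, fun i => i.elim0⟩
  | succ n ih =>
    have : Nontrivial E := Module.nontrivial_of_finrank_pos (R := ℝ) (by omega)
    obtain ⟨c, v, w, hc, hvw, hv, hw⟩ := hT.exists_orthonormal_pair hinj
    set U := Submodule.span ℝ (Set.range ![v, w])
    have hvU : v ∈ U := Submodule.subset_span ⟨0, rfl⟩
    have hwU : w ∈ U := Submodule.subset_span ⟨1, rfl⟩
    have hTU : U ≤ U.comap T := by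
      refine Submodule.span_le.2 ?_
      rintro _ ⟨i, rfl⟩
      fin_cases i
      · exact (congrArg (· ∈ U) hv).mpr (U.smul_mem _ hwU)
      · exact (congrArg (· ∈ U) hw).mpr (U.smul_mem _ hvU)
    have hU : Module.finrank ℝ U = 2 := by simpa using finrank_span_eq_card hvw.linearIndependent
    have hdim' : Module.finrank ℝ Uᗮ = 2 * n := by
      have := Submodule.finrank_add_finrank_orthogonal U
      omega
    obtain ⟨b, a, hb, hab⟩ := ih (T := T.restrict fun x hx => hT.map_mem_orthogonal hTU hx)
      (fun x y => hT x y) (fun x y h => Subtype.ext (hinj (congrArg Subtype.val h))) hdim'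
    refine ⟨Fin.cons ![v, w] fun i s => b i s, Fin.cons c a,
      orthonormal_finCons hvw (hb.comp_linearIsometry Uᗮ.subtypeₗᵢ) fun s i t =>
        (Submodule.mem_orthogonal _ _).1 (b i t).2 _ (Submodule.subset_span ⟨s, rfl⟩), fun i => ?_⟩
    cases i using Fin.cases with
    | zero => exact ⟨hc, hv, hw⟩
    | succ i =>
      exact ⟨(hab i).1, congrArg Subtype.val (hab i).2.1, congrArg Subtype.val (hab i).2.2⟩

end SkewAdjoint

section MatrixNormalForm

lemma isSkewAdjoint_toEuclideanLin {ι : Type*} [Fintype ι] [DecidableEq ι] {A : Matrix ι ι ℝ}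
    (hA : Aᵀ = -A) : IsSkewAdjoint (Matrix.toEuclideanLin A) := by
  intro x y
  rw [← LinearMap.adjoint_inner_right, ← Matrix.toEuclideanLin_conjTranspose_eq_adjoint,
    Matrix.conjTranspose_eq_transpose_of_trivial, hA, map_neg, LinearMap.neg_apply, inner_neg_right]

lemma injective_toEuclideanLin {ι : Type*} [Fintype ι] [DecidableEq ι] {A : Matrix ι ι ℝ}
    (hA : A.det ≠ 0) : Function.Injective (Matrix.toEuclideanLin A) := fun _ _ hxy =>
  WithLp.ofLp_injective 2 <| Matrix.mulVec_injective_of_isUnit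
    ((Matrix.isUnit_iff_isUnit_det A).2 (isUnit_iff_ne_zero.2 hA)) (congrArg WithLp.ofLp hxy)

theorem exists_conj_blockD {n : ℕ} {A : Matrix (BlockIdx n) (BlockIdx n) ℝ} (hA : Aᵀ = -A)
    (hdet : A.det ≠ 0) :
    ∃ (k : Matrix (BlockIdx n) (BlockIdx n) ℝ) (a : Fin n → ℝ),
      kᵀ * k = 1 ∧ (∀ i, 0 < a i) ∧ A = k * blockD a * kᵀ := by
  have hdim : Module.finrank ℝ (EuclideanSpace ℝ (BlockIdx n)) = 2 * n := by simp [mul_comm]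
  obtain ⟨b, a, hb, hab⟩ := (isSkewAdjoint_toEuclideanLin hA).exists_orthonormal_blocks
    (injective_toEuclideanLin hdet) hdim
  let k : Matrix (BlockIdx n) (BlockIdx n) ℝ := Matrix.of fun p q => b q.1 q.2 p
  have hk : kᵀ * k = 1 := by
    ext p q
    rw [Matrix.one_apply, ← (orthonormal_iff_ite.1 hb) p q, PiLp.inner_apply, Matrix.mul_apply]
    exact Finset.sum_congr rfl fun r _ => mul_comm _ _
  have hAk : A * k = k * blockD a := by
    ext p ⟨j, s⟩
    have hcol : (A * k) p (j, s) = Matrix.toEuclideanLin A (b j s) p := rfl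
    rw [hcol]
    fin_cases s
    · exact (congrArg (· p) (hab j).2.1).trans
        ((neg_mul _ _).trans (mul_blockD_zero k a p j).symm)
    · exact (congrArg (· p) (hab j).2.2).trans (mul_blockD_one k a p j).symm
  refine ⟨k, a, hk, fun i => (hab i).1, ?_⟩
  rw [← hAk, Matrix.mul_assoc, mul_eq_one_comm.1 hk, Matrix.mul_one]

end MatrixNormalForm

/-! ### Evaluation of radial polynomials -/

section SymmetricPolynomials

variable {σ R : Type*} [Fintype σ] [CommRing R] [Algebra ℚ R]

lemma esymm_mem_adjoin_psum (k : ℕ) : esymm σ R k ∈ Algebra.adjoin R (Set.range (psum σ R)) := by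
  set S := Algebra.adjoin R (Set.range (psum σ R))
  have hsign (j : ℕ) : (-1 : MvPolynomial σ R) ^ j ∈ S := pow_mem (neg_mem (one_mem _)) _
  induction k using Nat.strong_induction_on with
  | _ k ih =>
    rcases k with _ | k
    · simpa only [esymm_zero] using one_mem S
    have hinv : algebraMap R (MvPolynomial σ R) (algebraMap ℚ R (k + 1 : ℚ)⁻¹) *
        (((k + 1 : ℕ) : MvPolynomial σ R) * esymm σ R (k + 1)) = esymm σ R (k + 1) := by
      have hcast : ((k + 1 : ℕ) : MvPolynomial σ R) =
          algebraMap R _ (algebraMap ℚ R (k + 1 : ℚ)) := by simp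
      rw [← mul_assoc, hcast, ← map_mul, ← map_mul, inv_mul_cancel₀ (by positivity), map_one,
        map_one, one_mul]
    rw [← hinv, mul_esymm_eq_sum]
    exact mul_mem (S.algebraMap_mem _) <| mul_mem (hsign _) <| sum_mem fun a ha =>
      mul_mem (mul_mem (hsign _) (ih _ (Finset.mem_filter.1 ha).2)) (Algebra.subset_adjoin ⟨_, rfl⟩)

theorem adjoin_range_psum :
    Algebra.adjoin R (Set.range (psum σ R)) = symmetricSubalgebra σ R := by
  refine le_antisymm (Algebra.adjoin_le ?_) fun p hp => ?_
  · rintro _ ⟨k, rfl⟩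
    exact psum_isSymmetric _ _ _
  · obtain ⟨q, hq⟩ := esymmAlgHom_surjective (σ := σ) R (n := Fintype.card σ) le_rfl ⟨p, hp⟩
    have hq' : aeval (fun i : Fin (Fintype.card σ) => esymm σ R (i + 1)) q = p :=
      (esymmAlgHom_apply q).symm.trans (congrArg Subtype.val hq)
    rw [← hq', aeval_def, eval₂_eq']
    exact sum_mem fun s _ => mul_mem (Subalgebra.algebraMap_mem _ _)
      (prod_mem fun i _ => pow_mem (esymm_mem_adjoin_psum _) _)

end SymmetricPolynomials

section RadialEvaluation

variable {n : ℕ}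

/-- The Chevalley restriction theorem for the orthogonal group acting on antisymmetric matrices. -/
theorem map_radialRestrict_evenTraceAlgebra :
    (evenTraceAlgebra n).map (radialRestrict n) =
      (symmetricSubalgebra (Fin n) ℝ).map (expand 2) := by
  have hexpand (k : ℕ) : expand 2 (psum (Fin n) ℝ k) = psum (Fin n) ℝ (2 * k) := by
    simp only [psum, map_sum, map_pow, expand_X, ← pow_mul]
  rw [← adjoin_range_psum, evenTraceAlgebra, AlgHom.map_adjoin, AlgHom.map_adjoin]
  refine le_antisymm (Algebra.adjoin_le ?_) (Algebra.adjoin_le ?_)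
  · rintro _ ⟨_, ⟨k, rfl⟩, rfl⟩
    refine (congrArg (· ∈ _) (radialRestrict_evenPowerTrace k)).mpr (Subalgebra.smul_mem _ ?_ _)
    exact Algebra.subset_adjoin ⟨_, ⟨k, rfl⟩, hexpand k⟩
  · rintro _ ⟨_, ⟨k, rfl⟩, rfl⟩
    have hk : expand 2 (psum (Fin n) ℝ k) =
        (2 * (-1) ^ k : ℝ)⁻¹ • radialRestrict n (evenPowerTrace (BlockIdx n) k) := by
      rw [radialRestrict_evenPowerTrace, inv_smul_smul₀ (by positivity), hexpand]
    refine (congrArg (· ∈ _) hk).mpr (Subalgebra.smul_mem _ ?_ _)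
    exact Algebra.subset_adjoin ⟨_, ⟨k, rfl⟩, rfl⟩

/-- The matrix `y` has `y - yᵀ = k D(c) kᵀ` for some orthogonal `k`. -/
def HasRadialPart (y : BlockIdx n × BlockIdx n → ℝ) (c : Fin n → ℝ) : Prop :=
  ∃ k : Matrix (BlockIdx n) (BlockIdx n) ℝ,
    kᵀ * k = 1 ∧ (genericAntisymm (BlockIdx n)).map (eval y) = k * blockD c * kᵀ

lemma genericAntisymm_map_eval {ι : Type*} (y : ι × ι → ℝ) :
    (genericAntisymm ι).map (eval y) = Matrix.of fun p q => y (p, q) - y (q, p) := by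
  ext p q
  simp [genericAntisymm]

lemma conj_pow {R ι : Type*} [CommRing R] [Fintype ι] [DecidableEq ι] {k : Matrix ι ι R}
    (hk : kᵀ * k = 1) (M : Matrix ι ι R) (m : ℕ) : (k * M * kᵀ) ^ m = k * M ^ m * kᵀ := by
  induction m with
  | zero => simp [mul_eq_one_comm.1 hk]
  | succ m ih =>
    rw [pow_succ, ih, pow_succ]
    simp only [Matrix.mul_assoc]
    rw [← Matrix.mul_assoc kᵀ k, hk, Matrix.one_mul]

lemma map_trace_pow {R S ι : Type*} [CommRing R] [CommRing S] [Fintype ι] [DecidableEq ι]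
    (f : R →+* S) (M : Matrix ι ι R) (m : ℕ) : f (trace (M ^ m)) = trace (M.map f ^ m) := by
  rw [← RingHom.mapMatrix_apply, ← map_pow, RingHom.mapMatrix_apply, AddMonoidHom.map_trace]

lemma HasRadialPart.eval_eq {y : BlockIdx n × BlockIdx n → ℝ} {c : Fin n → ℝ}
    (hy : HasRadialPart y c) {F : EntryPoly n} (hF : F ∈ evenTraceAlgebra n) :
    eval y F = eval c (radialRestrict n F) := by
  obtain ⟨k, hk, hkc⟩ := hy
  induction hF using Algebra.adjoin_induction with
  | algebraMap r => rw [AlgHom.commutes, algebraMap_eq, algebraMap_eq, eval_C, eval_C]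
  | add F G _ _ hF hG => simp only [map_add, hF, hG]
  | mul F G _ _ hF hG => simp only [map_mul, hF, hG]
  | mem F hF =>
    obtain ⟨m, rfl⟩ := hF
    rw [radialRestrict_evenPowerTrace, evenPowerTrace, map_trace_pow, hkc, conj_pow hk,
      Matrix.trace_mul_comm, ← Matrix.mul_assoc, hk, Matrix.one_mul, trace_blockD_pow_two_mul]
    simp [psum, smul_eval]

lemma det_genericAntisymm_ne_zero : (genericAntisymm (BlockIdx n)).det ≠ 0 := by
  intro h
  have hdet : (blockD (X : Fin n → RadialPoly n)).det = 0 := by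
    rw [← map_genericAntisymm_radialRestrict, ← AlgHom.mapMatrix_apply, ← AlgHom.map_det, h,
      map_zero]
  rw [det_blockD] at hdet
  exact Finset.prod_ne_zero_iff.2 (fun j _ => pow_ne_zero 2 (X_ne_zero j)) hdet

lemma exists_hasRadialPart {y : BlockIdx n × BlockIdx n → ℝ}
    (hy : eval y (genericAntisymm (BlockIdx n)).det ≠ 0) : ∃ c, HasRadialPart y c := by
  rw [RingHom.map_det, RingHom.mapMatrix_apply] at hy
  obtain ⟨k, c, hk, -, hkc⟩ := exists_conj_blockD
    (by rw [genericAntisymm_map_eval]; ext p q; simp) hy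
  exact ⟨c, k, hk, hkc⟩

lemma eq_of_forall_hasRadialPart {P Q : EntryPoly n}
    (h : ∀ y c, HasRadialPart y c → eval y P = eval y Q) : P = Q := by
  have hmul : (P - Q) * (genericAntisymm (BlockIdx n)).det = 0 := by
    refine MvPolynomial.funext fun y => ?_
    rw [map_mul, map_zero]
    by_cases hdet : eval y (genericAntisymm (BlockIdx n)).det = 0
    · rw [hdet, mul_zero]
    · obtain ⟨c, hc⟩ := exists_hasRadialPart hdet
      rw [map_sub, h y c hc, sub_self, zero_mul]
  exact sub_eq_zero.1 ((mul_eq_zero.1 hmul).resolve_right det_genericAntisymm_ne_zero)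

lemma eval_expand_two {σ : Type*} (a : σ → ℝ) (q : MvPolynomial σ ℝ) :
    eval a (expand 2 q) = eval (fun j => a j ^ 2) q :=
  eval_expand ..

lemma exists_evenTraceAlgebra_eval_eq {q : RadialPoly n} (hq : q.IsSymmetric) :
    ∃ G ∈ evenTraceAlgebra n, radialRestrict n G = expand 2 q ∧
      ∀ y c, HasRadialPart y c → eval y G = eval (fun j => c j ^ 2) q := by
  have hmem : expand 2 q ∈ (evenTraceAlgebra n).map (radialRestrict n) :=
    map_radialRestrict_evenTraceAlgebra (n := n) ▸ ⟨q, hq, rfl⟩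
  obtain ⟨G, hG, hGq⟩ := Subalgebra.mem_map.1 hmem
  refine ⟨G, hG, hGq, fun y c hy => ?_⟩
  rw [hy.eval_eq hG, hGq, eval_expand_two]

end RadialEvaluation

/-! ### Moments of the antisymmetric matrix `g D(a) gᵀ` -/

section MomentKernel

variable {κ R : Type*} [Fintype κ]

lemma fischer_eq_of_coeff {F G : MvPolynomial κ ℝ} (L : MvPolynomial κ ℝ →ₗ[ℝ] ℝ)
    (h : ∀ s ∈ F.support, multiFactorial s * coeff s G = L (monomial s 1)) :
    fischer F G = L F := by
  conv_lhs => rw [F.as_sum, map_sum, LinearMap.sum_apply]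
  conv_rhs => rw [F.as_sum, map_sum]
  refine Finset.sum_congr rfl fun s hs => ?_
  rw [fischer_monomial_left, h s hs, ← smul_eq_mul, ← map_smul, smul_monomial, smul_eq_mul,
    mul_one]

variable [DecidableEq κ]

lemma coeff_sum_piAntidiag_monomial [CommSemiring R] (c : (κ → ℕ) → R) (s : κ →₀ ℕ) :
    coeff s (∑ l ∈ Finset.piAntidiag Finset.univ s.degree,
      monomial (Finsupp.equivFunOnFinite.symm l) (c l)) = c s := by
  rw [coeff_sum, Finset.sum_eq_single (s : κ → ℕ)]
  · rw [Finsupp.equivFunOnFinite_symm_coe, coeff_monomial, if_pos rfl]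
  · intro l _ hl
    rw [coeff_monomial, if_neg fun h => hl (congrArg DFunLike.coe h)]
  · intro h
    exact absurd (Finset.mem_piAntidiag.2 ⟨(Finsupp.degree_eq_sum s).symm, by simp⟩) h

variable [CommRing R] [Algebra ℝ R]

/-- The homogeneous polynomial of degree `m` representing the functional `F ↦ L (F(z))` with
respect to the Fischer inner product. -/
def momentKernel (L : R →ₗ[ℝ] ℝ) (z : κ → R) (m : ℕ) : MvPolynomial κ ℝ :=
  ∑ l ∈ Finset.piAntidiag Finset.univ m, monomial (Finsupp.equivFunOnFinite.symm l)
    (L (∏ i, z i ^ l i) / multiFactorial (Finsupp.equivFunOnFinite.symm l))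

lemma isHomogeneous_momentKernel (L : R →ₗ[ℝ] ℝ) (z : κ → R) (m : ℕ) :
    (momentKernel L z m).IsHomogeneous m := by
  refine IsHomogeneous.sum _ _ _ fun l hl => isHomogeneous_monomial _ ?_
  rw [Finsupp.degree_eq_sum]
  exact (Finset.mem_piAntidiag.1 hl).1

lemma fischer_momentKernel (L : R →ₗ[ℝ] ℝ) (z : κ → R) {m : ℕ} {F : MvPolynomial κ ℝ}
    (hF : F.IsHomogeneous m) : fischer F (momentKernel L z m) = L (aeval z F) := by
  refine fischer_eq_of_coeff (L ∘ₗ (aeval z).toLinearMap) fun s hs => ?_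
  rw [← degree_eq_of_mem_support hF hs, momentKernel, coeff_sum_piAntidiag_monomial,
    Finsupp.equivFunOnFinite_symm_coe, mul_div_cancel₀ _ (multiFactorial_pos s).ne']
  simp [aeval_monomial, Finsupp.prod_fintype]

lemma factorial_mul_eval_momentKernel (L : R →ₗ[ℝ] ℝ) (z : κ → R) (m : ℕ) (y : κ → ℝ) :
    m.factorial * eval y (momentKernel L z m) = L ((∑ i, y i • z i) ^ m) := by
  rw [Finset.sum_pow_eq_sum_piAntidiag, map_sum, momentKernel, map_sum, Finset.mul_sum]
  refine Finset.sum_congr rfl fun l hl => ?_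
  have hmultinomial : (m.factorial : ℝ) = Nat.multinomial Finset.univ l *
      multiFactorial (Finsupp.equivFunOnFinite.symm l) := by
    rw [← (Finset.mem_piAntidiag.1 hl).1, ← Nat.multinomial_spec, multiFactorial]
    push_cast
    exact mul_comm _ _
  have hsmul : (Nat.multinomial Finset.univ l : R) * ∏ i, (y i • z i) ^ l i =
      ((Nat.multinomial Finset.univ l : ℝ) * ∏ i, y i ^ l i) • ∏ i, z i ^ l i := by
    simp_rw [smul_pow, Finset.prod_smul, mul_smul, Nat.cast_smul_eq_nsmul, nsmul_eq_mul]
  rw [hsmul, map_smul, smul_eq_mul, eval_monomial_eq_prod, hmultinomial]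
  have := (multiFactorial_pos (Finsupp.equivFunOnFinite.symm l)).ne'
  simp only [Finsupp.equivFunOnFinite_symm_apply_apply]
  field_simp

end MomentKernel

section ConjugatedMoments

variable {n : ℕ}

/-- The entries of `½ g D(a) gᵀ`, as polynomials in the entries of `g`. -/
def conjCoord (a : Fin n → ℝ) (pq : BlockIdx n × BlockIdx n) : EntryPoly n :=
  C (1 / 2) * (mvPolynomialX (BlockIdx n) (BlockIdx n) ℝ * (blockD a).map C *
    (mvPolynomialX (BlockIdx n) (BlockIdx n) ℝ)ᵀ : Matrix _ _ (EntryPoly n)) pq.1 pq.2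

lemma sum_smul_conjCoord (a : Fin n → ℝ) (y : BlockIdx n × BlockIdx n → ℝ) :
    ∑ pq, y pq • conjCoord a pq =
      halfTrace (blockD a) (-(1 / 2 : ℝ) • (genericAntisymm (BlockIdx n)).map (eval y)) := by
  set M := mvPolynomialX (BlockIdx n) (BlockIdx n) ℝ * (blockD a).map C *
    (mvPolynomialX (BlockIdx n) (BlockIdx n) ℝ)ᵀ with hM
  set Y : Matrix (BlockIdx n) (BlockIdx n) (EntryPoly n) := Matrix.of fun p q => C (y (p, q))
  have hMt : Mᵀ = -M := by
    simp only [hM, Matrix.transpose_mul, Matrix.transpose_transpose, Matrix.mul_assoc, blockD_map,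
      transpose_blockD, Matrix.neg_mul, Matrix.mul_neg]
  have hB : (-(1 / 2 : ℝ) • (genericAntisymm (BlockIdx n)).map (eval y)).map C =
      (C (1 / 2) : EntryPoly n) • (Yᵀ - Y) := by
    ext1 p q
    simp only [genericAntisymm_map_eval, Y, Matrix.map_apply, Matrix.smul_apply, Matrix.sub_apply,
      Matrix.of_apply, Matrix.transpose_apply, smul_eq_mul, ← C_sub, ← C_mul]
    ring_nf
  have hflip : trace (M * Y) = -trace (M * Yᵀ) := by
    rw [← Matrix.trace_transpose, Matrix.transpose_mul, hMt, Matrix.mul_neg, Matrix.trace_neg,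
      Matrix.trace_mul_comm]
  have hhalf : (C (1 / 2) : EntryPoly n) * (1 + 1) = 1 := by
    rw [← C_1, ← C_add, ← C_mul]
    norm_num
  have hsum : ∑ pq, y pq • conjCoord a pq = C (1 / 2) * trace (M * Yᵀ) := by
    rw [Fintype.sum_prod_type, ← sum_mul_eq_trace_mul_transpose, Finset.mul_sum]
    simp only [Finset.mul_sum, conjCoord, smul_eq_C_mul, Y, Matrix.of_apply]
    exact Finset.sum_congr rfl fun _ _ => Finset.sum_congr rfl fun _ _ => by ring
  rw [hsum, halfTrace, hB, Matrix.mul_smul, Matrix.mul_sub, Matrix.trace_smul, Matrix.trace_sub,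
    hflip, smul_eq_mul]
  linear_combination (-C (1 / 2) * trace (M * Yᵀ)) * hhalf

/-- The kernel representing the moments of `½ g D(a) gᵀ` of degree `2d`. -/
def conjKernel (a : Fin n → ℝ) (d : ℕ) : EntryPoly n :=
  momentKernel gaussianMean (conjCoord a) (2 * d)

lemma HasRadialPart.eval_conjKernel {y : BlockIdx n × BlockIdx n → ℝ} {c : Fin n → ℝ}
    (hy : HasRadialPart y c) (a : Fin n → ℝ) (d : ℕ) :
    eval y (conjKernel a d) =
      completeHomog d fun b : Fin n × Fin n => a b.2 ^ 2 / 4 * c b.1 ^ 2 := by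
  obtain ⟨k, hk, hkc⟩ := hy
  have hscale : -(1 / 2 : ℝ) • (k * blockD c * kᵀ) = k * blockD (fun j => -(1 / 2) * c j) * kᵀ := by
    have hblock : blockD (fun j => -(1 / 2) * c j) = -(1 / 2 : ℝ) • blockD c := by
      ext p q
      simp only [blockD, Matrix.smul_apply, Matrix.of_apply, smul_eq_mul, mul_ite, mul_zero,
        mul_assoc]
    rw [hblock, Matrix.mul_smul, Matrix.smul_mul]
  have hfact : ((2 * d).factorial : ℝ) ≠ 0 := by positivity
  rw [← mul_right_inj' hfact, conjKernel, factorial_mul_eval_momentKernel, sum_smul_conjCoord, hkc,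
    hscale, gaussianMean_halfTrace_conj_blockD a _ hk]
  congr 2
  ext b
  ring

lemma isSymmetric_completeHomog_prod (c : Fin n → ℝ) (d : ℕ) :
    (completeHomog d fun b : Fin n × Fin n => C (c b.2) * (X b.1 : RadialPoly n)).IsSymmetric := by
  intro σ
  have h := map_completeHomog (rename σ : RadialPoly n →ₐ[ℝ] RadialPoly n).toRingHom d
    fun b : Fin n × Fin n => C (c b.2) * (X b.1 : RadialPoly n)
  refine h.trans (Eq.trans ?_ (completeHomog_comp_equiv (σ.prodCongr (Equiv.refl _)) d _))
  congr 1
  ext1 b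
  simp

lemma conjKernel_mem_evenTraceAlgebra (a : Fin n → ℝ) (d : ℕ) :
    conjKernel a d ∈ evenTraceAlgebra n ∧
      radialRestrict n (conjKernel a d) =
        completeHomog d fun b : Fin n × Fin n => C (a b.2 ^ 2 / 4) * X b.1 ^ 2 := by
  obtain ⟨G, hG, hrestrict, heval⟩ := exists_evenTraceAlgebra_eval_eq
    (isSymmetric_completeHomog_prod (fun j => a j ^ 2 / 4) d)
  have hkernel : conjKernel a d = G := eq_of_forall_hasRadialPart fun y c hy => by
    rw [hy.eval_conjKernel, heval y c hy, map_completeHomog]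
    simp only [map_mul, eval_C, eval_X]
  refine ⟨hkernel ▸ hG, ?_⟩
  rw [hkernel, hrestrict, ← AlgHom.coe_toRingHom, map_completeHomog]
  simp

lemma gaussianMean_aeval_conjCoord_mul_fischer (a : Fin n → ℝ) {d : ℕ} {F : EntryPoly n}
    (hF : F ∈ evenTraceAlgebra n) (hFd : F.IsHomogeneous (2 * d)) :
    gaussianMean (aeval (conjCoord a) F) * fischer (vandermondeSq n) (vandermondeSq n) =
      fischer (vandermondeSq n * radialRestrict n F) (vandermondeSq n *
        completeHomog d fun b : Fin n × Fin n => X b.1 ^ 2 * C (a b.2 ^ 2)) := by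
  obtain ⟨hmem, hrestrict⟩ := conjKernel_mem_evenTraceAlgebra a d
  have hscale : (completeHomog d fun b : Fin n × Fin n => X b.1 ^ 2 * C (a b.2 ^ 2)) =
      (2 ^ (2 * d) : ℝ) • radialRestrict n (conjKernel a d) := by
    rw [hrestrict, smul_eq_C_mul, pow_mul, C_pow, ← completeHomog_mul_left]
    congr 1
    ext1 b
    rw [← mul_assoc, ← C_mul, mul_comm]
    congr 2
    ring
  rw [← fischer_momentKernel gaussianMean (conjCoord a) hFd, ← conjKernel,
    fischer_mul_fischer_vandermondeSq hF hmem hFd (isHomogeneous_momentKernel _ _ _), hscale,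
    mul_smul_comm, map_smul, smul_eq_mul]

end ConjugatedMoments

section ExponentialMoments

variable {n : ℕ}

/-- The expectation of a polynomial in independent exponential variables of means `a j`. -/
def exponentialMean (a : Fin n → ℝ) : RadialPoly n →ₗ[ℝ] ℝ :=
  (basisMonomials (Fin n) ℝ).constr ℝ fun s => multiFactorial s * ∏ j, a j ^ s j

lemma exponentialMean_monomial (a : Fin n → ℝ) (s : Fin n →₀ ℕ) :
    exponentialMean a (monomial s 1) = multiFactorial s * ∏ j, a j ^ s j :=
  (basisMonomials (Fin n) ℝ).constr_basis ℝ _ s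

lemma completeHomog_C_mul_X (c : Fin n → ℝ) (d : ℕ) :
    (completeHomog d fun i => C (c i) * (X i : RadialPoly n)) =
      ∑ l ∈ Finset.piAntidiag Finset.univ d,
        monomial (Finsupp.equivFunOnFinite.symm l) (∏ i, c i ^ l i) := by
  refine Finset.sum_congr rfl fun l _ => ?_
  rw [monomial_eq, Finsupp.prod_fintype _ _ fun i => pow_zero _, map_prod,
    ← Finset.prod_mul_distrib]
  simp only [mul_pow, map_pow, Finsupp.equivFunOnFinite_symm_apply_apply]

lemma fischer_expand_completeHomog (a : Fin n → ℝ) {N : ℕ} {q : RadialPoly n}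
    (hq : (expand 2 q).IsHomogeneous (2 * N)) :
    fischer (expand 2 q) (completeHomog N fun i => X i ^ 2 * C (a i ^ 2)) =
      exponentialMean a (expand 2 q) := by
  have hexpand : (completeHomog N fun i => (X i : RadialPoly n) ^ 2 * C (a i ^ 2)) =
      expand 2 (completeHomog N fun i => C (a i ^ 2) * X i) := by
    rw [← AlgHom.coe_toRingHom, map_completeHomog]
    simp [mul_comm]
  refine fischer_eq_of_coeff _ fun s hs => ?_
  obtain ⟨t, rfl⟩ : ∃ t, s = 2 • t := by
    classical
    obtain ⟨t, -, ht⟩ := Finset.mem_image.1 (support_expand_subset q hs)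
    exact ⟨t, ht.symm⟩
  have hdeg : t.degree = N := by
    have := degree_eq_of_mem_support hq hs
    rw [map_nsmul, smul_eq_mul] at this
    omega
  rw [exponentialMean_monomial, hexpand, coeff_expand_smul 2 two_ne_zero, completeHomog_C_mul_X,
    ← hdeg, coeff_sum_piAntidiag_monomial]
  simp [pow_mul]

lemma rename_vandermondeSq (σ : Equiv.Perm (Fin n)) :
    rename σ (vandermondeSq n) = ((Equiv.Perm.sign σ : ℤ) : ℝ) • vandermondeSq n := by
  rw [vandermondeSq, ← AlgHom.coe_toRingHom, map_vdm, smul_eq_C_mul, map_intCast,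
    ← vdm_comp_perm fun j => (X j : RadialPoly n) ^ 2]
  simp

lemma vandermondeSq_eq_expand : vandermondeSq n = expand 2 (vdm fun j => (X j : RadialPoly n)) := by
  rw [vandermondeSq, ← AlgHom.coe_toRingHom, map_vdm]
  simp

lemma isHomogeneous_vandermondeSq : (vandermondeSq n).IsHomogeneous (2 * vdmDegree n) := by
  rw [vandermondeSq, vdm, vdmDegree, Finset.card_eq_sum_ones, Finset.mul_sum]
  exact IsHomogeneous.prod _ _ _ fun p _ => (isHomogeneous_X_pow _ _).sub (isHomogeneous_X_pow _ _)

lemma fischer_vandermondeSq_mul_completeHomog_perm (a : Fin n → ℝ) {N : ℕ} {q : RadialPoly n}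
    (hq : q.IsSymmetric) (hN : (vandermondeSq n * expand 2 q).IsHomogeneous (2 * N))
    (σ : Equiv.Perm (Fin n)) :
    fischer (vandermondeSq n * expand 2 q)
        ((Equiv.Perm.sign σ : ℤ) • completeHomog N fun i => X (σ i) ^ 2 * C (a i ^ 2)) =
      exponentialMean a (vandermondeSq n * expand 2 q) := by
  have hP : vandermondeSq n * expand 2 q = expand 2 (vdm X * q) := by
    rw [map_mul, vandermondeSq_eq_expand]
  have hrename : (completeHomog N fun i => (X (σ i) : RadialPoly n) ^ 2 * C (a i ^ 2)) =
      rename σ (completeHomog N fun i => X i ^ 2 * C (a i ^ 2)) := by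
    rw [← AlgHom.coe_toRingHom, map_completeHomog]
    simp
  have hsign : rename σ (vandermondeSq n * expand 2 q) =
      ((Equiv.Perm.sign σ : ℤ) : ℝ) • (vandermondeSq n * expand 2 q) := by
    rw [map_mul, rename_vandermondeSq, rename_expand, hq σ, smul_mul_assoc]
  rw [← Int.cast_smul_eq_zsmul ℝ, map_smul, ← LinearMap.smul_apply, ← map_smul, ← hsign, hrename,
    fischer_rename, hP, fischer_expand_completeHomog a (hP ▸ hN)]

lemma vdm_mul_fischer_mul_gaussianMean_of_isHomogeneous (a : Fin n → ℝ) {d : ℕ} {F : EntryPoly n}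
    (hF : F ∈ evenTraceAlgebra n) (hFd : F.IsHomogeneous (2 * d)) :
    (vdm fun j => a j ^ 2) * fischer (vandermondeSq n) (vandermondeSq n) *
        gaussianMean (aeval (conjCoord a) F) =
      n.factorial * exponentialMean a (vandermondeSq n * radialRestrict n F) := by
  obtain ⟨q, hq, hFq⟩ := Subalgebra.mem_map.1
    (map_radialRestrict_evenTraceAlgebra (n := n) ▸ Subalgebra.mem_map.2 ⟨F, hF, rfl⟩)
  have hFq' : radialRestrict n F = expand 2 q := hFq.symm
  have hN : (vandermondeSq n * expand 2 q).IsHomogeneous (2 * (d + vdmDegree n)) := by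
    rw [mul_add, add_comm, ← hFq']
    exact isHomogeneous_vandermondeSq.mul (isHomogeneous_radialRestrict hFd)
  have hcauchy := vdm_mul_vdm_mul_completeHomog (fun j => (X j : RadialPoly n) ^ 2)
    (fun j => C (a j ^ 2)) d
  rw [← map_vdm, ← vandermondeSq, mul_comm (vandermondeSq n), mul_assoc, ← smul_eq_C_mul] at hcauchy
  rw [mul_assoc, mul_comm (fischer _ _), gaussianMean_aeval_conjCoord_mul_fischer a hF hFd,
    ← smul_eq_mul, ← map_smul, hcauchy, map_sum, hFq',
    Finset.sum_congr rfl fun σ _ => fischer_vandermondeSq_mul_completeHomog_perm a hq hN σ]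
  simp [Fintype.card_perm]

lemma isHomogeneous_evenPowerTrace (k : ℕ) :
    (evenPowerTrace (BlockIdx n) k).IsHomogeneous (2 * k) := by
  have hpow (m : ℕ) (p q) : ((genericAntisymm (BlockIdx n) ^ m) p q).IsHomogeneous m := by
    induction m generalizing q with
    | zero =>
      rw [pow_zero, Matrix.one_apply]
      split_ifs
      exacts [isHomogeneous_one _ _, isHomogeneous_zero _ _ _]
    | succ m ih =>
      rw [pow_succ, Matrix.mul_apply]
      exact IsHomogeneous.sum _ _ _ fun r _ =>
        (ih r).mul ((isHomogeneous_X _ _).sub (isHomogeneous_X _ _))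
  exact IsHomogeneous.sum _ _ _ fun r _ => hpow _ _ _

theorem vdm_mul_fischer_mul_gaussianMean (a : Fin n → ℝ) {F : EntryPoly n}
    (hF : F ∈ evenTraceAlgebra n) :
    (vdm fun j => a j ^ 2) * fischer (vandermondeSq n) (vandermondeSq n) *
        gaussianMean (aeval (conjCoord a) F) =
      n.factorial * exponentialMean a (vandermondeSq n * radialRestrict n F) := by
  rw [← Subalgebra.mem_toSubmodule, evenTraceAlgebra, Algebra.adjoin_eq_span] at hF
  induction hF using Submodule.span_induction with
  | zero => simp
  | add F G _ _ hF hG => simp only [map_add, mul_add, hF, hG]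
  | smul c F _ hF => simp only [map_smul, mul_smul_comm, hF]
  | mem F hF =>
    have hmem : F ∈ evenTraceAlgebra n :=
      Submonoid.closure_le.2 (Set.range_subset_iff.2 evenPowerTrace_mem) hF
    obtain ⟨d, hd⟩ : ∃ d, F.IsHomogeneous (2 * d) := by
      clear hmem
      induction hF using Submonoid.closure_induction with
      | mem F hF =>
        obtain ⟨m, rfl⟩ := hF
        exact ⟨m, isHomogeneous_evenPowerTrace m⟩
      | one => exact ⟨0, isHomogeneous_one _ _⟩
      | mul F G _ _ hF hG =>
        obtain ⟨⟨d, hd⟩, ⟨e, he⟩⟩ := hF, hG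
        exact ⟨d + e, by rw [mul_add]; exact hd.mul he⟩
    exact vdm_mul_fischer_mul_gaussianMean_of_isHomogeneous a hmem hd

/-- Comparing with `F = 1` eliminates the constant `⟨Δ, Δ⟩`. -/
theorem exponentialMean_mul_gaussianMean (a : Fin n → ℝ) {F : EntryPoly n}
    (hF : F ∈ evenTraceAlgebra n) :
    exponentialMean a (vandermondeSq n) * gaussianMean (aeval (conjCoord a) F) =
      exponentialMean a (vandermondeSq n * radialRestrict n F) := by
  have hF' := vdm_mul_fischer_mul_gaussianMean a hF
  have hone := vdm_mul_fischer_mul_gaussianMean a (one_mem (evenTraceAlgebra n))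
  rw [map_one, gaussianMean_one, mul_one, map_one, mul_one] at hone
  rw [hone, mul_assoc] at hF'
  exact mul_left_cancel₀ (Nat.cast_ne_zero.2 n.factorial_ne_zero) hF'

end ExponentialMoments

/-! ### Measures determined by their moments -/

section Moments

variable {Ω Ω' : Type*} [MeasurableSpace Ω] [MeasurableSpace Ω'] {μ : Measure Ω} {μ' : Measure Ω'}
  {X : Ω → ℝ} {Y : Ω' → ℝ}

lemma mgf_eventuallyEq_of_moments (hX : 0 ∈ interior (integrableExpSet X μ))
    (hY : 0 ∈ interior (integrableExpSet Y μ'))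
    (h : ∀ k : ℕ, ∫ ω, X ω ^ k ∂μ = ∫ ω, Y ω ^ k ∂μ') : mgf X μ =ᶠ[nhds 0] mgf Y μ' := by
  obtain ⟨r, hr⟩ := hasFPowerSeriesAt_mgf hX
  obtain ⟨r', hr'⟩ := hasFPowerSeriesAt_mgf hY
  simp only [zero_mul, Real.exp_zero, mul_one, h] at hr hr'
  have hpos : 0 < min r r' := lt_min hr.r_pos hr'.r_pos
  exact ((hr.mono hpos (min_le_left _ _)).unique
    (hr'.mono hpos (min_le_right _ _))).eventuallyEq_of_mem (Metric.eball_mem_nhds _ hpos)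

lemma complexMGF_eqOn_of_mgf_eventuallyEq (hX : 0 ∈ interior (integrableExpSet X μ))
    (hY : 0 ∈ interior (integrableExpSet Y μ')) (h : mgf X μ =ᶠ[nhds 0] mgf Y μ') :
    Set.EqOn (complexMGF X μ) (complexMGF Y μ')
      {z | z.re ∈ interior (integrableExpSet X μ) ∩ interior (integrableExpSet Y μ')} := by
  have hconvex := (convex_integrableExpSet (X := X) (μ := μ)).interior.inter
    (convex_integrableExpSet (X := Y) (μ := μ')).interior
  refine AnalyticOnNhd.eqOn_of_preconnected_of_frequently_eq
    (fun z hz => analyticOnNhd_complexMGF z hz.1) (fun z hz => analyticOnNhd_complexMGF z hz.2)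
    (hconvex.linear_preimage Complex.reLm).isPreconnected (z₀ := ((0 : ℝ) : ℂ)) ⟨hX, hY⟩ ?_
  have hreal : ∀ᶠ x : ℝ in nhdsWithin 0 {0}ᶜ, complexMGF X μ x = complexMGF Y μ' x := by
    filter_upwards [h.filter_mono nhdsWithin_le_nhds] with x hx
    rw [complexMGF_ofReal, complexMGF_ofReal, hx]
  exact (Complex.continuous_ofReal.continuousWithinAt.tendsto_nhdsWithin
    fun x hx => Complex.ofReal_injective.ne hx).frequently hreal.frequently

theorem map_eq_map_of_moments [IsFiniteMeasure μ] [IsFiniteMeasure μ']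
    (hX : 0 ∈ interior (integrableExpSet X μ)) (hY : 0 ∈ interior (integrableExpSet Y μ'))
    (h : ∀ k : ℕ, ∫ ω, X ω ^ k ∂μ = ∫ ω, Y ω ^ k ∂μ') : μ.map X = μ'.map Y := by
  refine Measure.ext_of_charFun (funext fun t => ?_)
  rw [← complexMGF_mul_I (aemeasurable_of_mem_interior_integrableExpSet hX),
    ← complexMGF_mul_I (aemeasurable_of_mem_interior_integrableExpSet hY)]
  refine complexMGF_eqOn_of_mgf_eventuallyEq hX hY (mgf_eventuallyEq_of_moments hX hY h) ?_
  simpa using ⟨hX, hY⟩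

end Moments

section ProductMoments

variable {ι : Type*} [Fintype ι] {μ ν : Measure (ι → ℝ)} {ε : ℝ}

lemma abs_pow_le_exp (hε : 0 < ε) (x : ℝ) (m : ℕ) :
    |x| ^ m ≤ m.factorial / ε ^ m * Real.exp (ε * |x|) := by
  have h := Real.pow_div_factorial_le_exp (ε * |x|) (by positivity) m
  rw [mul_pow, div_le_iff₀ (by positivity)] at h
  rw [div_mul_eq_mul_div, le_div_iff₀ (by positivity)]
  linarith

lemma integrable_prod_pow (hε : 0 < ε)
    (hμ : Integrable (fun a : ι → ℝ => Real.exp (ε * ∑ j, |a j|)) μ) (m : ι → ℕ) :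
    Integrable (fun a : ι → ℝ => ∏ j, a j ^ m j) μ := by
  refine (hμ.const_mul (∏ j, ((m j).factorial / ε ^ m j : ℝ))).mono'
    (by fun_prop : Measurable fun a : ι → ℝ => ∏ j, a j ^ m j).aestronglyMeasurable
    (ae_of_all _ fun a => ?_)
  rw [Finset.mul_sum, Real.exp_sum, ← Finset.prod_mul_distrib, Real.norm_eq_abs, Finset.abs_prod]
  refine Finset.prod_le_prod (fun j _ => abs_nonneg _) fun j _ => ?_
  rw [abs_pow]
  exact abs_pow_le_exp hε _ _

lemma integrable_eval_sq (hε : 0 < ε)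
    (hμ : Integrable (fun a : ι → ℝ => Real.exp (ε * ∑ j, |a j|)) μ) (p : MvPolynomial ι ℝ) :
    Integrable (fun a : ι → ℝ => eval (fun j => a j ^ 2) p) μ := by
  induction p using MvPolynomial.induction_on' with
  | monomial s c =>
    simp_rw [eval_monomial_eq_prod, ← pow_mul]
    exact (integrable_prod_pow hε hμ fun j => 2 * s j).const_mul c
  | add p q hp hq =>
    simp_rw [map_add]
    exact hp.add hq

lemma abs_sum_mul_le (t a : ι → ℝ) : |∑ j, t j * a j| ≤ (∑ j, |t j|) * ∑ j, |a j| := by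
  refine (Finset.abs_sum_le_sum_abs _ _).trans ?_
  rw [Finset.mul_sum]
  refine Finset.sum_le_sum fun j _ => ?_
  rw [abs_mul]
  exact mul_le_mul_of_nonneg_right
    (Finset.single_le_sum (f := fun j => |t j|) (fun j _ => abs_nonneg _) (Finset.mem_univ j))
    (abs_nonneg _)

lemma zero_mem_interior_integrableExpSet (hε : 0 < ε)
    (hμ : Integrable (fun a : ι → ℝ => Real.exp (ε * ∑ j, |a j|)) μ) (t : ι → ℝ) :
    0 ∈ interior (integrableExpSet (fun a : ι → ℝ => ∑ j, t j * a j) μ) := by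
  set T := 1 + ∑ j, |t j|
  have hT : 0 < T := by positivity
  refine mem_interior.2 ⟨Set.Ioo (-(ε / T)) (ε / T), fun v hv => ?_, isOpen_Ioo,
    neg_lt_zero.2 (div_pos hε hT), div_pos hε hT⟩
  refine hμ.mono'
    (by fun_prop : Measurable fun a : ι → ℝ => Real.exp (v * ∑ j, t j * a j)).aestronglyMeasurable
    (ae_of_all _ fun a => ?_)
  rw [Real.norm_eq_abs, Real.abs_exp, Real.exp_le_exp]
  calc v * ∑ j, t j * a j ≤ |v| * |∑ j, t j * a j| := by
        rw [← abs_mul]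
        exact le_abs_self _
    _ ≤ ε / T * (T * ∑ j, |a j|) := by
        gcongr
        · exact abs_le.2 ⟨hv.1.le, hv.2.le⟩
        · exact (abs_sum_mul_le t a).trans (by gcongr; exact le_add_of_nonneg_left zero_le_one)
    _ = ε * ∑ j, |a j| := by field_simp

lemma integral_sum_mul_pow [DecidableEq ι] (hε : 0 < ε)
    (hμ : Integrable (fun a : ι → ℝ => Real.exp (ε * ∑ j, |a j|)) μ) (t : ι → ℝ) (m : ℕ) :
    ∫ a, (∑ j, t j * a j) ^ m ∂μ = ∑ l ∈ Finset.piAntidiag Finset.univ m,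
      (Nat.multinomial Finset.univ l * ∏ j, t j ^ l j) * ∫ a, ∏ j, a j ^ l j ∂μ := by
  have hexpand (a : ι → ℝ) : (∑ j, t j * a j) ^ m = ∑ l ∈ Finset.piAntidiag Finset.univ m,
      (Nat.multinomial Finset.univ l * ∏ j, t j ^ l j) * ∏ j, a j ^ l j := by
    simp_rw [Finset.sum_pow_eq_sum_piAntidiag, mul_pow, Finset.prod_mul_distrib, mul_assoc]
  simp_rw [hexpand]
  rw [integral_finsetSum _ fun l _ => (integrable_prod_pow hε hμ l).const_mul _]
  simp_rw [integral_const_mul]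

lemma isFiniteMeasure_of_integrable_exp (hε : 0 < ε)
    (hμ : Integrable (fun a : ι → ℝ => Real.exp (ε * ∑ j, |a j|)) μ) : IsFiniteMeasure μ := by
  have h : Integrable (fun _ : ι → ℝ => (1 : ℝ)) μ := by
    simpa using integrable_prod_pow hε hμ 0
  rw [integrable_const_iff] at h
  exact h.resolve_left one_ne_zero

theorem eq_of_integral_prod_pow_eq (hε : 0 < ε)
    (hμ : Integrable (fun a : ι → ℝ => Real.exp (ε * ∑ j, |a j|)) μ)
    (hν : Integrable (fun a : ι → ℝ => Real.exp (ε * ∑ j, |a j|)) ν)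
    (h : ∀ m : ι → ℕ, ∫ a, ∏ j, a j ^ m j ∂μ = ∫ a, ∏ j, a j ^ m j ∂ν) : μ = ν := by
  classical
  have := isFiniteMeasure_of_integrable_exp hε hμ
  have := isFiniteMeasure_of_integrable_exp hε hν
  refine Measure.ext_of_charFunDual (funext fun L => ?_)
  have hL : (L : (ι → ℝ) → ℝ) = fun a => ∑ j, L (Pi.single j 1) * a j := by
    ext a
    conv_lhs => rw [← Finset.univ_sum_single a, map_sum]
    refine Finset.sum_congr rfl fun j _ => ?_
    rw [← mul_one (a j), ← smul_eq_mul, Pi.single_smul, map_smul, smul_eq_mul, smul_eq_mul,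
      mul_one, mul_comm]
  have hmap := map_eq_map_of_moments
    (zero_mem_interior_integrableExpSet hε hμ fun j => L (Pi.single j 1))
    (zero_mem_interior_integrableExpSet hε hν fun j => L (Pi.single j 1)) fun k => by
      simp only [integral_sum_mul_pow hε hμ, integral_sum_mul_pow hε hν, h]
  rw [charFunDual_eq_charFun_map_one, charFunDual_eq_charFun_map_one, hL, hmap]

end ProductMoments

/-! ### Gamma integrals over the positive orthant -/

section Orthant

variable {n : ℕ}

/-- Lebesgue measure on the open positive orthant, the domain of the singular values. -/
def orthantVolume (n : ℕ) : Measure (Fin n → ℝ) := volume.restrict {a | ∀ j, 0 < a j}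

lemma orthantVolume_eq_pi :
    orthantVolume n = Measure.pi fun _ => (volume : Measure ℝ).restrict (Set.Ioi 0) := by
  rw [orthantVolume, ← Measure.restrict_pi_pi, volume_pi]
  congr 1
  ext a
  simp

lemma ae_orthantVolume_pos : ∀ᵐ a ∂(orthantVolume n), ∀ j, 0 < a j := by
  refine ae_restrict_mem (s := {a : Fin n → ℝ | ∀ j, 0 < a j}) ?_
  rw [Set.ofPred_forall]
  exact MeasurableSet.iInter fun j => measurableSet_lt measurable_const (measurable_pi_apply j)

variable {r t : ℝ}

lemma integrable_rpow_mul_exp (ht : 0 < t) (hr : -1 < r) :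
    Integrable (fun x : ℝ => x ^ r * Real.exp (-x / t)) (volume.restrict (Set.Ioi 0)) := by
  refine (integrableOn_rpow_mul_exp_neg_mul_rpow hr one_pos (one_div_pos.2 ht)).congr
    (ae_of_all _ fun x => ?_)
  simp only [Real.rpow_one, neg_mul, one_div_mul_eq_div, neg_div]

lemma integral_rpow_mul_exp (ht : 0 < t) (hr : -1 < r) :
    ∫ x in Set.Ioi (0 : ℝ), x ^ r * Real.exp (-x / t) = Real.Gamma (r + 1) * t ^ (r + 1) := by
  have h := Real.integral_rpow_mul_exp_neg_mul_Ioi (a := r + 1) (r := 1 / t) (by linarith)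
    (one_div_pos.2 ht)
  rw [one_div_one_div, mul_comm, add_sub_cancel_right] at h
  simp only [← h, one_div_mul_eq_div, neg_div]

end Orthant

section GammaMean

variable {n : ℕ} {r : ℝ} {t : Fin n → ℝ}

/-- The unnormalized expectation of a polynomial under the density `∏ⱼ aⱼʳ exp(-aⱼ / tⱼ)` on the
positive orthant. -/
def gammaMean (r : ℝ) (t : Fin n → ℝ) : RadialPoly n →ₗ[ℝ] ℝ :=
  (basisMonomials (Fin n) ℝ).constr ℝ fun s =>
    ∏ j, Real.Gamma (r + s j + 1) * t j ^ (r + s j + 1)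

lemma gammaMean_monomial (r : ℝ) (t : Fin n → ℝ) (s : Fin n →₀ ℕ) (c : ℝ) :
    gammaMean r t (monomial s c) = c * ∏ j, Real.Gamma (r + s j + 1) * t j ^ (r + s j + 1) := by
  rw [← mul_one c, ← smul_eq_mul, ← smul_monomial, map_smul, smul_eq_mul, smul_eq_mul, mul_one]
  exact congrArg (c * ·) ((basisMonomials (Fin n) ℝ).constr_basis ℝ _ s)

/-- The exponential weight `∏ⱼ exp(-aⱼ / tⱼ)`. -/
def expWeight (t a : Fin n → ℝ) : ℝ := ∏ j, Real.exp (-(a j) / t j)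

lemma prod_rpow_mul_eval_mul_expWeight_ae_eq (r : ℝ) (t : Fin n → ℝ) (s : Fin n →₀ ℕ) (c : ℝ) :
    (fun a : Fin n → ℝ => c * ∏ j, (a j ^ (r + s j) * Real.exp (-(a j) / t j))) =ᵐ[orthantVolume n]
      fun a => (∏ j, a j ^ r) * eval a (monomial s c) * expWeight t a := by
  filter_upwards [ae_orthantVolume_pos] with a ha
  rw [eval_monomial_eq_prod, expWeight]
  simp_rw [Real.rpow_add_natCast (ha _).ne', Finset.prod_mul_distrib]
  ring

lemma integrable_eval_mul_expWeight (ht : ∀ j, 0 < t j) (hr : -1 < r) (P : RadialPoly n) :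
    Integrable (fun a => (∏ j, a j ^ r) * eval a P * expWeight t a) (orthantVolume n) := by
  induction P using MvPolynomial.induction_on' with
  | add p q hp hq =>
    simp only [map_add, mul_add, add_mul]
    exact hp.add hq
  | monomial s c =>
    refine Integrable.congr (Integrable.const_mul ?_ c)
      (prod_rpow_mul_eval_mul_expWeight_ae_eq r t s c)
    rw [orthantVolume_eq_pi]
    exact Integrable.fintype_prod (f := fun j x => x ^ (r + s j) * Real.exp (-x / t j)) fun j =>
      integrable_rpow_mul_exp (ht j) (hr.trans_le (le_add_of_nonneg_right (Nat.cast_nonneg _)))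

lemma integral_eval_mul_expWeight (ht : ∀ j, 0 < t j) (hr : -1 < r) (P : RadialPoly n) :
    ∫ a, (∏ j, a j ^ r) * eval a P * expWeight t a ∂(orthantVolume n) = gammaMean r t P := by
  induction P using MvPolynomial.induction_on' with
  | add p q hp hq =>
    simp only [map_add, mul_add, add_mul]
    rw [integral_add (integrable_eval_mul_expWeight ht hr p)
      (integrable_eval_mul_expWeight ht hr q), hp, hq]
  | monomial s c =>
    rw [← integral_congr_ae (prod_rpow_mul_eval_mul_expWeight_ae_eq r t s c), integral_const_mul,
      gammaMean_monomial, orthantVolume_eq_pi,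
      integral_fintype_prod_eq_prod (fun j x => x ^ (r + s j) * Real.exp (-x / t j))]
    exact congrArg (c * ·) (Finset.prod_congr rfl fun j _ => integral_rpow_mul_exp (ht j)
      (hr.trans_le (le_add_of_nonneg_right (Nat.cast_nonneg _))))

lemma eval_vandermondeSq (a : Fin n → ℝ) : eval a (vandermondeSq n) = vdm fun j => a j ^ 2 := by
  rw [vandermondeSq, map_vdm]
  simp

lemma gammaMean_vandermondeSq (r : ℝ) (ht : ∀ j, 0 < t j) :
    gammaMean r t (vandermondeSq n) =
      (∏ l ∈ Finset.range n, Real.Gamma (r + 2 * l + 1)) * (∏ j, t j ^ (r + 1)) *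
        vdm fun j => t j ^ 2 := by
  rw [← eval_vandermondeSq, vandermondeSq_eq_alternant, alternant_eq_sum_monomial, map_sum,
    map_sum, Finset.mul_sum]
  refine Finset.sum_congr rfl fun σ _ => ?_
  rw [map_zsmul, map_zsmul, gammaMean_monomial, eval_monomial_eq_prod, mul_smul_comm]
  congr 1
  rw [← Fin.prod_univ_eq_prod_range (fun l : ℕ => Real.Gamma (r + 2 * l + 1)),
    ← Equiv.prod_comp σ.symm (fun i : Fin n => Real.Gamma (r + 2 * (i : ℕ) + 1)), one_mul,
    one_mul, ← Finset.prod_mul_distrib, ← Finset.prod_mul_distrib]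
  refine Finset.prod_congr rfl fun i _ => ?_
  rw [mul_assoc, ← Real.rpow_add_natCast (ht i).ne', Finsupp.equivFunOnFinite_symm_apply_apply]
  push_cast
  ring_nf

lemma gammaMean_zero (t : Fin n → ℝ) (P : RadialPoly n) :
    gammaMean 0 t P = (∏ j, t j) * exponentialMean t P := by
  have h : gammaMean 0 t = (∏ j, t j) • exponentialMean t := by
    refine (basisMonomials (Fin n) ℝ).ext fun s => ?_
    rw [coe_basisMonomials, LinearMap.smul_apply, gammaMean_monomial, exponentialMean_monomial,
      multiFactorial, smul_eq_mul, one_mul, mul_left_comm, ← Finset.prod_mul_distrib,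
      ← Finset.prod_mul_distrib]
    refine Finset.prod_congr rfl fun j _ => ?_
    rw [zero_add, Real.Gamma_nat_eq_factorial, ← Nat.cast_succ, Real.rpow_natCast, pow_succ']
  rw [h, LinearMap.smul_apply, smul_eq_mul]

lemma exp_mul_expWeight {δ : ℝ} {a : Fin n → ℝ} (ht : ∀ j, t j ≠ 0) (hδ : ∀ j, δ * t j ≠ 1)
    (ha : ∀ j, 0 ≤ a j) :
    Real.exp (δ * ∑ j, |a j|) * expWeight t a = expWeight (fun j => t j / (1 - δ * t j)) a := by
  rw [expWeight, expWeight, ← Real.exp_sum, ← Real.exp_sum, ← Real.exp_add, Finset.mul_sum,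
    ← Finset.sum_add_distrib]
  refine congrArg Real.exp (Finset.sum_congr rfl fun j _ => ?_)
  have := ht j
  have := sub_ne_zero.2 (hδ j).symm
  rw [abs_of_nonneg (ha j)]
  field_simp
  ring

end GammaMean

/-! ### Singular values of `g D(a) gᵀ` -/

section ConjBlockD

variable {n : ℕ}

lemma exists_orthogonal_conj_eq_submatrix {ι : Type*} [Fintype ι] [DecidableEq ι]
    (e : Equiv.Perm ι) {d : ι → ℝ} (hd : ∀ i, d i * d i = 1) :
    ∃ k : Matrix ι ι ℝ, kᵀ * k = 1 ∧
      ∀ M, k * M * kᵀ = Matrix.of fun p q => d p * M (e p) (e q) * d q := by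
  set k : Matrix ι ι ℝ := Matrix.of fun p q => if q = e p then d p else 0
  have hconj : ∀ M, k * M * kᵀ = Matrix.of fun p q => d p * M (e p) (e q) * d q := by
    intro M
    ext p q
    simp [k, Matrix.mul_apply]
  refine ⟨k, mul_eq_one_comm.1 ?_, hconj⟩
  have h := hconj 1
  rw [Matrix.mul_one] at h
  ext p q
  rw [h, Matrix.of_apply]
  by_cases hpq : p = q
  · rw [hpq, Matrix.one_apply_eq, Matrix.one_apply_eq, mul_one, hd]
  · rw [Matrix.one_apply_ne hpq, Matrix.one_apply_ne (e.injective.ne hpq), mul_zero, zero_mul]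

lemma exists_orthogonal_conj_blockD (σ : Equiv.Perm (Fin n)) (ε : Fin n → ℤˣ) (a : Fin n → ℝ) :
    ∃ k : Matrix (BlockIdx n) (BlockIdx n) ℝ, kᵀ * k = 1 ∧
      k * blockD a * kᵀ = blockD fun j => ((ε j : ℤ) : ℝ) * a (σ j) := by
  have hε : ∀ j, ((ε j : ℤ) : ℝ) * ((ε j : ℤ) : ℝ) = 1 := fun j => by
    rw [← Int.cast_mul, ← Units.val_mul, Int.units_mul_self]
    simp
  obtain ⟨k, hk, hconj⟩ := exists_orthogonal_conj_eq_submatrix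
    (σ.prodCongr (Equiv.refl (Fin 2))) (d := fun p => if p.2 = 0 then 1 else ((ε p.1 : ℤ) : ℝ))
    fun p => by split_ifs <;> simp [hε]
  refine ⟨k, hk, ?_⟩
  rw [hconj]
  ext ⟨i, r⟩ ⟨j, s⟩
  by_cases h : i = j
  · subst h
    fin_cases r <;> fin_cases s <;> simp [blockD, mul_comm]
  · simp [blockD, h]

lemma charpoly_blockD_sq (a : Fin n → ℝ) :
    (blockD a ^ 2).charpoly = (∏ j, (Polynomial.X - Polynomial.C (-a j ^ 2))) ^ 2 := by
  rw [blockD_sq, Matrix.charpoly_diagonal, Fintype.prod_prod_type, ← Finset.prod_pow]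
  exact Finset.prod_congr rfl fun j _ => by rw [Fin.prod_univ_two, ← sq]

lemma charpoly_conj_blockD_sq {k : Matrix (BlockIdx n) (BlockIdx n) ℝ} (hk : kᵀ * k = 1)
    (a : Fin n → ℝ) :
    ((k * blockD a * kᵀ) ^ 2).charpoly = (blockD a ^ 2).charpoly := by
  rw [conj_pow hk, Matrix.mul_assoc, Matrix.charpoly_mul_comm, Matrix.mul_assoc, hk,
    Matrix.mul_one]

end ConjBlockD

section SortedSelection

variable {n : ℕ}

lemma eq_of_monotone_of_map_univ_eq {α : Type*} [LinearOrder α] {f g : Fin n → α}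
    (hf : Monotone f) (hg : Monotone g)
    (h : (Finset.univ.val.map f : Multiset α) = Finset.univ.val.map g) : f = g := by
  rw [Fin.univ_val_map, Fin.univ_val_map, Multiset.coe_eq_coe] at h
  exact List.ofFn_injective (h.eq_of_sortedLE hf.sortedLE_ofFn hg.sortedLE_ofFn)

/-- The cone `0 ≤ a₁ ≤ ⋯ ≤ aₙ`, a fundamental domain for signed permutations. -/
def sortedCone (n : ℕ) : Set (Fin n → ℝ) := {a | (∀ j, 0 ≤ a j) ∧ Monotone a}

lemma isClosed_sortedCone : IsClosed (sortedCone n) := by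
  simp only [sortedCone, Monotone, Set.ofPred_and, Set.ofPred_forall]
  refine (isClosed_iInter fun j => isClosed_le continuous_const (continuous_apply j)).inter ?_
  exact isClosed_iInter fun i => isClosed_iInter fun j => isClosed_iInter fun _ =>
    isClosed_le (continuous_apply i) (continuous_apply j)

lemma injOn_charpoly_blockD_sq :
    Set.InjOn (fun a => (blockD a ^ 2).charpoly) (sortedCone n) := by
  intro a ha b hb hab
  have hroots : 2 • (Finset.univ.val.map fun j => -a j ^ 2 : Multiset ℝ) =
      2 • Finset.univ.val.map fun j => -b j ^ 2 := by
    have h := congrArg Polynomial.roots hab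
    simp only [charpoly_blockD_sq, Polynomial.roots_pow] at h
    have hprod : ∀ c : Fin n → ℝ, (∏ j, (Polynomial.X - Polynomial.C (c j))).roots =
        Finset.univ.val.map c := fun c => by
      rw [← Polynomial.roots_multiset_prod_X_sub_C (Finset.univ.val.map c), Multiset.map_map]
      rfl
    simpa only [hprod] using h
  have hsq := congrArg (Multiset.map Neg.neg)
    (nsmul_right_injective two_ne_zero hroots)
  simp only [Multiset.map_map, Function.comp_def, neg_neg] at hsq
  have hmono : ∀ c ∈ sortedCone n, Monotone fun j => c j ^ 2 := fun c hc i j hij =>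
    pow_le_pow_left₀ (hc.1 i) (hc.2 hij) 2
  have h := eq_of_monotone_of_map_univ_eq (hmono a ha) (hmono b hb) hsq
  exact funext fun j => (pow_left_inj₀ (ha.1 j) (hb.1 j) two_ne_zero).1 (congrFun h j)

/-- The values of the characteristic polynomial of `A²` at the natural numbers: they determine
the polynomial, and depend continuously on `A`. -/
def sqCharpolyValues {ι : Type*} [Fintype ι] [DecidableEq ι] (A : Matrix ι ι ℝ) (m : ℕ) : ℝ :=
  (A ^ 2).charpoly.eval (m : ℝ)

lemma continuous_sqCharpolyValues {ι : Type*} [Fintype ι] [DecidableEq ι] :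
    Continuous (sqCharpolyValues : Matrix ι ι ℝ → ℕ → ℝ) := by
  refine continuous_pi fun m => ?_
  simp only [sqCharpolyValues, Matrix.eval_charpoly]
  fun_prop

lemma continuous_blockD : Continuous (blockD : (Fin n → ℝ) → _) := by
  refine continuous_matrix fun p q => ?_
  simp only [blockD, Matrix.of_apply]
  split_ifs <;> fun_prop

lemma injOn_sqCharpolyValues_blockD :
    Set.InjOn (fun a => sqCharpolyValues (blockD a)) (sortedCone n) := by
  refine fun a ha b hb hab => injOn_charpoly_blockD_sq ha hb ?_
  refine Polynomial.eq_of_infinite_eval_eq _ _ ?_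
  refine (Set.infinite_range_of_injective (Nat.cast_injective (R := ℝ))).mono ?_
  rintro _ ⟨m, rfl⟩
  exact congrFun hab m

lemma exists_measurable_leftInverse_sqCharpolyValues (n : ℕ) :
    ∃ S : (ℕ → ℝ) → Fin n → ℝ, Measurable S ∧
      ∀ a ∈ sortedCone n, S (sqCharpolyValues (blockD a)) = a := by
  have hemb := ContinuousOn.measurableEmbedding isClosed_sortedCone.measurableSet
    (continuous_sqCharpolyValues.comp continuous_blockD).continuousOn
    (injOn_sqCharpolyValues_blockD (n := n))
  obtain ⟨S, hS, h⟩ := hemb.exists_measurable_extend (g := Subtype.val)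
    measurable_subtype_coe fun _ => ⟨0⟩
  exact ⟨S, hS, fun a ha => congrFun h ⟨a, ha⟩⟩

lemma exists_conj_blockD_sorted {A : Matrix (BlockIdx n) (BlockIdx n) ℝ} (hA : Aᵀ = -A)
    (hdet : A.det ≠ 0) :
    ∃ k a, kᵀ * k = 1 ∧ (∀ i, 0 < a i) ∧ a ∈ sortedCone n ∧ A = k * blockD a * kᵀ := by
  obtain ⟨k, a, hk, ha, rfl⟩ := exists_conj_blockD hA hdet
  obtain ⟨r, hr, hra⟩ := exists_orthogonal_conj_blockD (Tuple.sort a) 1 a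
  simp only [Pi.one_apply, Units.val_one, Int.cast_one, one_mul] at hra
  refine ⟨k * rᵀ, a ∘ Tuple.sort a, ?_, fun i => ha _,
    ⟨fun i => (ha _).le, Tuple.monotone_sort a⟩, ?_⟩
  · rw [Matrix.transpose_mul, Matrix.transpose_transpose, Matrix.mul_assoc, ← Matrix.mul_assoc kᵀ,
      hk, Matrix.one_mul, mul_eq_one_comm.1 hr]
  · change _ = k * rᵀ * blockD (fun j => a (Tuple.sort a j)) * (k * rᵀ)ᵀ
    calc k * blockD a * kᵀ = k * (rᵀ * r) * blockD a * (rᵀ * r) * kᵀ := by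
          simp only [hr, Matrix.mul_one]
      _ = k * rᵀ * (r * blockD a * rᵀ) * (k * rᵀ)ᵀ := by
          simp only [Matrix.transpose_mul, Matrix.transpose_transpose, Matrix.mul_assoc]
      _ = _ := by rw [hra]

end SortedSelection

section SingularValues

variable {n : ℕ} {ι : Type*}

/-- The matrix with the coordinates `u`. -/
def entryMatrix (u : ι × ι → ℝ) : Matrix ι ι ℝ := Matrix.of fun p q => u (p, q)

lemma continuous_entryMatrix : Continuous (entryMatrix : (ι × ι → ℝ) → Matrix ι ι ℝ) :=
  continuous_matrix fun p q => continuous_apply (p, q)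

/-- A line parallel to the identity matrix meets the singular set in the finitely many roots of a
characteristic polynomial. -/
lemma ae_det_entryMatrix_ne_zero [Fintype ι] [DecidableEq ι] :
    ∀ᵐ u : ι × ι → ℝ, (entryMatrix u).det ≠ 0 := by
  set v : ι × ι → ℝ := fun pq => (1 : Matrix ι ι ℝ) pq.1 pq.2
  have hline : ∀ u (t : ℝ), entryMatrix (u + t • v) = Matrix.scalar ι t - -entryMatrix u := by
    intro u t
    ext p q
    simp [entryMatrix, v, Matrix.diagonal_apply, Matrix.one_apply, add_comm]
  set s : Set (ℝ × (ι × ι → ℝ)) := {x | (entryMatrix (x.2 + x.1 • v)).det = 0}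
  have hs : MeasurableSet s := by
    have := continuous_entryMatrix (ι := ι)
    exact (isClosed_eq (by fun_prop) continuous_const).measurableSet
  have hnull : ((volume : Measure ℝ).prod (volume : Measure (ι × ι → ℝ))) s = 0 := by
    rw [← Measure.prod_swap, Measure.map_apply measurable_swap hs,
      Measure.measure_prod_null (measurable_swap hs)]
    refine ae_of_all _ fun u => Set.Finite.measure_zero ?_ _
    refine (Polynomial.finite_setOfPred_isRoot (p := (-entryMatrix u).charpoly)
      (Matrix.charpoly_monic _).ne_zero).subset fun t ht => ?_
    change Polynomial.eval t _ = 0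
    rw [Matrix.eval_charpoly, ← hline, show (entryMatrix (u + t • v)).det = 0 from ht]
  obtain ⟨t, ht⟩ := (Measure.measure_ae_null_of_prod_null hnull).exists
  have hu : volume ((· + t • v) ⁻¹' {u : ι × ι → ℝ | (entryMatrix u).det = 0}) = 0 := ht
  rw [measure_preimage_add_right] at hu
  simpa only [ae_iff, not_not] using hu

/-- The antisymmetric matrix `g D(t) gᵀ`, where `g` has the coordinates `u`. -/
def conjMatrix (t : Fin n → ℝ) (u : BlockIdx n × BlockIdx n → ℝ) :
    Matrix (BlockIdx n) (BlockIdx n) ℝ :=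
  entryMatrix u * blockD t * (entryMatrix u)ᵀ

lemma transpose_conjMatrix (t : Fin n → ℝ) (u : BlockIdx n × BlockIdx n → ℝ) :
    (conjMatrix t u)ᵀ = -conjMatrix t u := by
  simp [conjMatrix, Matrix.transpose_mul, transpose_blockD, Matrix.mul_assoc]

lemma det_conjMatrix (t : Fin n → ℝ) (u : BlockIdx n × BlockIdx n → ℝ) :
    (conjMatrix t u).det = (entryMatrix u * (entryMatrix u)ᵀ).det * ∏ j, t j ^ 2 := by
  rw [conjMatrix, Matrix.det_mul, Matrix.det_mul, Matrix.det_mul, det_blockD]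
  ring

/-- A measurable choice of the increasingly ordered `a` with `g D(t) gᵀ` orthogonally conjugate to
`D(a)`; meaningful only where `g` and `D(t)` are invertible. -/
def singularValues (t : Fin n → ℝ) (u : BlockIdx n × BlockIdx n → ℝ) : Fin n → ℝ :=
  (exists_measurable_leftInverse_sqCharpolyValues n).choose (sqCharpolyValues (conjMatrix t u))

lemma measurable_singularValues (t : Fin n → ℝ) : Measurable (singularValues t) := by
  refine (exists_measurable_leftInverse_sqCharpolyValues n).choose_spec.1.comp ?_
  have := continuous_entryMatrix (ι := BlockIdx n)
  refine (continuous_sqCharpolyValues.comp ?_).measurable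
  unfold conjMatrix
  fun_prop

lemma singularValues_spec {t : Fin n → ℝ} (ht : ∀ j, t j ≠ 0) {u : BlockIdx n × BlockIdx n → ℝ}
    (hu : (entryMatrix u).det ≠ 0) :
    (∀ i, 0 < singularValues t u i) ∧
      ∃ k, kᵀ * k = 1 ∧ conjMatrix t u = k * blockD (singularValues t u) * kᵀ := by
  have hdet : (conjMatrix t u).det ≠ 0 := by
    rw [det_conjMatrix, Matrix.det_mul, Matrix.det_transpose]
    exact mul_ne_zero (mul_ne_zero hu hu)
      (Finset.prod_ne_zero_iff.2 fun j _ => pow_ne_zero 2 (ht j))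
  obtain ⟨k, a, hk, ha, hcone, hX⟩ := exists_conj_blockD_sorted (transpose_conjMatrix t u) hdet
  have hsv : singularValues t u = a := by
    have hval : sqCharpolyValues (conjMatrix t u) = sqCharpolyValues (blockD a) :=
      funext fun m => by rw [sqCharpolyValues, hX, charpoly_conj_blockD_sq hk, sqCharpolyValues]
    rw [singularValues, hval]
    exact (exists_measurable_leftInverse_sqCharpolyValues n).choose_spec.2 a hcone
  rw [hsv]
  exact ⟨ha, k, hk, hX⟩

end SingularValues

/-! ### Averaging over signed permutations -/

section SignedPerm

variable {ι : Type*}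

/-- The hyperoctahedral group on the index type `ι`, as a set of pairs of signs and
permutations. -/
abbrev SignedPerm (ι : Type*) := (ι → ℤˣ) × Equiv.Perm ι

/-- The signed permutation `a ↦ (εⱼ a_{σ j})ⱼ` of the coordinates. -/
def signedPermute (g : SignedPerm ι) (a : ι → ℝ) (j : ι) : ℝ := ((g.1 j : ℤ) : ℝ) * a (g.2 j)

lemma abs_signedPermute (g : SignedPerm ι) (a : ι → ℝ) (j : ι) :
    |signedPermute g a j| = |a (g.2 j)| := by
  rcases Int.units_eq_one_or (g.1 j) with h | h <;> simp [signedPermute, h]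

lemma signedPermute_sq (g : SignedPerm ι) (a : ι → ℝ) (j : ι) :
    signedPermute g a j ^ 2 = a (g.2 j) ^ 2 := by
  rw [← sq_abs, abs_signedPermute, sq_abs]

lemma measurable_signedPermute (g : SignedPerm ι) : Measurable (signedPermute g) :=
  measurable_pi_lambda _ fun j => (measurable_pi_apply (g.2 j)).const_mul _

lemma sum_intUnits_pow (m : ℕ) : ∑ e : ℤˣ, ((e : ℤ) : ℝ) ^ m = if Even m then 2 else 0 := by
  have huniv : (Finset.univ : Finset ℤˣ) = {1, -1} := rfl
  rw [huniv, Finset.sum_insert (by decide), Finset.sum_singleton]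
  split_ifs with h
  · simp [h.neg_one_pow, one_add_one_eq_two]
  · simp [(Nat.not_even_iff_odd.1 h).neg_one_pow]

variable [Fintype ι] [DecidableEq ι] {μ κ₁ κ₂ : Measure (ι → ℝ)} {ε : ℝ}

/-- The sum of the images of `μ` under all signed permutations. -/
def signedPermSum (μ : Measure (ι → ℝ)) : Measure (ι → ℝ) :=
  ∑ g : SignedPerm ι, μ.map (signedPermute g)

lemma integrable_exp_signedPermSum
    (hμ : Integrable (fun a : ι → ℝ => Real.exp (ε * ∑ j, |a j|)) μ) :
    Integrable (fun a : ι → ℝ => Real.exp (ε * ∑ j, |a j|)) (signedPermSum μ) := by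
  rw [signedPermSum, integrable_finsetSum_measure]
  intro g _
  rw [integrable_map_measure (by fun_prop : Measurable _).aestronglyMeasurable
    (measurable_signedPermute g).aemeasurable]
  refine hμ.congr (ae_of_all _ fun a => ?_)
  simp only [Function.comp_apply, abs_signedPermute, Equiv.sum_comp g.2 fun j => |a j|]

lemma signedPermSum_apply_of_invariant {s : Set (ι → ℝ)} (hs : MeasurableSet s)
    (h : ∀ g, signedPermute g ⁻¹' s = s) :
    signedPermSum μ s = (Fintype.card (SignedPerm ι) : ENNReal) * μ s := by
  simp_rw [signedPermSum, Measure.finsetSum_apply,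
    Measure.map_apply (measurable_signedPermute _) hs, h, Finset.sum_const, nsmul_eq_mul,
    Finset.card_univ]

lemma integral_prod_pow_signedPermSum (hε : 0 < ε)
    (hμ : Integrable (fun a : ι → ℝ => Real.exp (ε * ∑ j, |a j|)) μ) (m : ι → ℕ) :
    ∫ a, ∏ j, a j ^ m j ∂(signedPermSum μ) =
      (∏ j, if Even (m j) then (2 : ℝ) else 0) *
        ∫ a, ∑ σ : Equiv.Perm ι, ∏ j, a (σ j) ^ m j ∂μ := by
  have hint := integrable_prod_pow hε (integrable_exp_signedPermSum hμ) m
  rw [signedPermSum, integrable_finsetSum_measure] at hint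
  have hperm (σ : Equiv.Perm ι) : Integrable (fun a : ι → ℝ => ∏ j, a (σ j) ^ m j) μ := by
    refine (integrable_prod_pow hε hμ fun j => m (σ.symm j)).congr (ae_of_all _ fun a => ?_)
    simp only [← Equiv.prod_comp σ fun j => a j ^ m (σ.symm j), Equiv.symm_apply_apply]
  have hmap (g : SignedPerm ι) : ∫ a, ∏ j, a j ^ m j ∂(μ.map (signedPermute g)) =
      (∏ j, ((g.1 j : ℤ) : ℝ) ^ m j) * ∫ a, ∏ j, a (g.2 j) ^ m j ∂μ := by
    rw [integral_map (measurable_signedPermute g).aemeasurable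
      (by fun_prop : Measurable _).aestronglyMeasurable, ← integral_const_mul]
    simp only [signedPermute, mul_pow, Finset.prod_mul_distrib]
  rw [signedPermSum, integral_finsetSum_measure hint, integral_finsetSum _ fun σ _ => hperm σ]
  simp_rw [hmap, Fintype.sum_prod_type, ← Finset.mul_sum, ← Finset.sum_mul, ← sum_intUnits_pow,
    Finset.prod_univ_sum, Fintype.piFinset_univ]

lemma isSymmetric_sum_perm (m : ι → ℕ) :
    (∑ σ : Equiv.Perm ι, ∏ j, (X (σ j) : MvPolynomial ι ℝ) ^ m j).IsSymmetric := by
  intro e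
  simp only [map_sum, map_prod, map_pow, rename_X]
  exact Fintype.sum_equiv (Equiv.mulLeft e) _ _ fun σ => rfl

lemma signedPermSum_eq_of_integral_eq (hε : 0 < ε)
    (h₁ : Integrable (fun a : ι → ℝ => Real.exp (ε * ∑ j, |a j|)) κ₁)
    (h₂ : Integrable (fun a : ι → ℝ => Real.exp (ε * ∑ j, |a j|)) κ₂)
    (h : ∀ p : MvPolynomial ι ℝ, p.IsSymmetric →
      ∫ a, eval (fun j => a j ^ 2) p ∂κ₁ = ∫ a, eval (fun j => a j ^ 2) p ∂κ₂) :
    signedPermSum κ₁ = signedPermSum κ₂ := by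
  refine eq_of_integral_prod_pow_eq hε (integrable_exp_signedPermSum h₁)
    (integrable_exp_signedPermSum h₂) fun m => ?_
  rw [integral_prod_pow_signedPermSum hε h₁, integral_prod_pow_signedPermSum hε h₂]
  by_cases heven : ∀ j, Even (m j)
  · choose l hl using fun j => (even_iff_two_dvd.1 (heven j))
    have hsum := h _ (isSymmetric_sum_perm l)
    simp only [map_sum, map_prod, map_pow, eval_X, ← pow_mul, ← hl] at hsum
    rw [hsum]
  · obtain ⟨j, hj⟩ := not_forall.1 heven
    rw [Finset.prod_eq_zero (Finset.mem_univ j) (if_neg hj), zero_mul, zero_mul]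

theorem map_eq_of_integral_symmetric_eq {ι : Type*} [Fintype ι] {κ₁ κ₂ : Measure (ι → ℝ)}
    (hε : 0 < ε)
    (h₁ : Integrable (fun a : ι → ℝ => Real.exp (ε * ∑ j, |a j|)) κ₁)
    (h₂ : Integrable (fun a : ι → ℝ => Real.exp (ε * ∑ j, |a j|)) κ₂)
    (h : ∀ p : MvPolynomial ι ℝ, p.IsSymmetric →
      ∫ a, eval (fun j => a j ^ 2) p ∂κ₁ = ∫ a, eval (fun j => a j ^ 2) p ∂κ₂)
    {F : (ι → ℝ) → ℝ} (hF : Measurable F) (hinv : ∀ g a, F (signedPermute g a) = F a) :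
    κ₁.map F = κ₂.map F := by
  classical
  ext s hs
  rw [Measure.map_apply hF hs, Measure.map_apply hF hs]
  have hpre (g : SignedPerm ι) : signedPermute g ⁻¹' (F ⁻¹' s) = F ⁻¹' s := by
    ext a
    simp only [Set.mem_preimage, hinv]
  have hcard := congrArg (· (F ⁻¹' s)) (signedPermSum_eq_of_integral_eq hε h₁ h₂ h)
  simp only [signedPermSum_apply_of_invariant (hF hs) hpre] at hcard
  exact (ENNReal.mul_right_inj (by exact_mod_cast Fintype.card_ne_zero)
    (ENNReal.natCast_ne_top _)).1 hcard

end SignedPerm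

section SignedDensity

variable {α : Type*} [MeasurableSpace α] {μ base : Measure α} {w f : α → ℝ}

/-- The measure with density `max w 0` with respect to `base`. A signed density `w` is handled
through the pair `posDensity base w`, `posDensity base (-w)`. -/
def posDensity (base : Measure α) (w : α → ℝ) : Measure α :=
  base.withDensity fun a => ENNReal.ofReal (w a)

lemma integrable_posDensity_iff (hw : Measurable w) :
    Integrable f (posDensity base w) ↔ Integrable (fun a => f a * max (w a) 0) base := by
  rw [posDensity, integrable_withDensity_iff hw.ennreal_ofReal
    (ae_of_all _ fun _ => ENNReal.ofReal_lt_top)]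
  simp only [ENNReal.toReal_ofReal']

lemma integral_posDensity (hw : Measurable w) :
    ∫ a, f a ∂(posDensity base w) = ∫ a, f a * max (w a) 0 ∂base := by
  rw [posDensity, integral_withDensity_eq_integral_toReal_smul hw.ennreal_ofReal
    (ae_of_all _ fun _ => ENNReal.ofReal_lt_top)]
  simp only [ENNReal.toReal_ofReal', smul_eq_mul, mul_comm]

lemma integrable_posDensity (hw : Measurable w) (hf : Integrable (fun a => f a * w a) base) :
    Integrable f (posDensity base w) := by
  rw [integrable_posDensity_iff hw]
  refine (hf.indicator (measurableSet_lt measurable_const hw : MeasurableSet {a | 0 < w a})).congr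
    (ae_of_all _ fun a => ?_)
  by_cases h : 0 < w a
  · simp [h, h.le]
  · simp [h, not_lt.1 h]

lemma integrable_posDensity_neg (hw : Measurable w) (hf : Integrable (fun a => f a * w a) base) :
    Integrable f (posDensity base (-w)) :=
  integrable_posDensity hw.neg (hf.neg.congr (ae_of_all _ fun _ => (mul_neg _ _).symm))

lemma integral_posDensity_eq_add (hw : Measurable w)
    (hf : Integrable (fun a => f a * w a) base) :
    ∫ a, f a ∂(posDensity base w) =
      ∫ a, f a * w a ∂base + ∫ a, f a ∂(posDensity base (-w)) := by
  have hneg := (integrable_posDensity_iff hw.neg).1 (integrable_posDensity_neg hw hf)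
  rw [integral_posDensity hw, integral_posDensity hw.neg, ← integral_add hf hneg]
  refine integral_congr_ae (ae_of_all _ fun a => ?_)
  simp only [Pi.neg_apply, ← mul_add]
  rcases le_total (w a) 0 with h | h
  · rw [max_eq_right h, max_eq_left (neg_nonneg.2 h), add_neg_cancel]
  · rw [max_eq_left h, max_eq_right (neg_nonpos.2 h), add_zero]

lemma integral_eq_of_map_add_posDensity_eq (hw : Measurable w) (hf : Measurable f)
    (hfw : Integrable (fun a => f a * w a) base)
    (h : (μ + posDensity base (-w)).map f = (posDensity base w).map f) :
    Integrable f μ ∧ ∫ a, f a ∂μ = ∫ a, f a * w a ∂base := by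
  have hdistrib : IdentDistrib f f (μ + posDensity base (-w)) (posDensity base w) :=
    ⟨hf.aemeasurable, hf.aemeasurable, h⟩
  obtain ⟨hμ, hneg⟩ :=
    integrable_add_measure.1 (hdistrib.integrable_iff.2 (integrable_posDensity hw hfw))
  have hadd := hdistrib.integral_eq
  rw [integral_add_measure hμ hneg, integral_posDensity_eq_add hw hfw] at hadd
  exact ⟨hμ, add_right_cancel hadd⟩

/-- Adding the negative part of the signed measure `w · base` to `μ` turns the comparison into one
between two positive measures. -/
theorem integral_eq_integral_mul_of_symmetric_moments {ι : Type*} [Fintype ι]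
    {μ base : Measure (ι → ℝ)} {w : (ι → ℝ) → ℝ} {ε : ℝ} (hw : Measurable w) (hε : 0 < ε)
    (hμ : Integrable (fun a : ι → ℝ => Real.exp (ε * ∑ j, |a j|)) μ)
    (hbase : Integrable (fun a : ι → ℝ => Real.exp (ε * ∑ j, |a j|) * w a) base)
    (h : ∀ p : MvPolynomial ι ℝ, p.IsSymmetric →
      Integrable (fun a => eval (fun j => a j ^ 2) p * w a) base ∧
      ∫ a, eval (fun j => a j ^ 2) p ∂μ = ∫ a, eval (fun j => a j ^ 2) p * w a ∂base)
    {F : (ι → ℝ) → ℝ} (hF : Measurable F) (hinv : ∀ g a, F (signedPermute g a) = F a)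
    (hFw : Integrable (fun a => F a * w a) base) :
    Integrable F μ ∧ ∫ a, F a ∂μ = ∫ a, F a * w a ∂base := by
  have hneg := integrable_posDensity_neg hw hbase
  refine integral_eq_of_map_add_posDensity_eq hw hF hFw (map_eq_of_integral_symmetric_eq hε
    (hμ.add_measure hneg) (integrable_posDensity hw hbase) (fun p hp => ?_) hF hinv)
  obtain ⟨hpw, heq⟩ := h p hp
  rw [integral_add_measure (integrable_eval_sq hε hμ p) (integrable_eval_sq hε hneg p), heq,
    integral_posDensity_eq_add hw hpw]

end SignedDensity

/-! ### Gaussian densities -/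

section GaussianDensity

variable {κ : Type*} [Fintype κ]

/-- The density of the standard normal law `piGaussian κ`. -/
def gaussianDensity (u : κ → ℝ) : ℝ := ∏ i, gaussianPDFReal 0 1 (u i)

lemma gaussianDensity_eq (u : κ → ℝ) :
    gaussianDensity u = (√(2 * Real.pi))⁻¹ ^ Fintype.card κ * Real.exp (-(∑ i, u i ^ 2) / 2) := by
  unfold gaussianDensity gaussianPDFReal
  rw [Finset.prod_mul_distrib, ← Real.exp_sum, Finset.prod_const, Finset.card_univ]
  simp [← Finset.sum_div, Finset.sum_neg_distrib]

lemma gaussianDensity_pos (u : κ → ℝ) : 0 < gaussianDensity u :=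
  Finset.prod_pos fun _ _ => gaussianPDFReal_pos _ _ _ one_ne_zero

lemma measurable_gaussianDensity : Measurable (gaussianDensity (κ := κ)) :=
  Finset.measurable_fun_prod _ fun i _ =>
    (measurable_gaussianPDFReal 0 1).comp (measurable_pi_apply i)

lemma piGaussian_eq_withDensity :
    piGaussian κ =
      (volume : Measure (κ → ℝ)).withDensity fun u => ENNReal.ofReal (gaussianDensity u) := by
  unfold gaussianDensity
  refine Measure.pi_eq fun s hs => ?_
  rw [withDensity_apply _ (MeasurableSet.univ_pi hs), volume_pi, Measure.restrict_pi_pi,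
    ← ofReal_integral_eq_lintegral_ofReal
      (Integrable.fintype_prod fun i => (integrable_gaussianPDFReal 0 1).restrict)
      (ae_of_all _ fun u => (gaussianDensity_pos u).le),
    integral_fintype_prod_eq_prod (fun _ x => gaussianPDFReal 0 1 x),
    ENNReal.ofReal_prod_of_nonneg fun _ _ => integral_nonneg fun x => gaussianPDFReal_nonneg 0 1 x]
  exact Finset.prod_congr rfl fun _ _ => (gaussianReal_apply_eq_integral 0 one_ne_zero _).symm

lemma integrable_piGaussian_iff (f : (κ → ℝ) → ℝ) :
    Integrable f (piGaussian κ) ↔ Integrable fun u => f u * gaussianDensity u := by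
  rw [piGaussian_eq_withDensity,
    integrable_withDensity_iff measurable_gaussianDensity.ennreal_ofReal
      (ae_of_all _ fun u => ENNReal.ofReal_lt_top)]
  simp_rw [ENNReal.toReal_ofReal (gaussianDensity_pos _).le]

lemma integral_piGaussian (f : (κ → ℝ) → ℝ) :
    ∫ u, f u ∂(piGaussian κ) = ∫ u, f u * gaussianDensity u := by
  rw [piGaussian_eq_withDensity,
    integral_withDensity_eq_integral_toReal_smul measurable_gaussianDensity.ennreal_ofReal
      (ae_of_all _ fun u => ENNReal.ofReal_lt_top)]
  simp_rw [ENNReal.toReal_ofReal (gaussianDensity_pos _).le, smul_eq_mul, mul_comm]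

lemma integrable_exp_sum_sq {b : ℝ} (hb : b < 1 / 2) :
    Integrable (fun u : κ → ℝ => Real.exp (b * ∑ i, u i ^ 2)) (piGaussian κ) := by
  rw [integrable_piGaussian_iff]
  have hexp := integrable_exp_neg_mul_sq (b := 1 / 2 - b) (by linarith)
  refine ((Integrable.fintype_prod (ι := κ) (μ := fun _ => volume) fun _ => hexp).const_mul
    ((√(2 * Real.pi))⁻¹ ^ Fintype.card κ)).congr (ae_of_all _ fun u => ?_)
  simp only
  rw [gaussianDensity_eq, ← Real.exp_sum, mul_left_comm, ← Real.exp_add, ← Finset.mul_sum]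
  congr 2
  ring

lemma piGaussian_absolutelyContinuous : piGaussian κ ≪ volume := by
  rw [piGaussian_eq_withDensity]
  exact withDensity_absolutelyContinuous _ _

end GaussianDensity

/-! ### The law of the singular values of `g D(t) gᵀ` -/

section SingularValueBound

variable {n : ℕ}

lemma mul_blockD_mul_transpose_apply (h : Matrix (BlockIdx n) (BlockIdx n) ℝ) (a : Fin n → ℝ)
    (p q : BlockIdx n) :
    (h * blockD a * hᵀ) p q =
      ∑ i, a i * (h p (i, 0) * h q (i, 1) - h p (i, 1) * h q (i, 0)) := by
  simp only [Matrix.mul_apply (N := hᵀ), Fintype.sum_prod_type, Fin.sum_univ_two, mul_blockD_zero,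
    mul_blockD_one, Matrix.transpose_apply]
  exact Finset.sum_congr rfl fun i _ => by ring

lemma mul_blockD_mul_transpose_apply_le (h : Matrix (BlockIdx n) (BlockIdx n) ℝ) {t : Fin n → ℝ}
    (ht : ∀ j, 0 ≤ t j) (p q : BlockIdx n) :
    (h * blockD t * hᵀ) p q ≤ (∑ i, t i) * ((∑ r, h p r ^ 2) + ∑ r, h q r ^ 2) := by
  rw [mul_blockD_mul_transpose_apply, Finset.sum_mul]
  refine Finset.sum_le_sum fun i _ => mul_le_mul_of_nonneg_left ?_ (ht i)
  have hrow : ∀ r : BlockIdx n, h r (i, 0) ^ 2 + h r (i, 1) ^ 2 ≤ ∑ s, h r s ^ 2 := fun r => by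
    rw [Fintype.sum_prod_type, ← Fin.sum_univ_two fun y => h r (i, y) ^ 2]
    exact Finset.single_le_sum (f := fun i => ∑ y, h r (i, y) ^ 2)
      (fun i _ => Finset.sum_nonneg fun _ _ => sq_nonneg _) (Finset.mem_univ i)
  nlinarith [hrow p, hrow q, sq_nonneg (h p (i, 0) - h q (i, 1)),
    sq_nonneg (h p (i, 1) + h q (i, 0)), sq_nonneg (h p (i, 0) + h q (i, 1)),
    sq_nonneg (h p (i, 1) - h q (i, 0))]

lemma trace_mul_transpose_eq_sum_sq {ι : Type*} [Fintype ι] (h : Matrix ι ι ℝ) :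
    (h * hᵀ).trace = ∑ p, ∑ q, h p q ^ 2 := by
  simp [Matrix.trace, Matrix.mul_apply, pow_two]

lemma trace_entryMatrix_mul_transpose {ι : Type*} [Fintype ι] (u : ι × ι → ℝ) :
    (entryMatrix u * (entryMatrix u)ᵀ).trace = ∑ i, u i ^ 2 := by
  rw [trace_mul_transpose_eq_sum_sq, Fintype.sum_prod_type]
  rfl

lemma sum_abs_singularValues_le {t : Fin n → ℝ} (ht : ∀ j, 0 < t j)
    {u : BlockIdx n × BlockIdx n → ℝ} (hu : (entryMatrix u).det ≠ 0) :
    ∑ j, |singularValues t u j| ≤ (∑ i, t i) * ∑ i, u i ^ 2 := by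
  obtain ⟨hpos, k, hk, hconj⟩ := singularValues_spec (fun j => (ht j).ne') hu
  have hk' : k * kᵀ = 1 := mul_eq_one_comm.1 hk
  set h := kᵀ * entryMatrix u with hh
  have hblock : h * blockD t * hᵀ = blockD (singularValues t u) := by
    calc h * blockD t * hᵀ = kᵀ * conjMatrix t u * k := by
          simp only [hh, conjMatrix, Matrix.transpose_mul, Matrix.transpose_transpose,
            Matrix.mul_assoc]
      _ = (kᵀ * k) * blockD (singularValues t u) * (kᵀ * k) := by
          rw [hconj]
          simp only [Matrix.mul_assoc]
      _ = blockD (singularValues t u) := by rw [hk, Matrix.one_mul, Matrix.mul_one]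
  have htrace : ∑ p, ∑ q, h p q ^ 2 = ∑ i, u i ^ 2 := by
    rw [← trace_mul_transpose_eq_sum_sq, ← trace_entryMatrix_mul_transpose, hh,
      Matrix.transpose_mul, Matrix.transpose_transpose, Matrix.trace_mul_comm, Matrix.mul_assoc,
      ← Matrix.mul_assoc k, hk', Matrix.one_mul, Matrix.trace_mul_comm]
  have hentry : ∀ j, |singularValues t u j| ≤
      (∑ i, t i) * ((∑ r, h (j, 0) r ^ 2) + ∑ r, h (j, 1) r ^ 2) := fun j => by
    have := mul_blockD_mul_transpose_apply_le h (fun j => (ht j).le) (j, 0) (j, 1)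
    rw [hblock] at this
    rw [abs_of_pos (hpos j)]
    simpa [blockD] using this
  refine (Finset.sum_le_sum fun j _ => hentry j).trans_eq ?_
  rw [← Finset.mul_sum, ← htrace, Fintype.sum_prod_type]
  simp only [Fin.sum_univ_two]

lemma ae_piGaussian_det_entryMatrix_ne_zero {ι : Type*} [Fintype ι] [DecidableEq ι] :
    ∀ᵐ u ∂(piGaussian (ι × ι)), (entryMatrix u).det ≠ 0 :=
  piGaussian_absolutelyContinuous.ae_le ae_det_entryMatrix_ne_zero

lemma integrable_exp_map_singularValues {t : Fin n → ℝ} (ht : ∀ j, 0 < t j) {ε : ℝ} (hε : 0 ≤ ε)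
    (hεt : ε * ∑ i, t i < 1 / 2) :
    Integrable (fun a : Fin n → ℝ => Real.exp (ε * ∑ j, |a j|))
      ((piGaussian (BlockIdx n × BlockIdx n)).map (singularValues t)) := by
  have hmeas : Measurable (fun a : Fin n → ℝ => Real.exp (ε * ∑ j, |a j|)) := by fun_prop
  rw [integrable_map_measure hmeas.aestronglyMeasurable (measurable_singularValues t).aemeasurable]
  refine (integrable_exp_sum_sq hεt).mono'
    (hmeas.comp (measurable_singularValues t)).aestronglyMeasurable ?_
  filter_upwards [ae_piGaussian_det_entryMatrix_ne_zero] with u hu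
  rw [Function.comp_apply, Real.norm_eq_abs, Real.abs_exp, Real.exp_le_exp, mul_assoc]
  exact mul_le_mul_of_nonneg_left (sum_abs_singularValues_le ht hu) hε

end SingularValueBound

section GaussianSingularValues

variable {n : ℕ} {t : Fin n → ℝ}

lemma eval_conjCoord (t : Fin n → ℝ) (u : BlockIdx n × BlockIdx n → ℝ)
    (pq : BlockIdx n × BlockIdx n) :
    eval u (conjCoord t pq) = 1 / 2 * conjMatrix t u pq.1 pq.2 := by
  simp only [conjCoord, conjMatrix, map_mul, eval_C, Matrix.mul_apply, map_sum, entryMatrix,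
    mvPolynomialX_apply, Matrix.of_apply, Matrix.transpose_apply, Matrix.map_apply, eval_X]

lemma genericAntisymm_map_eval_conjCoord (t : Fin n → ℝ) (u : BlockIdx n × BlockIdx n → ℝ) :
    (genericAntisymm (BlockIdx n)).map (eval fun pq => eval u (conjCoord t pq)) =
      conjMatrix t u := by
  ext p q
  have hanti : conjMatrix t u q p = -conjMatrix t u p q :=
    congrFun (congrFun (transpose_conjMatrix t u) p) q
  rw [genericAntisymm_map_eval, Matrix.of_apply, eval_conjCoord, eval_conjCoord, hanti]
  ring

lemma hasRadialPart_singularValues (ht : ∀ j, t j ≠ 0) {u : BlockIdx n × BlockIdx n → ℝ}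
    (hu : (entryMatrix u).det ≠ 0) :
    HasRadialPart (fun pq => eval u (conjCoord t pq)) (singularValues t u) := by
  obtain ⟨-, k, hk, hconj⟩ := singularValues_spec ht hu
  exact ⟨k, hk, (genericAntisymm_map_eval_conjCoord t u).trans hconj⟩

/-- The unnormalized density `Δ(a²) ∏ⱼ exp(-aⱼ / tⱼ)`, whose signed measure on the positive orthant
has the same symmetric moments as the singular values of `g D(t) gᵀ`. -/
def vandermondeWeight (t a : Fin n → ℝ) : ℝ := (vdm fun j => a j ^ 2) * expWeight t a

lemma measurable_vandermondeWeight (t : Fin n → ℝ) : Measurable (vandermondeWeight t) := by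
  unfold vandermondeWeight vdm expWeight
  fun_prop

lemma integrable_prod_rpow_mul_vandermondeWeight (ht : ∀ j, 0 < t j) {r : ℝ} (hr : -1 < r) :
    Integrable (fun a => (∏ j, a j ^ r) * vandermondeWeight t a) (orthantVolume n) := by
  simpa only [eval_vandermondeSq, mul_assoc, vandermondeWeight] using
    integrable_eval_mul_expWeight ht hr (vandermondeSq n)

lemma integral_prod_rpow_mul_vandermondeWeight (ht : ∀ j, 0 < t j) {r : ℝ} (hr : -1 < r) :
    ∫ a, (∏ j, a j ^ r) * vandermondeWeight t a ∂(orthantVolume n) =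
      gammaMean r t (vandermondeSq n) := by
  simpa only [eval_vandermondeSq, mul_assoc, vandermondeWeight] using
    integral_eval_mul_expWeight ht hr (vandermondeSq n)

lemma vdm_ne_zero {x : Fin n → ℝ} (hx : Function.Injective x) : vdm x ≠ 0 :=
  Finset.prod_ne_zero_iff.2 fun _ hp =>
    sub_ne_zero.2 fun h => (Finset.mem_filter.1 hp).2.ne (hx h).symm

lemma vdm_sq_ne_zero (ht : ∀ j, 0 < t j) (hinj : Function.Injective t) :
    (vdm fun j => t j ^ 2) ≠ 0 :=
  vdm_ne_zero fun i j h => hinj ((pow_left_inj₀ (ht i).le (ht j).le two_ne_zero).1 h)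

lemma gammaMean_vandermondeSq_ne_zero (ht : ∀ j, 0 < t j) (hinj : Function.Injective t) {r : ℝ}
    (hr : -1 < r) : gammaMean r t (vandermondeSq n) ≠ 0 := by
  rw [gammaMean_vandermondeSq r ht]
  refine mul_ne_zero (mul_ne_zero ?_ ?_) (vdm_sq_ne_zero ht hinj)
  · exact (Finset.prod_pos fun l _ => Real.Gamma_pos_of_pos
      (by linarith [l.cast_nonneg (α := ℝ)])).ne'
  · exact (Finset.prod_pos fun j _ => Real.rpow_pos_of_pos (ht j) _).ne'

lemma integrable_eval_mul_vandermondeWeight (ht : ∀ j, 0 < t j) (P : RadialPoly n) :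
    Integrable (fun a => eval a P * vandermondeWeight t a) (orthantVolume n) := by
  simpa [vandermondeWeight, eval_vandermondeSq, mul_assoc, mul_left_comm] using
    integrable_eval_mul_expWeight ht neg_one_lt_zero (vandermondeSq n * P)

lemma integral_eval_mul_vandermondeWeight (ht : ∀ j, 0 < t j) (P : RadialPoly n) :
    ∫ a, eval a P * vandermondeWeight t a ∂(orthantVolume n) =
      gammaMean 0 t (vandermondeSq n * P) := by
  simpa [vandermondeWeight, eval_vandermondeSq, mul_assoc, mul_left_comm] using
    integral_eval_mul_expWeight ht neg_one_lt_zero (vandermondeSq n * P)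

lemma integral_symmetric_singularValues (ht : ∀ j, 0 < t j) (hinj : Function.Injective t)
    {q : RadialPoly n} (hq : q.IsSymmetric) :
    ∫ u, eval (fun j => singularValues t u j ^ 2) q ∂(piGaussian (BlockIdx n × BlockIdx n)) =
      (∫ a, eval (fun j => a j ^ 2) q * vandermondeWeight t a ∂(orthantVolume n)) /
        gammaMean 0 t (vandermondeSq n) := by
  obtain ⟨G, hG, hradial, hlift⟩ := exists_evenTraceAlgebra_eval_eq hq
  have hmean : ∫ u, eval (fun j => singularValues t u j ^ 2) q
      ∂(piGaussian (BlockIdx n × BlockIdx n)) = gaussianMean (aeval (conjCoord t) G) := by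
    rw [gaussianMean_apply]
    refine integral_congr_ae ?_
    filter_upwards [ae_piGaussian_det_entryMatrix_ne_zero] with u hu
    rw [← hlift _ _ (hasRadialPart_singularValues (fun j => (ht j).ne') hu), ← coe_aeval_eq_eval,
      ← coe_aeval_eq_eval, RingHom.coe_coe, RingHom.coe_coe, ← AlgHom.comp_apply, comp_aeval]
  have hne := gammaMean_vandermondeSq_ne_zero ht hinj neg_one_lt_zero
  rw [hmean, eq_div_iff hne]
  simp_rw [← eval_expand_two]
  rw [integral_eval_mul_vandermondeWeight ht, gammaMean_zero, gammaMean_zero, ← hradial,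
    ← exponentialMean_mul_gaussianMean t hG]
  ring

lemma integrable_exp_mul_vandermondeWeight (ht : ∀ j, 0 < t j) {δ : ℝ}
    (hδt : ∀ j, δ * t j < 1) :
    Integrable (fun a => Real.exp (δ * ∑ j, |a j|) * vandermondeWeight t a) (orthantVolume n) := by
  have ht' : ∀ j, 0 < t j / (1 - δ * t j) := fun j => div_pos (ht j) (sub_pos.2 (hδt j))
  refine (integrable_eval_mul_vandermondeWeight ht' 1).congr ?_
  filter_upwards [ae_orthantVolume_pos] with a ha
  rw [map_one, one_mul, vandermondeWeight, vandermondeWeight, ← exp_mul_expWeight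
    (fun j => (ht j).ne') (fun j => (hδt j).ne) (fun j => (ha j).le)]
  ring

theorem integral_singularValues (ht : ∀ j, 0 < t j) (hinj : Function.Injective t)
    {F : (Fin n → ℝ) → ℝ} (hF : Measurable F) (hinv : ∀ g a, F (signedPermute g a) = F a)
    (hFw : Integrable (fun a => F a * vandermondeWeight t a) (orthantVolume n)) :
    Integrable (fun u => F (singularValues t u)) (piGaussian (BlockIdx n × BlockIdx n)) ∧
      ∫ u, F (singularValues t u) ∂(piGaussian (BlockIdx n × BlockIdx n)) =
        (∫ a, F a * vandermondeWeight t a ∂(orthantVolume n)) /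
          gammaMean 0 t (vandermondeSq n) := by
  set Z := gammaMean 0 t (vandermondeSq n)
  have hsv := (measurable_singularValues t).aemeasurable
    (μ := piGaussian (BlockIdx n × BlockIdx n))
  have hsum : 0 ≤ ∑ j, t j := Finset.sum_nonneg fun j _ => (ht j).le
  set δ := 1 / (4 * (∑ j, t j + 1)) with hδ
  have hδpos : 0 < δ := by positivity
  have hδsum : δ * ∑ j, t j < 1 / 2 := by
    rw [hδ, div_mul_eq_mul_div, div_lt_iff₀ (by positivity)]
    linarith
  have hδt : ∀ j, δ * t j < 1 := fun j => by
    have := mul_le_mul_of_nonneg_left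
      (Finset.single_le_sum (fun i _ => (ht i).le) (Finset.mem_univ j)) hδpos.le
    linarith
  have hlaw := integral_eq_integral_mul_of_symmetric_moments (base := orthantVolume n)
    (w := fun a => vandermondeWeight t a / Z) ((measurable_vandermondeWeight t).div_const Z) hδpos
    (integrable_exp_map_singularValues ht hδpos.le hδsum)
    (by simpa only [mul_div_assoc] using
      (integrable_exp_mul_vandermondeWeight ht hδt).div_const Z)
    (fun q hq => ?_) hF hinv (by simpa only [mul_div_assoc] using hFw.div_const Z)
  · rw [integrable_map_measure hF.aestronglyMeasurable hsv,
      integral_map hsv hF.aestronglyMeasurable] at hlaw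
    simpa only [Function.comp_def, ← mul_div_assoc, integral_div] using hlaw
  · have hqm : Continuous fun a : Fin n → ℝ => eval (fun j => a j ^ 2) q :=
      (MvPolynomial.continuous_eval q).comp (by fun_prop)
    rw [integral_map hsv hqm.aestronglyMeasurable, integral_symmetric_singularValues ht hinj hq]
    have hint := integrable_eval_mul_vandermondeWeight ht (expand 2 q)
    simp only [← mul_div_assoc, integral_div]
    refine ⟨?_, rfl⟩
    simpa only [eval_expand_two] using hint.div_const Z

end GaussianSingularValues

section InducedWeight

variable {n : ℕ} {ν : ℝ} {t : Fin n → ℝ} {F : (Fin n → ℝ) → ℝ}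

lemma prod_singularValues_sq (ht : ∀ j, t j ≠ 0) {u : BlockIdx n × BlockIdx n → ℝ}
    (hu : (entryMatrix u).det ≠ 0) :
    ∏ j, singularValues t u j ^ 2 = (entryMatrix u * (entryMatrix u)ᵀ).det * ∏ j, t j ^ 2 := by
  obtain ⟨-, k, hk, hconj⟩ := singularValues_spec ht hu
  rw [← det_conjMatrix, hconj, Matrix.det_mul_right_comm, mul_eq_one_comm.1 hk, one_mul,
    det_blockD]

lemma prod_sq_rpow {b : Fin n → ℝ} (hb : ∀ j, 0 ≤ b j) (ν : ℝ) :
    (∏ j, b j ^ 2) ^ ν = ∏ j, b j ^ (2 * ν) := by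
  rw [← Real.finsetProd_rpow _ _ fun j _ => sq_nonneg (b j)]
  refine Finset.prod_congr rfl fun j _ => ?_
  rw [Real.rpow_mul (hb j), Real.rpow_ofNat]

lemma integrable_mul_prod_rpow_mul_vandermondeWeight (ht : ∀ j, 0 < t j) (hν : -(1 / 2) < ν)
    (hF : Measurable F) {C : ℝ} (hC : ∀ a, |F a| ≤ C) :
    Integrable (fun a => F a * ((∏ j, a j ^ (2 * ν)) * vandermondeWeight t a))
      (orthantVolume n) :=
  (integrable_prod_rpow_mul_vandermondeWeight ht (by linarith)).bdd_mul hF.aestronglyMeasurable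
    (ae_of_all _ hC)

theorem integral_singularValues_mul_det_rpow (ht : ∀ j, 0 < t j) (hinj : Function.Injective t)
    (hν : -(1 / 2) < ν) (hF : Measurable F) (hinv : ∀ g a, F (signedPermute g a) = F a)
    {C : ℝ} (hC : ∀ a, |F a| ≤ C) :
    Integrable (fun u => F (singularValues t u) * (entryMatrix u * (entryMatrix u)ᵀ).det ^ ν)
        (piGaussian (BlockIdx n × BlockIdx n)) ∧
      ∫ u, F (singularValues t u) * (entryMatrix u * (entryMatrix u)ᵀ).det ^ ν
          ∂(piGaussian (BlockIdx n × BlockIdx n)) =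
        (∫ a, F a * ((∏ j, a j ^ (2 * ν)) * vandermondeWeight t a) ∂(orthantVolume n)) /
          ((∏ j, t j ^ (2 * ν)) * gammaMean 0 t (vandermondeSq n)) := by
  have hT : ∏ j, t j ^ (2 * ν) ≠ 0 :=
    (Finset.prod_pos fun j _ => Real.rpow_pos_of_pos (ht j) _).ne'
  have hdet : ∀ᵐ u ∂(piGaussian (BlockIdx n × BlockIdx n)),
      F (singularValues t u) * (∏ j, singularValues t u j ^ 2) ^ ν / ∏ j, t j ^ (2 * ν) =
        F (singularValues t u) * (entryMatrix u * (entryMatrix u)ᵀ).det ^ ν := by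
    filter_upwards [ae_piGaussian_det_entryMatrix_ne_zero] with u hu
    rw [prod_singularValues_sq (fun j => (ht j).ne') hu, Real.mul_rpow _
      (Finset.prod_nonneg fun j _ => sq_nonneg _), prod_sq_rpow (fun j => (ht j).le),
      ← mul_assoc, mul_div_cancel_right₀ _ hT]
    rw [Matrix.det_mul, Matrix.det_transpose]
    exact mul_self_nonneg _
  have hweight : (fun a => F a * ((∏ j, a j ^ (2 * ν)) * vandermondeWeight t a)) =ᵐ[orthantVolume n]
      fun a => F a * (∏ j, a j ^ 2) ^ ν * vandermondeWeight t a := by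
    filter_upwards [ae_orthantVolume_pos] with a ha
    rw [prod_sq_rpow (fun j => (ha j).le), mul_assoc]
  obtain ⟨hint, hval⟩ := integral_singularValues ht hinj (F := fun a => F a * (∏ j, a j ^ 2) ^ ν)
    (by fun_prop)
    (fun g a => by simp only [hinv, signedPermute_sq, Equiv.prod_comp g.2 fun j => a j ^ 2])
    ((integrable_mul_prod_rpow_mul_vandermondeWeight ht hν hF hC).congr hweight)
  refine ⟨(hint.div_const _).congr hdet, ?_⟩
  rw [← integral_congr_ae hdet, integral_div, hval, ← integral_congr_ae hweight, div_div,
    mul_comm (gammaMean _ _ _)]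

end InducedWeight

section SingularValueDensity

variable {n : ℕ} {ν : ℝ} {t : Fin n → ℝ} {F : (Fin n → ℝ) → ℝ}

lemma measurePreserving_comp_perm (σ : Equiv.Perm (Fin n)) :
    MeasurePreserving (fun a : Fin n → ℝ => fun j => a (σ j)) (orthantVolume n)
      (orthantVolume n) := by
  rw [orthantVolume_eq_pi]
  exact measurePreserving_arrowCongr' _ _ σ.symm (MeasurableEquiv.refl ℝ)
    fun _ => MeasurePreserving.id _

lemma integral_comp_perm (σ : Equiv.Perm (Fin n)) (f : (Fin n → ℝ) → ℝ) :
    ∫ a, f (fun j => a (σ j)) ∂(orthantVolume n) = ∫ a, f a ∂(orthantVolume n) :=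
  (measurePreserving_comp_perm σ).integral_comp
    (MeasurableEquiv.arrowCongr' σ.symm (MeasurableEquiv.refl ℝ)).measurableEmbedding f

/-- An alternating function sees every term of the Leibniz expansion of `det[exp(-aⱼ / tₖ)]` as a
copy of the diagonal one. -/
lemma integral_mul_det_exp {H : (Fin n → ℝ) → ℝ}
    (hH : ∀ (σ : Equiv.Perm (Fin n)) a, H (fun j => a (σ j)) = (Equiv.Perm.sign σ : ℤ) * H a)
    (hint : Integrable (fun a => H a * expWeight t a) (orthantVolume n)) :
    ∫ a, H a * (Matrix.of fun j k => Real.exp (-(a j) / t k)).det ∂(orthantVolume n) =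
      n.factorial * ∫ a, H a * expWeight t a ∂(orthantVolume n) := by
  have hleibniz : ∀ a, H a * (Matrix.of fun j k => Real.exp (-(a j) / t k)).det =
      ∑ σ : Equiv.Perm (Fin n), H (fun j => a (σ j)) * expWeight t fun j => a (σ j) := fun a => by
    rw [Matrix.det_apply', Finset.mul_sum]
    refine Finset.sum_congr rfl fun σ _ => ?_
    rw [hH]
    simp only [Matrix.of_apply, expWeight]
    ring
  simp_rw [hleibniz]
  rw [integral_finsetSum]
  swap
  · exact fun σ _ => (measurePreserving_comp_perm σ).integrable_comp_of_integrable hint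
  simp_rw [fun σ => integral_comp_perm σ fun a => H a * expWeight t a]
  rw [Finset.sum_const, Finset.card_univ, Fintype.card_perm, Fintype.card_fin, nsmul_eq_mul]

/-- The joint density of the singular values of `g D(t) gᵀ`, for `g` from the induced real Ginibre
ensemble with parameter `ν`. -/
def singularValueDensity (ν : ℝ) (t a : Fin n → ℝ) : ℝ :=
  (1 / (Nat.factorial n : ℝ)) *
    (∏ l ∈ Finset.range n, 1 / Real.Gamma (2 * ν + 2 * l + 1)) *
    ((vdm fun j => (a j) ^ 2) / (vdm fun j => (t j) ^ 2)) *
    ((∏ j, (a j) ^ (2 * ν)) / (∏ j, (t j) ^ (2 * ν + 1))) *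
    (Matrix.of fun j k : Fin n => Real.exp (-(a j) / t k)).det

lemma singularValueDensity_eq (ht : ∀ j, 0 < t j) (a : Fin n → ℝ) :
    singularValueDensity ν t a = (∏ j, a j ^ (2 * ν)) * (vdm fun j => a j ^ 2) *
      (Matrix.of fun j k => Real.exp (-(a j) / t k)).det /
        (n.factorial * gammaMean (2 * ν) t (vandermondeSq n)) := by
  rw [singularValueDensity, gammaMean_vandermondeSq _ ht, Finset.prod_div_distrib,
    Finset.prod_const_one]
  simp only [div_eq_mul_inv, mul_inv, one_mul]
  ring

lemma integral_mul_singularValueDensity (ht : ∀ j, 0 < t j) (hν : -(1 / 2) < ν)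
    (hF : Measurable F) (hperm : ∀ (σ : Equiv.Perm (Fin n)) a, F (fun j => a (σ j)) = F a)
    {C : ℝ} (hC : ∀ a, |F a| ≤ C) :
    ∫ a, F a * singularValueDensity ν t a ∂(orthantVolume n) =
      (∫ a, F a * ((∏ j, a j ^ (2 * ν)) * vandermondeWeight t a) ∂(orthantVolume n)) /
        gammaMean (2 * ν) t (vandermondeSq n) := by
  set H := fun a : Fin n → ℝ => F a * ((∏ j, a j ^ (2 * ν)) * vdm fun j => a j ^ 2) with hH
  have hHweight : ∀ a, F a * ((∏ j, a j ^ (2 * ν)) * vandermondeWeight t a) =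
      H a * expWeight t a := fun a => by
    simp only [hH, vandermondeWeight, mul_assoc]
  have hHdensity : ∀ a, F a * singularValueDensity ν t a =
      H a * (Matrix.of fun j k => Real.exp (-(a j) / t k)).det /
        (n.factorial * gammaMean (2 * ν) t (vandermondeSq n)) := fun a => by
    simp only [hH, singularValueDensity_eq ht, mul_div_assoc, mul_assoc]
  have hHalt : ∀ (σ : Equiv.Perm (Fin n)) a,
      H (fun j => a (σ j)) = (Equiv.Perm.sign σ : ℤ) * H a := fun σ a => by
    simp only [hH, hperm, vdm_comp_perm (fun j => a j ^ 2) σ,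
      Equiv.prod_comp σ fun j => a j ^ (2 * ν)]
    ring
  have hint := integrable_mul_prod_rpow_mul_vandermondeWeight ht hν hF hC
  simp_rw [hHweight] at hint ⊢
  simp_rw [hHdensity]
  rw [integral_div, integral_mul_det_exp hHalt hint, mul_div_mul_left]
  exact_mod_cast n.factorial_ne_zero

theorem integral_singularValues_mul_det_rpow_div (ht : ∀ j, 0 < t j)
    (hinj : Function.Injective t) (hν : -(1 / 2) < ν) (hF : Measurable F)
    (hinv : ∀ g a, F (signedPermute g a) = F a) {C : ℝ} (hC : ∀ a, |F a| ≤ C) :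
    (∫ u, F (singularValues t u) * (entryMatrix u * (entryMatrix u)ᵀ).det ^ ν
        ∂(piGaussian (BlockIdx n × BlockIdx n))) /
      (∫ u, (entryMatrix u * (entryMatrix u)ᵀ).det ^ ν
        ∂(piGaussian (BlockIdx n × BlockIdx n))) =
      ∫ a, F a * singularValueDensity ν t a ∂(orthantVolume n) := by
  have hnum := (integral_singularValues_mul_det_rpow ht hinj hν hF hinv hC).2
  have hden := (integral_singularValues_mul_det_rpow ht hinj hν (F := fun _ => 1)
    measurable_const (fun _ _ => rfl) (fun _ => abs_one.le)).2
  simp only [one_mul] at hden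
  rw [integral_prod_rpow_mul_vandermondeWeight ht (by linarith)] at hden
  have hperm : ∀ (σ : Equiv.Perm (Fin n)) a, F (fun j => a (σ j)) = F a := fun σ a =>
    (congrArg F (funext fun j => by simp [signedPermute])).trans (hinv (1, σ) a)
  have hc : (∏ j, t j ^ (2 * ν)) * gammaMean 0 t (vandermondeSq n) ≠ 0 :=
    mul_ne_zero (Finset.prod_pos fun j _ => Real.rpow_pos_of_pos (ht j) _).ne'
      (gammaMean_vandermondeSq_ne_zero ht hinj neg_one_lt_zero)
  rw [hnum, hden, div_div_div_cancel_right₀ hc, integral_mul_singularValueDensity ht hν hF hperm hC]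

end SingularValueDensity

section MatrixCoordinates

lemma volume_preserving_uncurry (ι κ : Type*) [Fintype ι] [Fintype κ] :
    MeasurePreserving (MeasurableEquiv.curry ι κ ℝ).symm := by
  refine ⟨(MeasurableEquiv.curry ι κ ℝ).symm.measurable, ?_⟩
  rw [volume_pi (α := fun _ : ι × κ => ℝ)]
  refine (Measure.pi_eq fun s _ => ?_).symm
  have hbox : (MeasurableEquiv.curry ι κ ℝ).symm ⁻¹' (Set.univ.pi s) =
      Set.univ.pi fun i => Set.univ.pi fun j => s (i, j) := by
    ext u
    simp only [Set.mem_preimage, Set.mem_univ_pi, Prod.forall]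
    rfl
  rw [MeasurableEquiv.map_apply, hbox, volume_pi_pi, Fintype.prod_prod_type]
  simp_rw [volume_pi_pi]

/-- The identification of block indices with `0, …, 2n - 1` behind `Dmat`. -/
def blockIdxEquiv (n : ℕ) : BlockIdx n ≃ Fin (2 * n) :=
  finProdFinEquiv.trans (finCongr (Nat.mul_comm n 2))

lemma blockIdxEquiv_mk_val {n : ℕ} (i : Fin n) (r : Fin 2) :
    (blockIdxEquiv n (i, r) : ℕ) = r + 2 * i :=
  finProdFinEquiv_apply_val (i, r)

/-- The entries of a `2n × 2n` matrix, as a family over pairs of block indices. -/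
def blockCoord (n : ℕ) :
    (Fin (2 * n) → Fin (2 * n) → ℝ) ≃ᵐ (BlockIdx n × BlockIdx n → ℝ) :=
  (MeasurableEquiv.curry _ _ ℝ).symm.trans (MeasurableEquiv.arrowCongr'
    ((blockIdxEquiv n).prodCongr (blockIdxEquiv n)).symm (MeasurableEquiv.refl ℝ))

variable {n : ℕ}

lemma volume_preserving_blockCoord (n : ℕ) : MeasurePreserving (blockCoord n) :=
  (volume_preserving_arrowCongr' _ _ (MeasurePreserving.id _)).comp
    (volume_preserving_uncurry _ _)

lemma of_eq_reindex (u : Fin (2 * n) → Fin (2 * n) → ℝ) :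
    Matrix.of u =
      Matrix.reindexAlgEquiv ℝ ℝ (blockIdxEquiv n) (entryMatrix (blockCoord n u)) := by
  ext i j
  change u i j = u (blockIdxEquiv n ((blockIdxEquiv n).symm i))
    (blockIdxEquiv n ((blockIdxEquiv n).symm j))
  simp

lemma of_mul_transpose_eq_reindex (u : Fin (2 * n) → Fin (2 * n) → ℝ) :
    Matrix.of u * (Matrix.of u)ᵀ = Matrix.reindexAlgEquiv ℝ ℝ (blockIdxEquiv n)
      (entryMatrix (blockCoord n u) * (entryMatrix (blockCoord n u))ᵀ) := by
  rw [map_mul, of_eq_reindex]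
  rfl

lemma Dmat_eq_reindex (a : Fin n → ℝ) :
    Dmat a = Matrix.reindexAlgEquiv ℝ ℝ (blockIdxEquiv n) (blockD a) := by
  ext i j
  obtain ⟨⟨i, r⟩, rfl⟩ := (blockIdxEquiv n).surjective i
  obtain ⟨⟨j, s⟩, rfl⟩ := (blockIdxEquiv n).surjective j
  have hdiv (i : Fin n) (r : Fin 2) : (blockIdxEquiv n (i, r) : ℕ) / 2 = i := by
    rw [blockIdxEquiv_mk_val]
    omega
  have hmod (i : Fin n) (r : Fin 2) : (blockIdxEquiv n (i, r) : ℕ) % 2 = r := by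
    rw [blockIdxEquiv_mk_val]
    omega
  simp only [Dmat, blockD, Matrix.of_apply, hdiv, hmod, Fin.val_inj, Matrix.coe_reindexAlgEquiv,
    Matrix.reindex_apply, Matrix.submatrix_apply, Equiv.symm_apply_apply, Fin.eta]
  fin_cases r <;> fin_cases s <;> simp

lemma of_mul_Dmat_mul_transpose_eq_reindex (t : Fin n → ℝ)
    (u : Fin (2 * n) → Fin (2 * n) → ℝ) :
    Matrix.of u * Dmat t * (Matrix.of u)ᵀ =
      Matrix.reindexAlgEquiv ℝ ℝ (blockIdxEquiv n) (conjMatrix t (blockCoord n u)) := by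
  rw [conjMatrix, map_mul, map_mul, of_eq_reindex, Dmat_eq_reindex]
  rfl

end MatrixCoordinates

section InvariantTests

variable {n : ℕ} {φ : Matrix (Fin (2 * n)) (Fin (2 * n)) ℝ → ℝ}

lemma invTest_reindex_conj (hφ : IsInvTest (2 * n) φ) {k X : Matrix (BlockIdx n) (BlockIdx n) ℝ}
    (hk : kᵀ * k = 1) (hX : Xᵀ = -X) :
    φ (Matrix.reindexAlgEquiv ℝ ℝ (blockIdxEquiv n) (k * X * kᵀ)) =
      φ (Matrix.reindexAlgEquiv ℝ ℝ (blockIdxEquiv n) X) := by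
  rw [map_mul, map_mul]
  refine hφ.2.2 _ ?_ _ ?_
  · rw [← map_neg, ← hX]
    rfl
  · refine (Matrix.mem_orthogonalGroup_iff _ _).2 ?_
    change _ * Matrix.reindexAlgEquiv ℝ ℝ (blockIdxEquiv n) kᵀ = 1
    rw [← map_mul, mul_eq_one_comm.1 hk, map_one]

lemma invTest_Dmat_signedPermute (hφ : IsInvTest (2 * n) φ) (g : SignedPerm (Fin n))
    (a : Fin n → ℝ) : φ (Dmat (signedPermute g a)) = φ (Dmat a) := by
  obtain ⟨k, hk, hconj⟩ := exists_orthogonal_conj_blockD g.2 g.1 a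
  rw [Dmat_eq_reindex, Dmat_eq_reindex, ← invTest_reindex_conj hφ hk (transpose_blockD a), hconj]
  rfl

lemma invTest_Dmat_singularValues (hφ : IsInvTest (2 * n) φ) {t : Fin n → ℝ}
    (ht : ∀ j, t j ≠ 0) {u : Fin (2 * n) → Fin (2 * n) → ℝ}
    (hu : (entryMatrix (blockCoord n u)).det ≠ 0) :
    φ (Dmat (singularValues t (blockCoord n u))) =
      φ (Matrix.of u * Dmat t * (Matrix.of u)ᵀ) := by
  obtain ⟨-, k, hk, hconj⟩ := singularValues_spec ht hu
  rw [of_mul_Dmat_mul_transpose_eq_reindex, hconj, invTest_reindex_conj hφ hk (transpose_blockD _),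
    Dmat_eq_reindex]

lemma measurable_Dmat : Measurable (Dmat : (Fin n → ℝ) → _) := by
  refine measurable_pi_iff.2 fun i => measurable_pi_iff.2 fun j => ?_
  unfold Dmat
  simp only [Matrix.of_apply]
  split_ifs <;> fun_prop

end InvariantTests

section InducedDensity

variable {n : ℕ} {ν : ℝ}

lemma ginDens_eq (ν : ℝ) (u : Fin (2 * n) → Fin (2 * n) → ℝ) :
    ginDens n ν u = √(2 * Real.pi) ^ Fintype.card (BlockIdx n × BlockIdx n) *
      ((entryMatrix (blockCoord n u) * (entryMatrix (blockCoord n u))ᵀ).det ^ ν *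
        gaussianDensity (blockCoord n u)) := by
  have htrace : (Matrix.of u * (Matrix.of u)ᵀ).trace = ∑ i, blockCoord n u i ^ 2 := by
    rw [← trace_entryMatrix_mul_transpose, of_mul_transpose_eq_reindex]
    exact Equiv.sum_comp (blockIdxEquiv n).symm fun p =>
      (entryMatrix (blockCoord n u) * (entryMatrix (blockCoord n u))ᵀ) p p
  rw [ginDens, htrace, of_mul_transpose_eq_reindex, Matrix.det_reindexAlgEquiv, gaussianDensity_eq,
    inv_pow]
  field_simp

lemma ginDens_nonneg (ν : ℝ) (u : Fin (2 * n) → Fin (2 * n) → ℝ) : 0 ≤ ginDens n ν u := by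
  refine mul_nonneg (Real.rpow_nonneg ?_ _) (Real.exp_pos _).le
  rw [Matrix.det_mul, Matrix.det_transpose]
  exact mul_self_nonneg _

lemma ae_det_entryMatrix_blockCoord_ne_zero :
    ∀ᵐ u : Fin (2 * n) → Fin (2 * n) → ℝ, (entryMatrix (blockCoord n u)).det ≠ 0 :=
  (volume_preserving_blockCoord n).quasiMeasurePreserving.ae ae_det_entryMatrix_ne_zero

lemma integral_comp_blockCoord_mul_ginDens (f : (BlockIdx n × BlockIdx n → ℝ) → ℝ) :
    ∫ u, f (blockCoord n u) * ginDens n ν u =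
      √(2 * Real.pi) ^ Fintype.card (BlockIdx n × BlockIdx n) *
        ∫ v, f v * (entryMatrix v * (entryMatrix v)ᵀ).det ^ ν
          ∂(piGaussian (BlockIdx n × BlockIdx n)) := by
  rw [integral_piGaussian, ← integral_const_mul,
    ← (volume_preserving_blockCoord n).integral_comp']
  refine integral_congr_ae (ae_of_all _ fun u => ?_)
  simp only [ginDens_eq]
  ring

lemma integral_comp_blockCoord_mul_ginDens_div (f : (BlockIdx n × BlockIdx n → ℝ) → ℝ) :
    (∫ u, f (blockCoord n u) * ginDens n ν u) / ∫ u, ginDens n ν u =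
      (∫ v, f v * (entryMatrix v * (entryMatrix v)ᵀ).det ^ ν
          ∂(piGaussian (BlockIdx n × BlockIdx n))) /
        ∫ v, (entryMatrix v * (entryMatrix v)ᵀ).det ^ ν
          ∂(piGaussian (BlockIdx n × BlockIdx n)) := by
  have hmass := integral_comp_blockCoord_mul_ginDens (n := n) (ν := ν) fun _ => 1
  simp only [one_mul] at hmass
  have hne : √(2 * Real.pi) ≠ 0 := (Real.sqrt_pos.2 Real.two_pi_pos).ne'
  rw [hmass, integral_comp_blockCoord_mul_ginDens, mul_div_mul_left _ _ (pow_ne_zero _ hne)]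

lemma integrable_ginDens (hν : -(1 / 2) < ν) : Integrable (ginDens n ν) := by
  have hinj : Function.Injective fun j : Fin n => (j : ℝ) + 1 := fun i j h =>
    Fin.ext (Nat.cast_injective (add_right_cancel h))
  have hint := (integral_singularValues_mul_det_rpow (F := fun _ => 1)
    (fun j => by positivity) hinj hν measurable_const (fun _ _ => rfl) fun _ => abs_one.le).1
  simp only [one_mul, integrable_piGaussian_iff] at hint
  simp only [funext (ginDens_eq ν)]
  exact (volume_preserving_blockCoord n).integrable_comp_of_integrable (hint.const_mul _)

lemma integral_ginDens_pos (hν : -(1 / 2) < ν) :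
    0 < ∫ u : Fin (2 * n) → Fin (2 * n) → ℝ, ginDens n ν u := by
  refine (integral_nonneg (ginDens_nonneg ν)).lt_of_ne' fun hzero => ?_
  have hae := (integral_eq_zero_iff_of_nonneg (ginDens_nonneg ν) (integrable_ginDens hν)).1 hzero
  obtain ⟨u, hu, hdet⟩ := (hae.and ae_det_entryMatrix_blockCoord_ne_zero).exists
  refine (mul_pos (Real.rpow_pos_of_pos ?_ ν) (Real.exp_pos _)).ne' hu
  rw [of_mul_transpose_eq_reindex, Matrix.det_reindexAlgEquiv, Matrix.det_mul,
    Matrix.det_transpose]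
  exact mul_self_pos.2 hdet

end InducedDensity

end InducedGinibre

open InducedGinibre

/-- Corollary 4.1: jPDF of the singular values of `g D(ã) gᵀ` for
`g` from the induced real Ginibre ensemble. -/
theorem ginibre_times_fixed_matrix (n : ℕ) (hn : 1 ≤ n)
    (ν : ℝ) (hν : -(1 / 2 : ℝ) < ν)
    (ta : Fin n → ℝ) (hta : ∀ j, 0 < ta j) (hta' : Function.Injective ta) :
    Integrable (ginDens n ν) ∧
    0 < (∫ u : Fin (2 * n) → Fin (2 * n) → ℝ, ginDens n ν u) ∧
    ∀ φ : Matrix (Fin (2 * n)) (Fin (2 * n)) ℝ → ℝ, IsInvTest (2 * n) φ →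
      (1 / (∫ u : Fin (2 * n) → Fin (2 * n) → ℝ, ginDens n ν u)) *
          (∫ u : Fin (2 * n) → Fin (2 * n) → ℝ,
            φ (Matrix.of u * Dmat ta * (Matrix.of u)ᵀ) * ginDens n ν u) =
        ∫ a in {a : Fin n → ℝ | ∀ j, 0 < a j},
          φ (Dmat a) *
            ((1 / (Nat.factorial n : ℝ)) *
              (∏ l ∈ Finset.range n, 1 / Real.Gamma (2 * ν + 2 * l + 1)) *
              ((vdm fun j => (a j) ^ 2) / (vdm fun j => (ta j) ^ 2)) *
              ((∏ j, (a j) ^ (2 * ν)) / (∏ j, (ta j) ^ (2 * ν + 1))) *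
              (Matrix.of fun j k : Fin n => Real.exp (-(a j) / ta k)).det) := by
  refine ⟨integrable_ginDens hν, integral_ginDens_pos hν, fun φ hφ => ?_⟩
  obtain ⟨C, hC⟩ := hφ.2.1
  have hradial : ∫ u, φ (Matrix.of u * Dmat ta * (Matrix.of u)ᵀ) * ginDens n ν u =
      ∫ u, φ (Dmat (singularValues ta (blockCoord n u))) * ginDens n ν u := by
    refine integral_congr_ae ?_
    filter_upwards [ae_det_entryMatrix_blockCoord_ne_zero] with u hu
    rw [invTest_Dmat_singularValues hφ (fun j => (hta j).ne') hu]
  rw [one_div, inv_mul_eq_div, hradial,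
    integral_comp_blockCoord_mul_ginDens_div fun v => φ (Dmat (singularValues ta v)),
    integral_singularValues_mul_det_rpow_div (F := fun a => φ (Dmat a)) hta hta' hν
      (hφ.1.comp measurable_Dmat) (invTest_Dmat_signedPermute hφ) fun a => hC _]
  rfl

end
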